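/- Let ν be a partition, l a positive integer, and ζ a primitive l-th root of unity. Then Q'_{ν^l}(x; q, ζ) = (−1)^{(l−1)|ν|} · (p_l ∘ h_ν)(x), where ν^l is the partition in which each part of ν is repeated l times. -/

import Mathlib

open MvPolynomial

noncomputable section MacdonaldPreliminaries

/-! ### Base fields: `KK = ℂ(q)` and `FF = ℂ(q)(t)` -/

/-- The field `ℂ(q)` of rational functions in the indeterminate `q`. -/
abbrev KK : Type := RatFunc ℂ

/-- The field `ℂ(q)(t) = ℂ(q,t)`, rational functions in `t` over `ℂ(q)`. -/
abbrev FF : Type := RatFunc KK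

/-- The indeterminate `q`, as an element of `ℂ(q)`. -/
def qK : KK := RatFunc.X

/-- The indeterminate `q`, as an element of `ℂ(q,t)`. -/
def qF : FF := RatFunc.C qK

/-- The indeterminate `t`, as an element of `ℂ(q,t)`. -/
def tF : FF := RatFunc.X

/-! ### The ring of symmetric functions

We model the ring `Λ_R` of symmetric functions over `R` as the free commutative
`R`-algebra on the power sums `p₁, p₂, p₃, …`, i.e. as the polynomial ring in
countably many variables `X k`, `k : ℕ+`, where `X k` represents the power sum `p_k`. -/

/-- The ring of symmetric functions over `R`: polynomials in the power sums `p_k = X k`. -/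
abbrev SymFn (R : Type) [CommSemiring R] : Type := MvPolynomial ℕ+ R

section Core

variable {R : Type} [Field R]

/-- The power sum `p_d` for `d : ℕ`, with `p_0 = 1` by convention. -/
def pN (d : ℕ) : SymFn R := if h : 0 < d then X (⟨d, h⟩ : ℕ+) else 1

/-- `p_λ = ∏ p_{λᵢ}` for a partition `λ` given as a multiset of positive parts. -/
def pPar (lam : Multiset ℕ+) : SymFn R := (lam.map fun k => (X k : SymFn R)).prod

/-- The complete homogeneous symmetric functions, defined by Newton's recursion
`n·h_n = ∑_{i=1}^n p_i · h_{n-i}` with `h_0 = 1`. -/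
def hsym : ℕ → SymFn R
  | 0 => 1
  | (n+1) => (((n : R) + 1)⁻¹) • ∑ i ∈ Finset.range (n+1),
      (X (⟨i+1, Nat.succ_pos i⟩ : ℕ+) : SymFn R) * hsym (n - i)
decreasing_by exact Nat.lt_succ_of_le (Nat.sub_le n i)

/-- `h_z` for an integer index, vanishing for negative `z` (used in Jacobi–Trudi). -/
def hInt (z : ℤ) : SymFn R := if 0 ≤ z then hsym (R := R) z.toNat else 0

/-- The parts of a partition (a multiset of positive integers), sorted decreasingly. -/
def descParts (lam : Multiset ℕ+) : List ℕ :=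
  ((lam.map fun a : ℕ+ => (a : ℕ)).sort (· ≤ ·)).reverse

/-- The weight `|λ|` of a partition. -/
def wt (lam : Multiset ℕ+) : ℕ := (lam.map fun a : ℕ+ => (a : ℕ)).sum

/-- The Schur function `s_λ`, via the Jacobi–Trudi formula
`s_λ = det(h_{λᵢ - i + j})₁≤i,j≤ℓ`. -/
def schur (lam : Multiset ℕ+) : SymFn R :=
  Matrix.det (Matrix.of fun i j : Fin (Multiset.card lam) =>
    hInt (R := R) ((((descParts lam).getD i 0 : ℕ) : ℤ) + (j : ℤ) - (i : ℤ)))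

/-- `h_ν = ∏ h_{νⱼ}` for a partition `ν`. -/
def hPar (nu : Multiset ℕ+) : SymFn R := (nu.map fun a => hsym (R := R) (a : ℕ)).prod

/-! ### Inner products -/

/-- The `(q,t)`-deformed weight `z_λ(q,t)` attached to the monomial `∏ (X k)^(m k)`,
namely `∏_k (m k)! · k^(m k) · ((1-q^k)/(1-t^k))^(m k)`. -/
def zwtQT (q t : R) (m : ℕ+ →₀ ℕ) : R :=
  ∏ k ∈ m.support,
    ((Nat.factorial (m k) : R) * ((k : ℕ) : R) ^ (m k) *
      ((1 - q ^ (k : ℕ)) / (1 - t ^ (k : ℕ))) ^ (m k))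

/-- The Macdonald inner product `⟨·,·⟩_{q,t}`, defined on the power sum basis by
`⟨p_λ, p_μ⟩_{q,t} = δ_{λμ} z_λ(q,t)`. -/
def innerQT (q t : R) (f g : SymFn R) : R :=
  ∑ m ∈ f.support, MvPolynomial.coeff m f * MvPolynomial.coeff m g * zwtQT q t m

/-- The classical weight `z_λ = ∏_k (m k)! k^(m k)` attached to a monomial. -/
def zwtH (m : ℕ+ →₀ ℕ) : R :=
  ∏ k ∈ m.support, ((Nat.factorial (m k) : R) * ((k : ℕ) : R) ^ (m k))

/-- The standard Hall inner product, `⟨p_λ, p_μ⟩ = δ_{λμ} z_λ`. -/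
def innerH (f g : SymFn R) : R :=
  ∑ m ∈ f.support, MvPolynomial.coeff m f * MvPolynomial.coeff m g * zwtH (R := R) m

/-- The internal (Kronecker) product `⋆`, determined by `p_λ ⋆ p_μ = δ_{λμ} z_λ p_λ`. -/
def star (f g : SymFn R) : SymFn R :=
  ∑ m ∈ f.support,
    MvPolynomial.monomial m (MvPolynomial.coeff m f * MvPolynomial.coeff m g * zwtH (R := R) m)

/-! ### Dominance order and the Macdonald basis -/

/-- Sum of the `k` largest parts of `λ`. -/
def pSum (lam : Multiset ℕ+) (k : ℕ) : ℕ := ((descParts lam).take k).sum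

/-- `μ` is strictly dominated by `λ`: same weight, `μ ≠ λ`, and all partial sums of the
decreasingly sorted parts of `μ` are at most those of `λ`. -/
def StrictDom (mu lam : Multiset ℕ+) : Prop :=
  mu ≠ lam ∧ wt mu = wt lam ∧ ∀ k, pSum mu k ≤ pSum lam k

/-- Characterization of the Macdonald basis `P_λ(x;q,t)` (obtained from the Schur basis by
Gram–Schmidt orthogonalization w.r.t. `⟨·,·⟩_{q,t}`): `P_λ` is unitriangular with respect to
the Schur functions of strictly dominated partitions, and the `P_λ` are pairwise orthogonal. -/
def IsMacdonaldBasis (q t : R) (P : Multiset ℕ+ → SymFn R) : Prop :=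
  (∀ lam, P lam - schur lam ∈
      Submodule.span R ((schur (R := R)) '' {mu | StrictDom mu lam})) ∧
  (∀ lam mu, lam ≠ mu → innerQT q t (P lam) (P mu) = 0)

/-- `Q_λ = P_λ / ⟨P_λ, P_λ⟩_{q,t}`. -/
def Qfam (q t : R) (P : Multiset ℕ+ → SymFn R) (lam : Multiset ℕ+) : SymFn R :=
  (innerQT q t (P lam) (P lam))⁻¹ • P lam

/-- The algebra endomorphism of `Λ_R` rescaling each power sum: `p_k ↦ g k · p_k`. -/
def scaleHom (g : ℕ+ → R) : SymFn R →ₐ[R] SymFn R :=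
  aeval fun k : ℕ+ => (C (g k) * X k : SymFn R)

/-- The modified Macdonald polynomial `Q'_λ(x;q,t) = Q_λ(((1-q)/(1-t))·x; q,t)`,
the image of `Q_λ` under `p_k ↦ ((1-q^k)/(1-t^k))·p_k`. -/
def Qprime (q t : R) (P : Multiset ℕ+ → SymFn R) (lam : Multiset ℕ+) : SymFn R :=
  scaleHom (fun k => (1 - q ^ (k : ℕ)) / (1 - t ^ (k : ℕ))) (Qfam q t P lam)

/-! ### Plethysm -/

/-- Plethysm by the power sum on the left: `p_l ∘ f`, the ring endomorphism `p_k ↦ p_{lk}`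
applied to `f`. -/
def plethP (l : ℕ+) : SymFn R →ₐ[R] SymFn R :=
  aeval fun k : ℕ+ => (X (l * k) : SymFn R)

/-- General plethysm `g ∘ f`: the algebra homomorphism in `g` sending `p_k` to `p_k ∘ f`. -/
def pleth (g f : SymFn R) : SymFn R :=
  aeval (fun k : ℕ+ => plethP k f) g

/-! ### Cells of a partition: arms, legs, the constants `c_μ`, `c'_μ` and `n(μ)` -/

/-- Arm length of the (0-indexed) cell `(i,j)` of `λ`: `λ_i - j - 1`. -/
def armM (lam : Multiset ℕ+) (i j : ℕ) : ℕ := (descParts lam).getD i 0 - (j + 1)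

/-- Leg length of the (0-indexed) cell `(i,j)` of `λ`: the number of cells below it
in the same column. -/
def legM (lam : Multiset ℕ+) (i j : ℕ) : ℕ :=
  ((List.range (descParts lam).length).filter
    (fun i' => decide (i < i') && decide (j < (descParts lam).getD i' 0))).length

/-- Product of a quantity over all cells of the partition `λ`. -/
def cellProd {S : Type} [CommMonoid S] (lam : Multiset ℕ+) (f : ℕ → ℕ → S) : S :=
  ∏ i ∈ Finset.range (descParts lam).length,
    ∏ j ∈ Finset.range ((descParts lam).getD i 0), f i j

/-- `c_μ(q,t) = ∏_{s∈μ} (1 - q^{a(s)} t^{l(s)+1})`. -/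
def cLow (q t : R) (lam : Multiset ℕ+) : R :=
  cellProd lam fun i j => 1 - q ^ (armM lam i j) * t ^ (legM lam i j + 1)

/-- `c'_μ(q,t) = ∏_{s∈μ} (1 - q^{a(s)+1} t^{l(s)})`. -/
def cUp (q t : R) (lam : Multiset ℕ+) : R :=
  cellProd lam fun i j => 1 - q ^ (armM lam i j + 1) * t ^ (legM lam i j)

/-- `n(λ) = ∑ (i-1)·λ_i`. -/
def nInv (lam : Multiset ℕ+) : ℕ :=
  ∑ i ∈ Finset.range (descParts lam).length, i * (descParts lam).getD i 0

/-- The modified Macdonald polynomial of Haglund–Haiman–Loehr,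
`H̃_μ(x;q,t) = t^{n(μ)} J_μ(x/(1-t⁻¹); q, t⁻¹)`, where `J_μ(x;q,t) = c_μ(q,t) P_μ(x;q,t)`
and `Pinv` is the Macdonald basis at parameters `(q, t⁻¹)`. -/
def Htilde (q t : R) (Pinv : Multiset ℕ+ → SymFn R) (lam : Multiset ℕ+) : SymFn R :=
  C (t ^ nInv lam) *
    scaleHom (fun k => (1 - (t⁻¹) ^ (k : ℕ))⁻¹) (C (cLow q t⁻¹ lam) * Pinv lam)

/-! ### Cyclic characters -/

/-- The Ramanujan (Von Sterneck) sum `c(j,d)`: the sum of the `j`-th powers of the primitive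
`d`-th roots of unity (computed in the domain `R`). -/
def cRam [IsDomain R] (j d : ℕ) : R := ∑ z ∈ primitiveRoots d R, z ^ j

/-- The Frobenius characteristic `l_k^{(j)} = (1/k) ∑_{d ∣ k} c(j,d) p_d^{k/d}` of the
representation of `S_k` induced from the `j`-th character of the cyclic subgroup generated
by a `k`-cycle. -/
def lchar [IsDomain R] (k j : ℕ) : SymFn R :=
  ((k : R))⁻¹ • ∑ d ∈ Nat.divisors k, (cRam (R := R) j d) • ((pN (R := R) d) ^ (k / d))

end Core

/-! ### Specialization `t = ζ` and evaluation maps -/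

/-- Evaluation of a rational function in `t` over `ℂ(q)` at a point `c : ℂ(q)`. -/
def evalT (c : KK) (x : FF) : KK := RatFunc.eval (RingHom.id KK) c x

/-- Coefficientwise specialization `t = c` of a symmetric function over `ℂ(q,t)`. -/
def specT (c : KK) (f : SymFn FF) : SymFn KK :=
  ∑ m ∈ f.support, MvPolynomial.monomial m (evalT c (MvPolynomial.coeff m f))

/-- Evaluation `f ↦ f(1, ζ, ζ², …, ζ^{l-1}; q, ζ)`: substitute the finite alphabet
`x_i = ζ^{i-1}` (`1 ≤ i ≤ l`) and then specialize `t = ζ`. -/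
def macEvalRoots (l : ℕ) (z : ℂ) (f : SymFn FF) : KK :=
  evalT (RatFunc.C z)
    ((aeval fun k : ℕ+ =>
        ∑ i ∈ Finset.range l, (RatFunc.C (RatFunc.C z) : FF) ^ (i * (k : ℕ))) f)

/-- Evaluation of a symmetric function over `ℂ(q,t)` at the finite alphabet
`(1, t, t², …, t^{l-1})`. -/
def evalAlphT (l : ℕ) : SymFn FF →ₐ[FF] FF :=
  aeval fun k : ℕ+ => ∑ i ∈ Finset.range l, tF ^ (i * (k : ℕ))

/-- Congruence to `0` modulo the cyclotomic polynomial `Φ_l(t)` for a rational function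
in `t`: `x = Φ_l(t) · (a/b)` with `b` coprime to `Φ_l`. -/
def CongrModPhi (l : ℕ) (x : FF) : Prop :=
  ∃ a b : Polynomial KK, IsCoprime b (Polynomial.cyclotomic l KK) ∧
    x = algebraMap (Polynomial KK) FF (Polynomial.cyclotomic l KK) *
      (algebraMap (Polynomial KK) FF a / algebraMap (Polynomial KK) FF b)

/-- The finite set of all partitions of `n`, as multisets of positive integers. -/
def partitionsOf (n : ℕ) : Finset (Multiset ℕ+) :=
  Finset.univ.image fun pi : Nat.Partition n =>
    pi.parts.attach.map fun a => (⟨a.1, pi.parts_pos a.2⟩ : ℕ+)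

end MacdonaldPreliminaries

noncomputable section

namespace QP

/-! ### A total order on partitions -/

/-- Total order on partitions: compare multiplicities from the largest part down. -/
def key (lam : Multiset ℕ+) : Colex (ℕ+ →₀ ℕ) := toColex (Multiset.toFinsupp lam)

theorem key_inj {a b : Multiset ℕ+} (h : key a = key b) : a = b :=
  Multiset.toFinsupp.injective (toColex.injective h)

theorem key_add (a b : Multiset ℕ+) : key (a + b) = key a + key b := by
  simp [key]

theorem key_add_lt_left {a b : Multiset ℕ+} (c : Multiset ℕ+) (h : key a < key b) :
    key (c + a) < key (c + b) := by
  rw [key_add, key_add]; exact add_lt_add_right h _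

theorem key_add_lt_right {a b : Multiset ℕ+} (c : Multiset ℕ+) (h : key a < key b) :
    key (a + c) < key (b + c) := by
  rw [key_add, key_add]; exact add_lt_add_left h _

theorem key_add_lt_iff (a b c : Multiset ℕ+) : key (c + a) < key (c + b) ↔ key a < key b := by
  rw [key_add, key_add]; exact add_lt_add_iff_left _

theorem key_add_le_iff (a b c : Multiset ℕ+) : key (c + a) ≤ key (c + b) ↔ key a ≤ key b := by
  rw [key_add, key_add]; exact add_le_add_iff_left _

theorem key_nsmul (l : ℕ) (a : Multiset ℕ+) : key (l • a) = l • key a := by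
  induction l with
  | zero => simp [key]
  | succ n ih => rw [succ_nsmul, key_add, ih, succ_nsmul]

theorem key_nsmul_lt {l : ℕ} (hl : 0 < l) {a b : Multiset ℕ+} (h : key a < key b) :
    key (l • a) < key (l • b) := by
  rw [key_nsmul, key_nsmul]; exact nsmul_lt_nsmul_right hl.ne' h

theorem key_lt_iff (a b : Multiset ℕ+) :
    key a < key b ↔ ∃ i, (∀ j, i < j → a.count j = b.count j) ∧ a.count i < b.count i := by
  rw [Finsupp.Colex.lt_iff]
  simp [key]

theorem key_zero_le (a : Multiset ℕ+) : key 0 ≤ key a := by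
  by_contra h
  push Not at h
  rw [key_lt_iff] at h
  obtain ⟨i, _, h⟩ := h
  simp at h

theorem key_lt_of_mem {a b : Multiset ℕ+} {x : ℕ+} (hx : x ∈ b) (h : ∀ y ∈ a, y < x) :
    key a < key b := by
  classical
  have hne : b.toFinset.Nonempty := ⟨x, by simpa using hx⟩
  set m := b.toFinset.max' hne with hm
  have hmb : m ∈ b := by simpa using b.toFinset.max'_mem hne
  have hxm : x ≤ m := Finset.le_max' _ _ (by simpa using hx)
  rw [key_lt_iff]
  refine ⟨m, ?_, ?_⟩
  · intro j hj
    rw [Multiset.count_eq_zero_of_notMem, Multiset.count_eq_zero_of_notMem]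
    · intro hjb
      exact absurd (Finset.le_max' b.toFinset j (by simpa using hjb)) (not_le.2 hj)
    · intro hja
      exact absurd (h j hja) (not_lt.2 (hxm.trans hj.le))
  · rw [Multiset.count_eq_zero_of_notMem (s := a)]
    · exact Multiset.count_pos.2 hmb
    · intro hma; exact absurd (h m hma) (not_lt.2 hxm)

/-- Sorted list of parts. -/
def dl (lam : Multiset ℕ+) : List ℕ+ := lam.sort (· ≥ ·)

theorem dl_coe (lam : Multiset ℕ+) : ((dl lam : List ℕ+) : Multiset ℕ+) = lam :=
  Multiset.sort_eq _ _

theorem dl_sorted (lam : Multiset ℕ+) : (dl lam).Pairwise (· ≥ ·) :=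
  Multiset.pairwise_sort _ _

theorem dl_of_sorted {L : List ℕ+} (h : L.Pairwise (· ≥ ·)) : dl (L : Multiset ℕ+) = L := by
  apply List.Perm.eq_of_pairwise' (r := (· ≥ ·)) (dl_sorted _) h
  exact Multiset.coe_eq_coe.1 (dl_coe _)

theorem length_dl (lam : Multiset ℕ+) : (dl lam).length = Multiset.card lam := by
  simp [dl]

theorem descParts_eq (lam : Multiset ℕ+) :
    descParts lam = (dl lam).map (fun a : ℕ+ => (a : ℕ)) := by
  have h1 : (descParts lam).Pairwise (· ≥ ·) := by
    unfold descParts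
    rw [List.pairwise_reverse]
    exact Multiset.pairwise_sort _ _
  have h2 : ((dl lam).map (fun a : ℕ+ => (a : ℕ))).Pairwise (· ≥ ·) := by
    rw [List.pairwise_map]
    exact (dl_sorted lam).imp (fun h => h)
  apply List.Perm.eq_of_pairwise' (r := (· ≥ ·)) h1 h2
  apply Multiset.coe_eq_coe.1
  rw [← Multiset.map_coe, dl_coe]
  unfold descParts
  rw [Multiset.coe_reverse, Multiset.sort_eq]

theorem key_le_of_take : ∀ (L1 L2 : List ℕ+), L1.Pairwise (· ≥ ·) → L2.Pairwise (· ≥ ·) →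
    (∀ k, ((L1.map (fun a : ℕ+ => (a : ℕ))).take k).sum ≤
      ((L2.map (fun a : ℕ+ => (a : ℕ))).take k).sum) →
    key (L1 : Multiset ℕ+) ≤ key (L2 : Multiset ℕ+)
  | [], L2, _, _, _ => key_zero_le _
  | a :: L1, [], _, _, h => by
      have := h 1
      simp at this
  | a :: L1, b :: L2, h1, h2, h => by
      have hab : (a : ℕ) ≤ b := by simpa using h 1
      rcases hab.lt_or_eq with hlt | heq
      · apply le_of_lt
        apply key_lt_of_mem (x := b)
        · simp
        · intro y hy
          have hya : y ≤ a := by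
            rw [Multiset.mem_coe, List.mem_cons] at hy
            rcases hy with rfl | hy
            · exact le_rfl
            · exact (List.pairwise_cons.1 h1).1 y hy
          exact lt_of_le_of_lt hya (by exact_mod_cast hlt)
      · have heq' : a = b := by exact_mod_cast heq
        subst heq'
        have := key_le_of_take L1 L2 (List.pairwise_cons.1 h1).2 (List.pairwise_cons.1 h2).2
          (fun k => by simpa using h (k + 1))
        rw [← Multiset.cons_coe, ← Multiset.cons_coe, ← Multiset.singleton_add,
          ← Multiset.singleton_add, key_add_le_iff]
        exact this

theorem key_lt_of_strictDom {mu lam : Multiset ℕ+} (h : StrictDom mu lam) :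
    key mu < key lam := by
  obtain ⟨h1, _, h3⟩ := h
  have := key_le_of_take (dl mu) (dl lam) (dl_sorted _) (dl_sorted _) (fun k => by
    have := h3 k
    unfold pSum at this
    rwa [descParts_eq, descParts_eq] at this)
  rw [dl_coe, dl_coe] at this
  exact lt_of_le_of_ne this (fun h => h1 (key_inj h))

theorem wt_add (a b : Multiset ℕ+) : wt (a + b) = wt a + wt b := by simp [wt]

theorem wt_nsmul (l : ℕ) (a : Multiset ℕ+) : wt (l • a) = l * wt a := by
  simp [wt, Multiset.map_nsmul, Multiset.sum_nsmul]

theorem finite_wt (n : ℕ) : {lam : Multiset ℕ+ | wt lam = n}.Finite := by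
  have : {lam : Multiset ℕ+ | wt lam = n} ⊆ (fun (m : Multiset ℕ+) => m) ''
      ((partitionsOf n : Finset (Multiset ℕ+)) : Set (Multiset ℕ+)) := by
    intro lam hlam
    refine ⟨lam, ?_, rfl⟩
    simp only [partitionsOf, Finset.coe_image, Set.mem_image, Finset.coe_univ, Set.mem_univ,
      true_and]
    have hlam' : (lam.map (fun a : ℕ+ => (a : ℕ))).sum = n := hlam
    refine ⟨⟨lam.map (fun a : ℕ+ => (a : ℕ)), ?_, hlam'⟩, ?_⟩
    · intro i hi
      obtain ⟨a, _, rfl⟩ := Multiset.mem_map.1 hi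
      exact a.pos
    · apply Multiset.map_injective PNat.coe_injective
      refine (Multiset.map_map _ _ _).trans ?_
      exact Multiset.attach_map_val _
  exact (Set.Finite.image _ (Finset.finite_toSet _)).subset this

/-- Downward induction in a fixed weight. -/
theorem key_induction {p : Multiset ℕ+ → Prop}
    (H : ∀ lam, (∀ mu, wt mu = wt lam → key lam < key mu → p mu) → p lam) (lam : Multiset ℕ+) :
    p lam := by
  have hf := finite_wt (wt lam)
  by_contra hcon
  have hf2 : {mu : Multiset ℕ+ | wt mu = wt lam ∧ ¬ p mu}.Finite := hf.subset (fun m hm => hm.1)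
  obtain ⟨m, hm, hmax⟩ := Set.exists_max_image _ key hf2 ⟨lam, rfl, hcon⟩
  apply hm.2
  apply H
  intro mu hmu hlt
  by_contra hc
  exact absurd (hmax mu ⟨hmu.trans hm.1, hc⟩) (not_le.2 hlt)

end QP

end

noncomputable section

namespace QP

/-! ### Newton pairs -/

/-- `h` is obtained from `p` by Newton's recursion (`p i` is the `i+1`-st power sum). -/
def IsNewton {S : Type*} [CommRing S] (p h : ℕ → S) : Prop :=
  h 0 = 1 ∧ ∀ n : ℕ, ((n : S) + 1) * h (n + 1) = ∑ i ∈ Finset.range (n + 1), p i * h (n - i)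

section newton
variable {S : Type*} [CommRing S]

theorem IsNewton.unique [IsDomain S] [CharZero S] {p h h' : ℕ → S} (H : IsNewton p h)
    (H' : IsNewton p h') (n : ℕ) : h n = h' n := by
  induction n using Nat.strong_induction_on with
  | _ n ih =>
    cases n with
    | zero => rw [H.1, H'.1]
    | succ n =>
      have hn : ((n : S) + 1) ≠ 0 := by exact_mod_cast Nat.succ_ne_zero n
      apply mul_left_cancel₀ hn
      rw [H.2, H'.2]
      apply Finset.sum_congr rfl
      intro i _
      rw [ih (n - i) (by omega)]

theorem IsNewton.map {S' : Type*} [CommRing S'] (f : S →+* S') {p h : ℕ → S}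
    (H : IsNewton p h) : IsNewton (fun i => f (p i)) (fun n => f (h n)) := by
  refine ⟨by simp [H.1], fun n => ?_⟩
  have := congrArg f (H.2 n)
  simpa using this

theorem isNewton_iff (p h : ℕ → S) : IsNewton p h ↔
    PowerSeries.constantCoeff (PowerSeries.mk h) = 1 ∧
      PowerSeries.derivative S (PowerSeries.mk h) = PowerSeries.mk p * PowerSeries.mk h := by
  unfold IsNewton
  apply and_congr
  · rw [← PowerSeries.coeff_zero_eq_constantCoeff_apply, PowerSeries.coeff_mk]
  · rw [PowerSeries.ext_iff]
    apply forall_congr'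
    intro n
    rw [PowerSeries.coeff_derivative, PowerSeries.coeff_mul,
      Finset.Nat.sum_antidiagonal_eq_sum_range_succ_mk]
    simp [mul_comm]

theorem IsNewton.conv {p h p' h' : ℕ → S} (H : IsNewton p h) (H' : IsNewton p' h') :
    IsNewton (fun i => p i + p' i) (fun n => ∑ x ∈ Finset.HasAntidiagonal.antidiagonal n, h x.1 * h' x.2) := by
  rw [isNewton_iff] at *
  have e1 : PowerSeries.mk (fun n => ∑ x ∈ Finset.HasAntidiagonal.antidiagonal n, h x.1 * h' x.2) =
      PowerSeries.mk h * PowerSeries.mk h' := by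
    ext n; simp [PowerSeries.coeff_mul]
  have e2 : PowerSeries.mk (fun i => p i + p' i) = PowerSeries.mk p + PowerSeries.mk p' := by
    ext n; simp
  rw [e1, e2]
  refine ⟨by rw [map_mul, H.1, H'.1, one_mul], ?_⟩
  rw [Derivation.leibniz, H.2, H'.2]
  simp only [smul_eq_mul]
  ring

theorem IsNewton.prod {ι : Type*} [DecidableEq ι] (s : Finset ι) {p h : ι → ℕ → S}
    (H : ∀ i ∈ s, IsNewton (p i) (h i)) :
    IsNewton (fun n => ∑ i ∈ s, p i n)
      (fun n => ∑ a ∈ s.finsuppAntidiag n, ∏ i ∈ s, h i (a i)) := by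
  have key : ∀ n, ∑ a ∈ s.finsuppAntidiag n, ∏ i ∈ s, h i (a i) =
      PowerSeries.coeff n (∏ i ∈ s, PowerSeries.mk (h i)) := by
    intro n
    rw [PowerSeries.coeff_prod]
    simp
  simp_rw [key]
  rw [isNewton_iff]
  have e1 : PowerSeries.mk (fun n => PowerSeries.coeff n (∏ i ∈ s, PowerSeries.mk (h i))) =
     ∏ i ∈ s, PowerSeries.mk (h i) := by ext n; simp
  have e2 : PowerSeries.mk (fun n => ∑ i ∈ s, p i n) = ∑ i ∈ s, PowerSeries.mk (p i) := by
    ext n; simp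
  rw [e1, e2]
  clear key e1 e2
  induction s using Finset.induction_on with
  | empty => simp
  | insert a s ha ih =>
    have ih' := ih (fun i hi => H i (Finset.mem_insert_of_mem hi))
    have h1 := (isNewton_iff _ _).1 (H a (Finset.mem_insert_self _ _))
    rw [Finset.prod_insert ha, Finset.sum_insert ha]
    refine ⟨by rw [map_mul, ih'.1, h1.1, one_mul], ?_⟩
    rw [Derivation.leibniz, ih'.2, h1.2]
    simp only [smul_eq_mul]
    ring

theorem IsNewton.scale (z : S) {p h : ℕ → S} (H : IsNewton p h) :
    IsNewton (fun i => z ^ (i + 1) * p i) (fun n => z ^ n * h n) := by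
  refine ⟨by simp [H.1], fun n => ?_⟩
  have e : ((n : S) + 1) * (z ^ (n + 1) * h (n + 1)) =
    z ^ (n + 1) * (((n : S) + 1) * h (n + 1)) := by ring
  rw [e, H.2, Finset.mul_sum]
  apply Finset.sum_congr rfl
  intro i hi
  have : n + 1 = (i + 1) + (n - i) := by
    have := Finset.mem_range.1 hi; omega
  rw [this, pow_add]
  have e2 : i + 1 + (n - i) - (i + 1) = n - i := by omega
  ring_nf

theorem isNewton_one : IsNewton (fun _ => (1 : S)) (fun _ => 1) := by
  refine ⟨rfl, fun n => by simp⟩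

/-- The Newton pair of `(1 - u z)/(1 - z)`. -/
theorem isNewton_u (u : S) : IsNewton (fun i => 1 - u ^ (i + 1))
    (fun n => if n = 0 then 1 else 1 - u) := by
  refine ⟨by simp, fun n => ?_⟩
  rw [Finset.sum_range_succ]
  have : ∀ i ∈ Finset.range n, (1 - u ^ (i + 1)) * (if n - i = 0 then 1 else 1 - u) =
    (1 - u ^ (i + 1)) * (1 - u) := by
    intro i hi
    rw [if_neg]
    have := Finset.mem_range.1 hi; omega
  rw [Finset.sum_congr rfl this, ← Finset.sum_mul]
  simp only [Nat.add_eq_zero_iff, one_ne_zero, and_false, if_false, Nat.sub_self, if_true,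
    mul_one]
  induction n with
  | zero => simp
  | succ n ih =>
    have ih' := ih (fun i hi => by
      rw [if_neg]
      have := Finset.mem_range.1 hi; omega)
    rw [Finset.sum_range_succ]
    push_cast
    linear_combination ih'

end newton

section hs
variable {R : Type} [Field R] [CharZero R]

theorem hsym_zero : hsym (R := R) 0 = 1 := by rw [hsym]

/-- `p_{i+1}`. -/
def xs (A : Type) [CommSemiring A] (i : ℕ) : SymFn A := X (Nat.succPNat i)

theorem isNewton_hsym : IsNewton (xs R) (hsym (R := R)) := by
  refine ⟨hsym_zero, fun n => ?_⟩
  rw [show hsym (R := R) (n + 1) = _ from hsym.eq_2 n]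
  have hn : ((n : R) + 1) ≠ 0 := by exact_mod_cast Nat.succ_ne_zero n
  have e : ((n : SymFn R) + 1) = C ((n : R) + 1) := by simp
  rw [e, ← smul_eq_C_mul, smul_smul, mul_inv_cancel₀ hn, one_smul]
  rfl

/-- Compatibility of `hsym` with field extensions. -/
theorem map_hsym {R' : Type} [Field R'] [CharZero R'] (f : R →+* R') (n : ℕ) :
    MvPolynomial.map f (hsym n) = hsym n := by
  have h1 := (isNewton_hsym (R := R)).map (MvPolynomial.map f)
  have h2 : (fun i => MvPolynomial.map f (xs R i)) = xs R' := by
    funext i; simp [xs]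
  rw [h2] at h1
  exact h1.unique isNewton_hsym n

/-- The coefficients `G_N` with `∑ G_N z^N = ∏ (1 - x z)/(1 - q x z)`. -/
def Gq (q : R) (N : ℕ) : SymFn R := scaleHom (fun k => q ^ (k : ℕ) - 1) (hsym N)

theorem isNewton_Gq (q : R) : IsNewton (fun i => C (q ^ (i + 1) - 1) * xs R i) (Gq q) := by
  have := (isNewton_hsym (R := R)).map (scaleHom (fun k : ℕ+ => q ^ (k : ℕ) - 1)).toRingHom
  convert this using 2 with i
  · simp [xs, scaleHom]
  · rfl

theorem Gq_conv (q : R) (n : ℕ) :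
    ∑ x ∈ Finset.HasAntidiagonal.antidiagonal n, Gq q x.1 * hsym x.2 = C (q ^ n) * hsym n := by
  have h1 := (isNewton_Gq q).conv isNewton_hsym
  have h2 := (isNewton_hsym (R := R)).scale (C q)
  have e : (fun i => C (q ^ (i + 1) - 1) * xs R i + xs R i) =
    fun i => C q ^ (i + 1) * xs R i := by
    funext i; simp only [map_sub, map_pow, map_one]; ring
  rw [e] at h1
  rw [map_pow]
  exact h1.unique h2 n

theorem map_Gq {R' : Type} [Field R'] [CharZero R'] (f : R →+* R') (q : R) (n : ℕ) :
    MvPolynomial.map f (Gq q n) = Gq (f q) n := by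
  have h1 := (isNewton_Gq q).map (MvPolynomial.map f)
  have h2 := isNewton_Gq (f q)
  have e : (fun i => MvPolynomial.map f (C (q ^ (i + 1) - 1) * xs R i)) =
    (fun i => C (f q ^ (i + 1) - 1) * xs R' i) := by
    funext i; simp [xs]
  rw [e] at h1
  exact h1.unique h2 n

/-- Expansion of `p_l ∘ h_n`. -/
theorem plethP_hsym (l : ℕ+) (z : R) (hz : IsPrimitiveRoot z (l : ℕ)) (n : ℕ) :
    plethP l (hsym (R := R) n) = ∑ a ∈ (Finset.range l).finsuppAntidiag (l * n),
      C (z ^ (∑ i ∈ Finset.range l, i * a i)) * ∏ i ∈ Finset.range l, hsym (R := R) (a i) := by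
  have h1 : IsNewton (fun m => ∑ i ∈ Finset.range l, (C (z ^ i)) ^ (m + 1) * xs R m)
      (fun n => ∑ a ∈ (Finset.range l).finsuppAntidiag n,
        ∏ i ∈ Finset.range l, ((C (z ^ i)) ^ (a i) * hsym (R := R) (a i))) :=
    IsNewton.prod (S := SymFn R) (Finset.range l)
      (p := fun i m => (C (z ^ i)) ^ (m + 1) * xs R m)
      (h := fun i m => (C (z ^ i)) ^ m * hsym (R := R) m)
      (fun i _ => (isNewton_hsym (R := R)).scale (C (z ^ i)))
  have hl := l.pos
  have e : (fun m => ∑ i ∈ Finset.range l, (C (z ^ i)) ^ (m + 1) * xs R m) =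
      fun m => if (l : ℕ) ∣ m + 1 then ((l : ℕ) : SymFn R) * xs R m else 0 := by
    funext m
    rw [← Finset.sum_mul]
    simp only [← map_pow, ← map_sum, ← pow_mul, mul_comm _ (m + 1)]
    simp only [pow_mul]
    split_ifs with hd
    · rw [(hz.pow_eq_one_iff_dvd _).2 hd]
      simp
    · have hne : z ^ (m + 1) ≠ 1 := fun h => hd ((hz.pow_eq_one_iff_dvd _).1 h)
      have : ∑ i ∈ Finset.range l, (z ^ (m + 1)) ^ i = 0 := by
        have := geom_sum_mul (z ^ (m + 1)) l
        rw [← pow_mul, mul_comm (m + 1), pow_mul, hz.pow_eq_one, one_pow, sub_self] at this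
        exact (mul_eq_zero.1 this).resolve_right (sub_ne_zero.2 hne)
      rw [this]; simp
  rw [e] at h1
  have h2 : IsNewton (fun m => if (l : ℕ) ∣ m + 1 then ((l : ℕ) : SymFn R) * xs R m else 0)
      (fun m => if (l : ℕ) ∣ m then plethP l (hsym (R := R) (m / l)) else 0) := by
    refine ⟨by simp [hsym_zero], fun m => ?_⟩
    beta_reduce
    by_cases hd : (l : ℕ) ∣ m + 1
    · rw [if_pos hd]
      obtain ⟨n, hn⟩ := hd
      obtain ⟨n, rfl⟩ : ∃ k, n = k + 1 := ⟨n - 1, by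
        rcases n with _ | n
        · simp at hn
        · simp⟩
      have h3 := ((isNewton_hsym (R := R)).map (plethP l).toRingHom).2 n
      have e1 : ((m : SymFn R) + 1) = (l : ℕ) * ((n : SymFn R) + 1) := by exact_mod_cast hn
      rw [hn, Nat.mul_div_cancel_left _ hl, e1, mul_assoc]
      simp only [AlgHom.toRingHom_eq_coe, RingHom.coe_coe] at h3
      rw [h3, Finset.mul_sum]
      have e2 : ∀ i ∈ Finset.range (m + 1),
        ((if (l : ℕ) ∣ i + 1 then ((l : ℕ) : SymFn R) * xs R i else 0) *
          if (l : ℕ) ∣ m - i then plethP l (hsym (R := R) ((m - i) / l)) else 0) =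
        if (l : ℕ) ∣ i + 1 then ((l : ℕ) : SymFn R) * xs R i *
          plethP l (hsym (R := R) ((m - i) / l)) else 0 := by
        intro i hi
        split_ifs with ha hb
        · rfl
        · exfalso; apply hb
          have : m - i = l * (n + 1) - (i + 1) := by omega
          rw [this]; exact Nat.dvd_sub (dvd_mul_right _ _) ha
        all_goals simp
      rw [← hn, Finset.sum_congr rfl e2, ← Finset.sum_filter]
      refine Finset.sum_bij (fun k _ => l * (k + 1) - 1) ?_ ?_ ?_ ?_
      · intro k hk
        have hk := Finset.mem_range.1 hk
        have hp : 0 < (l : ℕ) * (k + 1) := by positivity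
        have hle : (l : ℕ) * (k + 1) ≤ l * (n + 1) := Nat.mul_le_mul_left _ (by omega)
        rw [Finset.mem_filter, Finset.mem_range]
        refine ⟨by omega, ?_⟩
        rw [Nat.sub_add_cancel hp]; exact dvd_mul_right _ _
      · intro a _ b _ hab
        have hp : 0 < (l : ℕ) * (a + 1) := by positivity
        have hp2 : 0 < (l : ℕ) * (b + 1) := by positivity
        have : (l : ℕ) * (a + 1) = l * (b + 1) := by omega
        have := Nat.eq_of_mul_eq_mul_left hl this
        omega
      · intro b hb
        rw [Finset.mem_filter, Finset.mem_range] at hb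
        obtain ⟨hb1, c, hc⟩ := hb
        rcases c with _ | c
        · simp at hc
        · refine ⟨c, ?_, by omega⟩
          rw [Finset.mem_range]
          have : (l : ℕ) * (c + 1) ≤ l * (n + 1) := by omega
          have := Nat.le_of_mul_le_mul_left this hl
          omega
      · intro k hk
        have hk := Finset.mem_range.1 hk
        have hp : 0 < (l : ℕ) * (k + 1) := by positivity
        have e3 : (m - (l * (k + 1) - 1)) / (l : ℕ) = n - k := by
          have : m - (l * (k + 1) - 1) = l * (n - k) := by
            have : (n - k) + (k + 1) = n + 1 := by omega
            have : (l : ℕ) * (n - k) + l * (k + 1) = l * (n + 1) := by rw [← mul_add, this]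
            omega
          rw [this, Nat.mul_div_cancel_left _ hl]
        rw [e3, ← mul_assoc]
        congr 2
        simp only [xs, plethP, aeval_X]
        congr 1
        apply PNat.coe_injective
        simp only [PNat.mul_coe, Nat.succPNat_coe, Nat.succ_eq_add_one]
        omega
    · rw [if_neg hd, mul_zero]
      symm
      apply Finset.sum_eq_zero
      intro i hi
      have hi := Finset.mem_range.1 hi
      split_ifs with ha hb
      · exfalso; apply hd
        have : m + 1 = (i + 1) + (m - i) := by omega
        rw [this]; exact dvd_add ha hb
      all_goals simp
  have h3 := h2.unique h1 (l * n)
  simp only [dvd_mul_right, if_true, Nat.mul_div_cancel_left _ hl] at h3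
  rw [h3]
  apply Finset.sum_congr rfl
  intro a _
  rw [Finset.prod_mul_distrib, ← Finset.prod_pow_eq_pow_sum, map_prod]
  simp only [map_pow, pow_mul]

end hs

end QP

end

noncomputable section

namespace QP

/-! ### The operator `D` -/

section ops
variable {A : Type} [CommRing A]

/-- The substitution `p_k ↦ p_k + d_k z^k`. -/
def tau (d : ℕ+ → A) : SymFn A →ₐ[A] Polynomial (SymFn A) :=
  aeval fun k : ℕ+ => Polynomial.C (X k) + Polynomial.C (C (d k)) * Polynomial.X ^ (k : ℕ)

/-- Replace `z^N` by `G N`. -/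
def ell (G : ℕ → SymFn A) : Polynomial (SymFn A) →ₗ[SymFn A] SymFn A :=
  Polynomial.lsum (fun n => LinearMap.toSpanSingleton (SymFn A) (SymFn A) (G n))

/-- The (shifted, dual) Macdonald operator. -/
def DD (u : A) (G : ℕ → SymFn A) : SymFn A →ₗ[A] SymFn A :=
  ((ell G).restrictScalars A) ∘ₗ (tau (fun k => 1 - u ^ (k : ℕ))).toLinearMap

theorem DD_apply (u : A) (G : ℕ → SymFn A) (f : SymFn A) :
    DD u G f = ell G (tau (fun k => 1 - u ^ (k : ℕ)) f) := rfl

theorem ell_apply (G : ℕ → SymFn A) (p : Polynomial (SymFn A)) :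
    ell G p = p.sum (fun n a => a * G n) := rfl

theorem ell_C_mul_X_pow (G : ℕ → SymFn A) (a : SymFn A) (n : ℕ) :
    ell G (Polynomial.C a * Polynomial.X ^ n) = a * G n := by
  rw [ell_apply, Polynomial.C_mul_X_pow_eq_monomial, Polynomial.sum_monomial_index]
  simp

theorem ell_C (G : ℕ → SymFn A) (a : SymFn A) : ell G (Polynomial.C a) = a * G 0 := by
  have := ell_C_mul_X_pow G a 0
  simpa using this

theorem ell_X_pow (G : ℕ → SymFn A) (n : ℕ) : ell G (Polynomial.X ^ n) = G n := by
  have := ell_C_mul_X_pow G 1 n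
  simpa using this

theorem ell_C_mul (G : ℕ → SymFn A) (a : SymFn A) (p) :
    ell G (Polynomial.C a * p) = a * ell G p := by
  rw [← Polynomial.smul_eq_C_mul, map_smul, smul_eq_mul]

theorem tau_X (d : ℕ+ → A) (k : ℕ+) : tau d (X k) =
    Polynomial.C (X k) + Polynomial.C (C (d k)) * Polynomial.X ^ (k : ℕ) := by
  simp [tau]

theorem tau_C (d : ℕ+ → A) (a : A) : tau d (C a) = Polynomial.C (C a) := by
  simp [tau, aeval_C, Polynomial.algebraMap_apply, algebraMap_eq]

theorem map_tau {B : Type} [CommRing B] (φ : A →+* B) (d : ℕ+ → A) (f : SymFn A) :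
    (tau d f).map (MvPolynomial.map φ) = tau (fun k => φ (d k)) (MvPolynomial.map φ f) := by
  induction f using MvPolynomial.induction_on with
  | C a => rw [tau_C, map_C, tau_C, Polynomial.map_C, map_C]
  | add p q hp hq => simp only [map_add, Polynomial.map_add, hp, hq]
  | mul_X p k hp =>
    simp only [map_mul, Polynomial.map_mul, hp, map_X, tau_X]
    simp

theorem map_ell {B : Type} [CommRing B] (φ : A →+* B) (G : ℕ → SymFn A)
    (p : Polynomial (SymFn A)) :
    MvPolynomial.map φ (ell G p) =
      ell (fun n => MvPolynomial.map φ (G n)) (p.map (MvPolynomial.map φ)) := by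
  induction p using Polynomial.induction_on' with
  | add p q hp hq => simp only [map_add, Polynomial.map_add, hp, hq]
  | monomial n a =>
    rw [← Polynomial.C_mul_X_pow_eq_monomial, ell_C_mul_X_pow, Polynomial.map_mul,
      Polynomial.map_C, Polynomial.map_pow, Polynomial.map_X, ell_C_mul_X_pow, map_mul]

theorem map_DD {B : Type} [CommRing B] (φ : A →+* B) (u : A) (G : ℕ → SymFn A) (f : SymFn A) :
    MvPolynomial.map φ (DD u G f) =
      DD (φ u) (fun n => MvPolynomial.map φ (G n)) (MvPolynomial.map φ f) := by
  rw [DD_apply, DD_apply, map_ell, map_tau]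
  simp

end ops

section dets
variable {S : Type*} [CommRing S] {n : Type*} [Fintype n] [DecidableEq n]

theorem det_rank_one (M : Matrix n n S) (k v : n → S) :
    (M + Matrix.vecMulVec k v).det = M.det + ∑ r, v r * (M.updateCol r k).det := by
  have key : ∀ s : Finset n,
      (Matrix.of fun i j => M i j + if j ∈ s then k i * v j else 0).det =
        M.det + ∑ r ∈ s, v r * (M.updateCol r k).det := by
    intro s
    induction s using Finset.induction_on with
    | empty => simp; rfl
    | insert a s ha ih =>
      rw [Finset.sum_insert ha]
      set N : Matrix n n S := Matrix.of fun i j => M i j + if j ∈ s then k i * v j else 0 with hN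
      have e1 : (Matrix.of fun i j => M i j + if j ∈ insert a s then k i * v j else 0) =
          N.updateCol a ((fun i => N i a) + v a • k) := by
        ext i j
        by_cases hj : j = a
        · subst hj
          simp [hN, ha, mul_comm]
        · simp [hN, hj, Matrix.updateCol_apply]
      rw [e1, Matrix.det_updateCol_add, Matrix.det_updateCol_smul]
      have e2 : N.updateCol a (fun i => N i a) = N := Matrix.updateCol_eq_self N a
      rw [e2, ih]
      have e3 : (N.updateCol a k).det = (M.updateCol a k).det := by
        rw [← Matrix.det_transpose, ← Matrix.det_transpose (M.updateCol a k)]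
        apply Matrix.det_eq_of_forall_row_eq_smul_add_const (fun j => if j ∈ s then v j else 0) a
        · simp [ha]
        · intro i j
          by_cases hi : i = a
          · subst hi; simp [ha]
          · simp [Matrix.updateCol_apply, hi, hN, mul_comm]
      rw [e3]; ring
  have := key Finset.univ
  simp only [Finset.mem_univ, if_true] at this
  rw [← this]
  rfl

theorem linear_det_updateCol {L : Polynomial S →ₗ[S] S} (M : Matrix n n S) (r : n)
    (w : n → Polynomial S) :
    L (((M.map Polynomial.C).updateCol r w).det) = (M.updateCol r (fun i => L (w i))).det := by
  rw [← Matrix.cramer_apply, ← Matrix.cramer_apply, Matrix.cramer_eq_adjugate_mulVec,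
    Matrix.cramer_eq_adjugate_mulVec]
  have e : (M.map Polynomial.C).adjugate = M.adjugate.map (Polynomial.C) :=
    (RingHom.map_adjugate Polynomial.C M).symm
  rw [e]
  simp only [Matrix.mulVec, dotProduct, Matrix.map_apply, map_sum]
  apply Finset.sum_congr rfl
  intro i _
  rw [← Polynomial.smul_eq_C_mul, map_smul, smul_eq_mul]

end dets

section formula
variable {R : Type} [Field R] [CharZero R]

theorem hInt_neg {z : ℤ} (h : z < 0) : hInt (R := R) z = 0 := by
  rw [hInt, if_neg (by omega)]

theorem hInt_natCast (n : ℕ) : hInt (R := R) (n : ℤ) = hsym n := by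
  simp [hInt]

/-- `∑_k z^k h_{m-k}`. -/
def Kz (m : ℤ) : Polynomial (SymFn R) :=
  ∑ k ∈ Finset.range (m + 1).toNat, Polynomial.X ^ k * Polynomial.C (hInt (m - k))

theorem Kz_rec (m : ℤ) : Kz (R := R) m = Polynomial.C (hInt m) + Polynomial.X * Kz (m - 1) := by
  rcases lt_or_ge m 0 with h | h
  · have h1 : (m + 1).toNat = 0 := by omega
    have h2 : (m - 1 + 1).toNat = 0 := by omega
    rw [Kz, Kz, h1, h2, hInt_neg h]
    simp
  · have h1 : (m + 1).toNat = (m - 1 + 1).toNat + 1 := by omega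
    rw [Kz, h1, Finset.sum_range_succ', Kz, Finset.mul_sum, add_comm]
    have e1 : Polynomial.X ^ 0 * Polynomial.C (hInt (R := R) (m - ((0 : ℕ) : ℤ))) =
        Polynomial.C (hInt m) := by simp
    rw [e1]
    refine congrArg _ (Finset.sum_congr rfl ?_)
    intro k _
    have e2 : m - ((k + 1 : ℕ) : ℤ) = m - 1 - (k : ℤ) := by push_cast; ring
    rw [pow_succ', mul_assoc, e2]

theorem Kz_iter (m : ℤ) (r : ℕ) : Polynomial.X ^ r * Kz (R := R) m =
    Kz (m + r) - ∑ s ∈ Finset.range r, Polynomial.X ^ s * Polynomial.C (hInt (m + r - s)) := by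
  induction r generalizing m with
  | zero => simp
  | succ r ih =>
    have h1 := Kz_rec (R := R) (m + 1)
    rw [add_sub_cancel_right] at h1
    have e : Polynomial.X ^ (r + 1) * Kz (R := R) m = Polynomial.X ^ r * Kz (m + 1)
       - Polynomial.X ^ r * Polynomial.C (hInt (m + 1)) := by rw [h1]; ring
    rw [e, ih, Finset.sum_range_succ]
    have e1 : m + 1 + (r : ℤ) = m + ((r + 1 : ℕ) : ℤ) := by push_cast; ring
    have e2 : m + ((r + 1 : ℕ) : ℤ) - (r : ℤ) = m + 1 := by push_cast; ring
    rw [e1, e2]; ring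

theorem tau_hsym {d : ℕ+ → R} {b : ℕ → R} (hb : IsNewton (fun i => d (Nat.succPNat i)) b)
    (n : ℕ) : tau d (hsym (R := R) n) = ∑ x ∈ Finset.HasAntidiagonal.antidiagonal n,
      Polynomial.C (hsym x.1) * (Polynomial.X ^ x.2 * Polynomial.C (C (b x.2))) := by
  have h1 := (isNewton_hsym (R := R)).map (tau d).toRingHom
  have h2 := (isNewton_hsym (R := R)).map (Polynomial.C (R := SymFn R))
  have h3 := (hb.map ((Polynomial.C (R := SymFn R)).comp (C (σ := ℕ+)))).scale
    (Polynomial.X (R := SymFn R))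
  have h4 := h2.conv h3
  have e : (fun i => (tau d).toRingHom (xs R i)) = fun i => Polynomial.C (xs R i) +
      Polynomial.X ^ (i + 1) *
        ((Polynomial.C (R := SymFn R)).comp (C (σ := ℕ+))) (d (Nat.succPNat i)) := by
    funext i
    simp only [AlgHom.toRingHom_eq_coe, RingHom.coe_coe, xs, tau_X, RingHom.comp_apply]
    rw [mul_comm (Polynomial.X ^ _)]
    rfl
  rw [e] at h1
  exact h1.unique h4 n

theorem tau_one_hsym (n : ℕ) : tau (fun _ => (1 : R)) (hsym n) = Kz (n : ℤ) := by
  rw [tau_hsym (isNewton_one), Finset.Nat.sum_antidiagonal_eq_sum_range_succ_mk, Kz,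
    ← Finset.sum_range_reflect]
  apply Finset.sum_congr (by congr 1)
  intro k hk
  have hk := Finset.mem_range.1 hk
  have e1 : n + 1 - 1 - k = n - k := by omega
  have e2 : n - (n - k) = k := by omega
  have e3 : ((n : ℤ) - (k : ℤ)) = ((n - k : ℕ) : ℤ) := by omega
  simp only [e1, e2, e3, hInt_natCast, map_one, mul_one]
  ring

theorem tau_u_hsym (u : R) (n : ℕ) : tau (fun k => 1 - u ^ (k : ℕ)) (hsym n) =
    Polynomial.C (C (1 - u)) * Kz (n : ℤ) + Polynomial.C (C u) * Polynomial.C (hsym n) := by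
  rw [tau_hsym (b := fun n => if n = 0 then 1 else 1 - u) (isNewton_u u)]
  rw [← tau_one_hsym, tau_hsym (isNewton_one), Finset.mul_sum]
  have e : Polynomial.C (C u) * Polynomial.C (hsym n) =
    ∑ x ∈ Finset.HasAntidiagonal.antidiagonal n, if x.2 = 0 then
      Polynomial.C (C u) * Polynomial.C (hsym (R := R) x.1) else 0 := by
    rw [Finset.Nat.sum_antidiagonal_eq_sum_range_succ_mk, Finset.sum_range_succ]
    simp only [Nat.sub_self, if_true]
    rw [Finset.sum_eq_zero, zero_add]
    intro x hx
    have := Finset.mem_range.1 hx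
    rw [if_neg (by omega)]
  rw [e, ← Finset.sum_add_distrib]
  apply Finset.sum_congr rfl
  intro x _
  split_ifs with h
  · simp only [h, map_sub, map_one]; ring
  · simp only [map_sub, map_one]; ring

theorem tau_one_hInt (z : ℤ) : tau (fun _ => (1 : R)) (hInt z) = Kz z := by
  rcases lt_or_ge z 0 with h | h
  · have h1 : (z + 1).toNat = 0 := by omega
    rw [hInt_neg h, Kz, h1]; simp
  · obtain ⟨n, rfl⟩ := Int.eq_ofNat_of_zero_le h
    rw [hInt_natCast, tau_one_hsym]

theorem tau_u_hInt (u : R) (z : ℤ) : tau (fun k => 1 - u ^ (k : ℕ)) (hInt z) =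
    Polynomial.C (C (1 - u)) * Kz z + Polynomial.C (C u) * Polynomial.C (hInt z) := by
  rcases lt_or_ge z 0 with h | h
  · have h1 : (z + 1).toNat = 0 := by omega
    rw [hInt_neg h, Kz, h1]; simp
  · obtain ⟨n, rfl⟩ := Int.eq_ofNat_of_zero_le h
    rw [hInt_natCast, tau_u_hsym]

theorem ell_Kz (q : R) (z : ℤ) : ell (Gq q) (Kz z) = C (q ^ z.toNat) * hInt z := by
  rcases lt_or_ge z 0 with h | h
  · have h1 : (z + 1).toNat = 0 := by omega
    rw [hInt_neg h, Kz, h1]; simp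
  · obtain ⟨n, rfl⟩ := Int.eq_ofNat_of_zero_le h
    rw [hInt_natCast, Kz, map_sum, Int.toNat_natCast, ← Gq_conv,
      Finset.Nat.sum_antidiagonal_eq_sum_range_succ_mk]
    apply Finset.sum_congr (by congr 1)
    intro k hk
    have hk := Finset.mem_range.1 hk
    have e3 : ((n : ℤ) - (k : ℤ)) = ((n - k : ℕ) : ℤ) := by omega
    rw [mul_comm, ell_C_mul_X_pow, e3, hInt_natCast, mul_comm]

theorem Gq_zero (q : R) : Gq q 0 = 1 := (isNewton_Gq q).1

theorem DD_det (q u : R) (n : ℕ) (m : Fin n → ℤ) :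
    DD u (Gq q) (Matrix.det (Matrix.of fun i j : Fin n => hInt (R := R) (m i + j))) =
      Matrix.det (Matrix.of fun i j : Fin n => hInt (R := R) (m i + j)) +
      ∑ r : Fin n, C ((1 - u) * u ^ (r : ℕ)) *
        (((Matrix.of fun i j : Fin n => hInt (R := R) (m i + j)).updateCol r
            (fun i => C (q ^ (m i + r).toNat) * hInt (m i + r))).det -
          Matrix.det (Matrix.of fun i j : Fin n => hInt (R := R) (m i + j))) := by
  cases n with
  | zero =>
    simp [DD_apply]
    have := ell_C (Gq q) (1 : SymFn R)
    rw [Gq_zero] at this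
    simpa using this
  | succ n =>
    set M : Matrix (Fin (n + 1)) (Fin (n + 1)) (SymFn R) :=
      Matrix.of fun i j => hInt (R := R) (m i + j) with hM
    set kk : Fin (n + 1) → Polynomial (SymFn R) := fun i => Kz (m i - 1) with hkk
    set v : Fin (n + 1) → Polynomial (SymFn R) := fun r =>
      Polynomial.C (C ((1 - u) * u ^ (r : ℕ))) * Polynomial.X ^ ((r : ℕ) + 1) with hv
    have e1 : tau (fun k => 1 - u ^ (k : ℕ)) M.det =
        (Matrix.of fun i j => tau (fun k => 1 - u ^ (k : ℕ)) (M i j)).det := by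
      have := (tau (fun k => 1 - u ^ (k : ℕ))).map_det M
      rw [this]; rfl
    let B : Matrix (Fin (n + 1)) (Fin (n + 1)) (Polynomial (SymFn R)) := Matrix.of fun i j =>
      Fin.cases (Polynomial.C (hInt (m i)) +
          Polynomial.C (C (1 - u)) * (Polynomial.X * Kz (m i - 1)))
        (fun j => Polynomial.C (hInt (m i + (j : ℕ) + 1)) -
          Polynomial.C (C u) * (Polynomial.X * Polynomial.C (hInt (m i + (j : ℕ))))) j
    have e2 : (Matrix.of fun i j => tau (fun k => 1 - u ^ (k : ℕ)) (M i j)).det = B.det := by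
      apply Matrix.det_eq_of_forall_col_eq_smul_add_pred (fun _ => Polynomial.X)
      · intro i
        simp only [Matrix.of_apply, hM, tau_u_hInt, B, Fin.cases_zero, Fin.val_zero,
          Nat.cast_zero, add_zero]
        rw [Kz_rec (m i)]
        simp only [map_sub, map_one]; ring
      · intro i j
        simp only [Matrix.of_apply, hM, tau_u_hInt, B, Fin.cases_succ, Fin.val_succ,
          Fin.val_castSucc, Nat.cast_add, Nat.cast_one, ← add_assoc]
        rw [Kz_rec (m i + (j : ℕ) + 1), add_sub_cancel_right]
        simp only [map_sub, map_one]; ring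
    have e3 : (M.map Polynomial.C + Matrix.vecMulVec kk v).det = B.det := by
      apply Matrix.det_eq_of_forall_col_eq_smul_add_pred
        (fun _ => Polynomial.C (C u) * Polynomial.X)
      · intro i
        simp only [Matrix.add_apply, Matrix.vecMulVec_apply, Matrix.map_apply, Matrix.of_apply,
          hM, hkk, hv, B, Fin.cases_zero, Fin.val_zero, Nat.cast_zero, add_zero, map_mul,
          map_pow]
        ring
      · intro i j
        simp only [Matrix.add_apply, Matrix.vecMulVec_apply, Matrix.map_apply, Matrix.of_apply,
          hM, hkk, hv, B, Fin.cases_succ, Fin.val_succ, map_mul,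
          Fin.val_castSucc, Nat.cast_add, Nat.cast_one, ← add_assoc,
          map_pow]
        ring
    rw [DD_apply, e1, e2, ← e3, det_rank_one, map_add, map_sum]
    congr 1
    · have : (M.map Polynomial.C).det = Polynomial.C M.det :=
        (RingHom.map_det Polynomial.C M).symm
      rw [this, ell_C, Gq_zero, mul_one]
    · apply Finset.sum_congr rfl
      intro r _
      rw [hv]
      simp only
      rw [mul_assoc, ell_C_mul, ← Matrix.det_updateCol_smul, linear_det_updateCol]
      congr 1
      have e4 : (fun i => ell (Gq q) (((Polynomial.X (R := SymFn R)) ^ ((r : ℕ) + 1) • kk) i)) =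
          ((fun i => C (q ^ (m i + r).toNat) * hInt (m i + r)) + (-1 : SymFn R) • fun i => M i r)
           + ∑ s ∈ Finset.range r, (- Gq q (s + 1)) •
              (fun i => hInt (m i + ((r : ℕ) - (s + 1) : ℕ))) := by
        funext i
        simp only [Pi.add_apply, Pi.smul_apply, smul_eq_mul, hkk, Finset.sum_apply]
        rw [Kz_iter, map_sub, map_sum]
        have : m i - 1 + (((r : ℕ) + 1 : ℕ) : ℤ) = m i + (r : ℕ) := by push_cast; ring
        rw [this, ell_Kz, Finset.sum_range_succ']
        simp only [mul_comm (Polynomial.X ^ _) (Polynomial.C _), ell_C_mul_X_pow, Gq_zero]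
        rw [sub_eq_add_neg, add_assoc]
        congr 1
        rw [neg_add, add_comm]
        congr 1
        · simp [hM]
        · rw [← Finset.sum_neg_distrib]
          apply Finset.sum_congr rfl
          intro s hs
          have hs := Finset.mem_range.1 hs
          rw [neg_mul, mul_comm]
          congr 3
          omega
      rw [e4, Matrix.det_updateCol_add, Matrix.det_updateCol_add, Matrix.det_updateCol_smul,
        show (fun i => M i r) = (fun i => M i r) from rfl, Matrix.updateCol_eq_self]
      have e5 : (M.updateCol r (∑ s ∈ Finset.range r, (- Gq q (s + 1)) •
              (fun i => hInt (m i + ((r : ℕ) - (s + 1) : ℕ))))).det = 0 := by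
        rw [← Matrix.cramer_apply, map_sum, Finset.sum_apply]
        apply Finset.sum_eq_zero
        intro s hs
        have hs := Finset.mem_range.1 hs
        rw [map_smul, Pi.smul_apply, Matrix.cramer_apply]
        have : (M.updateCol r (fun i => hInt (m i + ((r : ℕ) - (s + 1) : ℕ)))).det = 0 := by
          have hlt : (r : ℕ) - (s + 1) < n + 1 := by have := r.2; omega
          apply Matrix.det_zero_of_column_eq (i := r) (j := ⟨(r : ℕ) - (s + 1), hlt⟩)
          · intro h; have := congrArg Fin.val h; simp only at this; omega
          · intro i
            have hne : (⟨(r : ℕ) - (s + 1), hlt⟩ : Fin (n + 1)) ≠ r := by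
              intro h; have := congrArg Fin.val h; simp only at this; omega
            rw [Matrix.updateCol_self, Matrix.updateCol_ne hne]
            simp [hM]
        rw [this, smul_zero]
      rw [e5]; ring

end formula

end QP

end

noncomputable section

namespace QP

/-! ### Triangularity -/

/-- A natural number as a (possibly empty) one-part partition. -/
def pos (a : ℕ) : Multiset ℕ+ := if h : 0 < a then {⟨a, h⟩} else 0

/-- The `i`-th part. -/
def part (lam : Multiset ℕ+) (i : ℕ) : ℕ := (descParts lam).getD i 0

theorem pos_coe (a : ℕ+) : pos (a : ℕ) = {a} := by
  rw [pos, dif_pos a.pos]; rfl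

theorem pos_zero : pos 0 = 0 := rfl

theorem wt_pos (a : ℕ) : wt (pos a) = a := by
  rcases Nat.eq_zero_or_pos a with rfl | h
  · rfl
  · lift a to ℕ+ using h
    rw [pos_coe]; simp [wt]

theorem wt_zero : wt 0 = 0 := rfl

theorem wt_sum {ι : Type*} (s : Finset ι) (a : ι → Multiset ℕ+) :
    wt (∑ i ∈ s, a i) = ∑ i ∈ s, wt (a i) := by
  classical
  induction s using Finset.induction_on with
  | empty => rfl
  | insert i s hi ih => rw [Finset.sum_insert hi, Finset.sum_insert hi, wt_add, ih]

theorem mem_pos {x : ℕ+} {a : ℕ} : x ∈ pos a ↔ (x : ℕ) = a := by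
  rcases Nat.eq_zero_or_pos a with rfl | h
  · simp [pos_zero]
  · lift a to ℕ+ using h
    rw [pos_coe, Multiset.mem_singleton, PNat.coe_inj]

theorem mem_sum_pos {ι : Type*} (s : Finset ι) (a : ι → ℕ) (x : ℕ+) :
    x ∈ ∑ i ∈ s, pos (a i) ↔ ∃ i ∈ s, (x : ℕ) = a i := by
  rw [Multiset.mem_sum]
  simp only [mem_pos]

theorem key_lt_of_first {n : ℕ} (a b : Fin n → ℕ) (i0 : Fin n) (h : ∀ i < i0, a i = b i)
    (h2 : ∀ i, i0 ≤ i → a i < b i0) : key (∑ i, pos (a i)) < key (∑ i, pos (b i)) := by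
  classical
  rw [← Finset.sum_filter_add_sum_filter_not Finset.univ (· < i0) (fun i => pos (a i)),
    ← Finset.sum_filter_add_sum_filter_not Finset.univ (· < i0) (fun i => pos (b i))]
  have e : ∑ i ∈ Finset.univ.filter (· < i0), pos (a i) =
    ∑ i ∈ Finset.univ.filter (· < i0), pos (b i) := by
    apply Finset.sum_congr rfl
    intro i hi
    rw [h i (by simpa using hi)]
  rw [e]
  apply key_add_lt_left
  have hb : 0 < b i0 := lt_of_le_of_lt (Nat.zero_le _) (h2 i0 le_rfl)
  obtain ⟨x, hx⟩ : ∃ x : ℕ+, (x : ℕ) = b i0 := ⟨⟨b i0, hb⟩, rfl⟩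
  apply key_lt_of_mem (x := x)
  · rw [mem_sum_pos]; exact ⟨i0, by simp, hx⟩
  · intro y hy
    rw [mem_sum_pos] at hy
    obtain ⟨i, hi, hy⟩ := hy
    have := h2 i (by simpa using hi)
    rw [← PNat.coe_lt_coe, hy, hx]; exact this

theorem part_eq {lam : Multiset ℕ+} {i : ℕ} (h : i < (dl lam).length) :
    part lam i = ((dl lam)[i] : ℕ+) := by
  rw [part, descParts_eq, List.getD_eq_getElem _ _ (by simpa using h)]
  simp

theorem part_anti {lam : Multiset ℕ+} {i j : ℕ} (h : i ≤ j) : part lam j ≤ part lam i := by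
  by_cases hj : j < (dl lam).length
  · rw [part_eq hj, part_eq (lt_of_le_of_lt h hj)]
    rcases h.lt_or_eq with h | h
    · exact (List.pairwise_iff_getElem.1 (dl_sorted lam)) i j (by omega) hj h
    · subst h; exact le_rfl
  · rw [part, descParts_eq, List.getD_eq_default _ _ (by simpa using hj)]
    exact Nat.zero_le _

theorem part_of_ge {lam : Multiset ℕ+} {i : ℕ} (h : Multiset.card lam ≤ i) : part lam i = 0 := by
  rw [part, descParts_eq, List.getD_eq_default _ _ (by simpa [length_dl] using h)]

theorem sum_pos_part (lam : Multiset ℕ+) :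
    ∑ i : Fin (Multiset.card lam), pos (part lam i) = lam := by
  have h : ∀ n (hn : n = (dl lam).length), ∑ i : Fin n, pos (part lam i) = lam := by
    intro n hn
    subst hn
    have e : ∀ i : Fin (dl lam).length, pos (part lam i) = {(dl lam)[(i : ℕ)]} := by
      intro i
      rw [part_eq i.2, pos_coe]
    rw [Finset.sum_congr rfl (fun i _ => e i),
      Fin.sum_univ_fun_getElem (dl lam) (fun a => ({a} : Multiset ℕ+))]
    conv_rhs => rw [← dl_coe lam]
    generalize dl lam = L
    induction L with
    | nil => rfl
    | cons a L ih => rw [List.map_cons, List.sum_cons, ih]; rfl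
  exact h _ (length_dl lam).symm

theorem wt_eq_sum_part (lam : Multiset ℕ+) :
    wt lam = ∑ i : Fin (Multiset.card lam), part lam i := by
  conv_lhs => rw [← sum_pos_part lam]
  rw [wt_sum]
  simp [wt_pos]

section
variable {R : Type} [Field R]

theorem hPar_add (a b : Multiset ℕ+) : hPar (R := R) (a + b) = hPar a * hPar b := by
  simp [hPar]

theorem hPar_zero : hPar (R := R) 0 = 1 := rfl

theorem hPar_pos (a : ℕ) : hPar (R := R) (pos a) = hsym a := by
  rcases Nat.eq_zero_or_pos a with rfl | h
  · rw [pos_zero, hPar_zero, hsym]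
  · lift a to ℕ+ using h
    rw [pos_coe]; simp [hPar]

theorem hPar_sum {ι : Type*} (s : Finset ι) (a : ι → Multiset ℕ+) :
    hPar (R := R) (∑ i ∈ s, a i) = ∏ i ∈ s, hPar (a i) := by
  classical
  induction s using Finset.induction_on with
  | empty => rfl
  | insert i s hi ih => rw [Finset.sum_insert hi, Finset.prod_insert hi, hPar_add, ih]

/-- Span of the `h_κ` with `κ > λ` of the same weight. -/
def Ugt (R : Type) [Field R] (lam : Multiset ℕ+) : Submodule R (SymFn R) :=
  Submodule.span R ((hPar (R := R)) '' {ka | wt ka = wt lam ∧ key lam < key ka})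

theorem hPar_mem_Ugt {lam ka : Multiset ℕ+} (h1 : wt ka = wt lam) (h2 : key lam < key ka) :
    hPar ka ∈ Ugt R lam := Submodule.subset_span ⟨ka, ⟨h1, h2⟩, rfl⟩

theorem Ugt_mono {lam ka : Multiset ℕ+} (h1 : wt ka = wt lam) (h2 : key lam ≤ key ka) :
    Ugt R ka ≤ Ugt R lam := by
  apply Submodule.span_mono
  apply Set.image_mono
  rintro m ⟨hm1, hm2⟩
  exact ⟨hm1.trans h1, lt_of_le_of_lt h2 hm2⟩

theorem det_triangular (lam : Multiset ℕ+)
    (c : Fin (Multiset.card lam) → Fin (Multiset.card lam) → R) :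
    Matrix.det (Matrix.of fun i j : Fin (Multiset.card lam) =>
      C (c i j) * hInt (R := R) (((part lam i : ℤ) - (i : ℤ)) + (j : ℤ))) -
      C (∏ i, c i i) * hPar lam ∈ Ugt R lam := by
  classical
  rw [← Matrix.det_transpose, Matrix.det_apply, ← Finset.add_sum_erase _ _
    (Finset.mem_univ (1 : Equiv.Perm (Fin (Multiset.card lam))))]
  have e1 : ∏ i : Fin (Multiset.card lam), hInt (R := R) (((part lam i : ℤ) - (i : ℤ)) + (i : ℤ)) =
      hPar lam := by
    conv_rhs => rw [← sum_pos_part lam]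
    rw [hPar_sum]
    apply Finset.prod_congr rfl
    intro i _
    rw [hPar_pos, sub_add_cancel]
    simp [hInt]
  simp only [Equiv.Perm.sign_one, one_smul, Matrix.transpose_apply, Equiv.Perm.one_apply,
    Matrix.of_apply, Finset.prod_mul_distrib, ← map_prod, e1]
  rw [add_sub_cancel_left]
  apply Submodule.sum_mem
  intro σ hσ
  have hσ : σ ≠ 1 := Finset.ne_of_mem_erase hσ
  rw [Units.smul_def, ← Int.cast_smul_eq_zsmul R, ← smul_eq_C_mul]
  apply Submodule.smul_mem
  apply Submodule.smul_mem
  by_cases hneg : ∃ i : Fin (Multiset.card lam), ((part lam i : ℤ) - (i : ℤ)) + (σ i : ℤ) < 0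
  · obtain ⟨i, hi⟩ := hneg
    rw [Finset.prod_eq_zero (Finset.mem_univ i) (by rw [hInt, if_neg (by omega)])]
    exact Submodule.zero_mem _
  · push Not at hneg
    set b : Fin (Multiset.card lam) → ℕ := fun i =>
      (((part lam i : ℤ) - (i : ℤ)) + (σ i : ℤ)).toNat with hb
    have hb' : ∀ i, (b i : ℤ) = ((part lam i : ℤ) - (i : ℤ)) + (σ i : ℤ) := fun i =>
      Int.toNat_of_nonneg (hneg i)
    have e2 : ∏ i : Fin (Multiset.card lam),
        hInt (R := R) (((part lam i : ℤ) - (i : ℤ)) + (σ i : ℤ)) =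
        hPar (∑ i, pos (b i)) := by
      rw [hPar_sum]
      apply Finset.prod_congr rfl
      intro i _
      rw [hPar_pos, ← hb' i]; simp [hInt]
    rw [e2]
    apply hPar_mem_Ugt
    · rw [wt_sum, wt_eq_sum_part]
      simp only [wt_pos]
      zify
      simp only [hb', Finset.sum_add_distrib, Finset.sum_sub_distrib]
      have := Equiv.sum_comp σ (fun i => ((i : ℕ) : ℤ))
      rw [this]; ring
    · obtain ⟨i1, hi1⟩ : ∃ i, σ i ≠ i := by
        by_contra h; push Not at h; exact hσ (Equiv.ext h)
      have hne : (Finset.univ.filter (fun i => σ i ≠ i)).Nonempty := ⟨i1, by simpa using hi1⟩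
      set i0 := (Finset.univ.filter (fun i => σ i ≠ i)).min' hne with hi0
      have h0 : σ i0 ≠ i0 := by
        have := Finset.min'_mem _ hne
        simpa using this
      have hlt : ∀ i < i0, σ i = i := by
        intro i hi
        by_contra h
        exact absurd (Finset.min'_le _ i (by simpa using h)) (not_le.2 hi)
      have hgt : i0 < σ i0 := by
        rcases lt_trichotomy i0 (σ i0) with h | h | h
        · exact h
        · exact absurd h.symm h0
        · have := hlt _ h
          exact absurd (σ.injective this) h0
      conv_lhs => rw [← sum_pos_part lam]
      apply key_lt_of_first _ _ i0
      · intro i hi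
        have := hb' i
        rw [hlt i hi] at this
        omega
      · intro i hi
        have h1 := hb' i0
        have h2 : (i0 : ℕ) < (σ i0 : ℕ) := hgt
        have h3 := part_anti (lam := lam) (show (i0 : ℕ) ≤ (i : ℕ) from hi)
        omega

theorem schur_eq (lam : Multiset ℕ+) : schur (R := R) lam =
    Matrix.det (Matrix.of fun i j : Fin (Multiset.card lam) =>
      hInt (R := R) (((part lam i : ℤ) - (i : ℤ)) + (j : ℤ))) := by
  rw [schur]
  congr 1
  ext1 i j
  simp only [Matrix.of_apply, part]
  congr 1
  ring

theorem schur_sub_mem (lam : Multiset ℕ+) : schur lam - hPar lam ∈ Ugt R lam := by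
  have := det_triangular (R := R) lam (fun _ _ => 1)
  rw [schur_eq]
  simpa using this

/-- The shifted operator. -/
def TT (q u : R) : SymFn R →ₗ[R] SymFn R := DD u (Gq q) - LinearMap.id

theorem TT_apply (q u : R) (f) : TT q u f = DD u (Gq q) f - f := rfl

/-- Eigenvalue. -/
def EE {A : Type} [CommRing A] (q u : A) (lam : Multiset ℕ+) : A :=
  (1 - u) * ∑ r : Fin (Multiset.card lam), u ^ (r : ℕ) * (q ^ part lam r - 1)

theorem TT_schur [CharZero R] (q u : R) (lam : Multiset ℕ+) :
    TT q u (schur lam) - EE q u lam • hPar lam ∈ Ugt R lam := by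
  have h1 := DD_det q u _ (fun i : Fin (Multiset.card lam) => ((part lam i : ℤ) - (i : ℤ)))
  rw [← schur_eq] at h1
  rw [TT_apply, h1, add_sub_cancel_left, EE, smul_eq_C_mul, Finset.mul_sum, map_sum,
    Finset.sum_mul, ← Finset.sum_sub_distrib]
  apply Submodule.sum_mem
  intro r _
  have h2 := det_triangular (R := R) lam
    (fun i j => if j = r then q ^ (((part lam i : ℤ) - (i : ℤ)) + (j : ℤ)).toNat else 1)
  have e1 : (Matrix.of fun i j : Fin (Multiset.card lam) =>
      C (if j = r then q ^ (((part lam i : ℤ) - (i : ℤ)) + (j : ℤ)).toNat else 1) *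
        hInt (R := R) (((part lam i : ℤ) - (i : ℤ)) + (j : ℤ))) =
      (Matrix.of fun i j : Fin (Multiset.card lam) =>
        hInt (R := R) (((part lam i : ℤ) - (i : ℤ)) + (j : ℤ))).updateCol r
        (fun i => C (q ^ (((part lam i : ℤ) - (i : ℤ)) + (r : ℤ)).toNat) *
          hInt (R := R) (((part lam i : ℤ) - (i : ℤ)) + (r : ℤ))) := by
    ext1 i j
    by_cases hj : j = r
    · subst hj; simp
    · simp [hj]
  have e2 : (∏ i : Fin (Multiset.card lam),
      if i = r then q ^ (((part lam i : ℤ) - (i : ℤ)) + (i : ℤ)).toNat else 1) =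
      q ^ part lam r := by
    rw [Finset.prod_ite_eq']
    simp
  rw [e1, e2] at h2
  have h3 := schur_sub_mem (R := R) lam
  have h4 := Submodule.smul_mem _ ((1 - u) * u ^ (r : ℕ)) (Submodule.sub_mem _ h2 h3)
  rw [smul_eq_C_mul] at h4
  convert h4 using 1
  simp only [map_mul, map_sub, map_one]
  ring

theorem TT_hPar [CharZero R] (q u : R) (lam : Multiset ℕ+) :
    TT q u (hPar lam) - EE q u lam • hPar lam ∈ Ugt R lam := by
  induction lam using key_induction with
  | H lam ih =>
    have hU : ∀ f ∈ Ugt R lam, TT q u f ∈ Ugt R lam := by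
      intro f hf
      induction hf using Submodule.span_induction with
      | mem x hx =>
        obtain ⟨ka, ⟨hk1, hk2⟩, rfl⟩ := hx
        have h1 := Ugt_mono hk1 hk2.le (ih ka hk1 hk2)
        have h2 := Submodule.smul_mem _ (EE q u ka) (hPar_mem_Ugt (R := R) hk1 hk2)
        simpa using Submodule.add_mem _ h1 h2
      | zero => simp
      | add x y _ _ hx hy => rw [map_add]; exact Submodule.add_mem _ hx hy
      | smul a x _ hx => rw [map_smul]; exact Submodule.smul_mem _ _ hx
    have h1 := hU _ (schur_sub_mem lam)
    have h2 := TT_schur q u lam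
    rw [map_sub] at h1
    convert Submodule.sub_mem _ h2 h1 using 1
    abel

theorem TT_Ugt [CharZero R] (q u : R) (lam : Multiset ℕ+) {f : SymFn R} (hf : f ∈ Ugt R lam) :
    TT q u f ∈ Ugt R lam := by
  induction hf using Submodule.span_induction with
  | mem x hx =>
    obtain ⟨ka, ⟨hk1, hk2⟩, rfl⟩ := hx
    have h1 := Ugt_mono hk1 hk2.le (TT_hPar q u ka)
    have h2 := Submodule.smul_mem _ (EE q u ka) (hPar_mem_Ugt (R := R) hk1 hk2)
    simpa using Submodule.add_mem _ h1 h2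
  | zero => simp
  | add x y _ _ hx hy => rw [map_add]; exact Submodule.add_mem _ hx hy
  | smul a x _ hx => rw [map_smul]; exact Submodule.smul_mem _ _ hx

end

end QP

end

noncomputable section

namespace QP

/-! ### Bilinear forms -/

section forms
variable {A : Type} [CommRing A]

/-- weight of a monomial -/
def zw (w : ℕ+ → A) (m : ℕ+ →₀ ℕ) : A := m.prod fun k e => (Nat.factorial e : A) * w k ^ e

/-- The diagonal form. -/
def formB (w : ℕ+ → A) : SymFn A →ₗ[A] SymFn A →ₗ[A] A :=
  (basisMonomials ℕ+ A).constr A (fun m => zw w m • lcoeff A m)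

theorem formB_monomial (w : ℕ+ → A) (m : ℕ+ →₀ ℕ) (a : A) (g : SymFn A) :
    formB w (monomial m a) g = a * (zw w m * coeff m g) := by
  have e : (monomial m a : SymFn A) = a • basisMonomials ℕ+ A m := by
    simp [coe_basisMonomials, smul_monomial]
  rw [e, map_smul, formB, Module.Basis.constr_basis]
  simp

theorem formB_eq_sum (w : ℕ+ → A) (f g : SymFn A) :
    formB w f g = ∑ m ∈ f.support, coeff m f * coeff m g * zw w m := by
  conv_lhs => rw [f.as_sum, map_sum, LinearMap.sum_apply]
  apply Finset.sum_congr rfl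
  intro m _
  rw [formB_monomial]; ring

theorem formB_comm (w : ℕ+ → A) (f g : SymFn A) : formB w f g = formB w g f := by
  induction f using MvPolynomial.induction_on' with
  | add p q hp hq => rw [map_add, map_add, LinearMap.add_apply, hp, hq]
  | monomial m a =>
    induction g using MvPolynomial.induction_on' with
    | add p q hp hq => rw [map_add, map_add, LinearMap.add_apply, hp, hq]
    | monomial n b =>
      classical
      rw [formB_monomial, formB_monomial, coeff_monomial, coeff_monomial]
      by_cases h : n = m
      · subst h; simp; ring
      · simp [h, Ne.symm h]

theorem zw_add_single (w : ℕ+ → A) (m : ℕ+ →₀ ℕ) (k : ℕ+) :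
    zw w (m + Finsupp.single k 1) = zw w m * (w k * ((m k : A) + 1)) := by
  classical
  rw [zw, zw, ← Finsupp.mul_prod_erase' (m + Finsupp.single k 1) k _ (by simp),
    ← Finsupp.mul_prod_erase' m k _ (by simp), Finsupp.erase_add, Finsupp.erase_single, add_zero]
  simp only [Finsupp.add_apply, Finsupp.single_eq_same, Nat.factorial_succ, pow_succ]
  push_cast
  ring

theorem formB_X_mul (w : ℕ+ → A) (k : ℕ+) (f g : SymFn A) :
    formB w (X k * f) g = w k * formB w f (pderiv k g) := by
  induction f using MvPolynomial.induction_on' with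
  | add p q hp hq => rw [mul_add, map_add, map_add, LinearMap.add_apply, LinearMap.add_apply, hp, hq]; ring
  | monomial m a =>
    have e : (X k * monomial m a : SymFn A) = monomial (m + Finsupp.single k 1) a := by
      rw [mul_comm, X, monomial_mul, mul_one]
    rw [e, formB_monomial, formB_monomial, zw_add_single, coeff_pderiv]
    ring

theorem formB_nondeg [IsDomain A] [CharZero A] {w : ℕ+ → A} (hw : ∀ k, w k ≠ 0) {f : SymFn A}
    (h : ∀ g, formB w f g = 0) : f = 0 := by
  ext m
  have := h (monomial m 1)
  rw [formB_comm, formB_monomial, one_mul] at this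
  rw [coeff_zero]
  refine (mul_eq_zero.1 this).resolve_left ?_
  rw [zw, Finsupp.prod]
  apply Finset.prod_ne_zero_iff.2
  intro k _
  apply mul_ne_zero
  · exact_mod_cast Nat.factorial_ne_zero _
  · exact pow_ne_zero _ (hw k)

theorem tau_deriv (d : ℕ+ → A) (N : ℕ) (g : SymFn A) :
    Polynomial.X ^ N ∣ Polynomial.derivative (tau d g) - ∑ i ∈ Finset.range N,
      Polynomial.C (C (((i : A) + 1) * d (Nat.succPNat i))) * Polynomial.X ^ i *
        tau d (pderiv (Nat.succPNat i) g) := by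
  induction g using MvPolynomial.induction_on with
  | C a => simp [tau_C]
  | add p q hp hq =>
    have := dvd_add hp hq
    convert this using 1
    simp only [map_add, mul_add, Finset.sum_add_distrib]
    ring
  | mul_X p k hp =>
    classical
    have h1 := Dvd.dvd.mul_right hp (tau d (X k))
    have e : ∀ i : ℕ, tau d (pderiv (Nat.succPNat i) (p * X k)) =
        tau d (pderiv (Nat.succPNat i) p) * tau d (X k) +
          if k = Nat.succPNat i then tau d p else 0 := by
      intro i
      rw [Derivation.leibniz, map_add, smul_eq_mul, smul_eq_mul, map_mul, map_mul, add_comm,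
        mul_comm (tau d (X k)), pderiv_X]
      congr 1
      by_cases h : k = Nat.succPNat i
      · subst h; simp
      · simp [h]
    simp only [e, mul_add, Finset.sum_add_distrib]
    rw [map_mul, Polynomial.derivative_mul]
    have e2 : Polynomial.derivative (tau d (X k)) =
      Polynomial.C (C (((k : ℕ) : A) * d k)) * Polynomial.X ^ ((k : ℕ) - 1) := by
      rw [tau_X]
      simp only [Polynomial.derivative_add, Polynomial.derivative_C, zero_add,
        Polynomial.derivative_C_mul, Polynomial.derivative_X_pow]
      simp
      ring
    have h2 : Polynomial.X ^ N ∣ tau d p * Polynomial.derivative (tau d (X k)) -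
      ∑ i ∈ Finset.range N, Polynomial.C (C (((i : A) + 1) * d (Nat.succPNat i))) *
        Polynomial.X ^ i * (if k = Nat.succPNat i then tau d p else 0) := by
      obtain ⟨j, rfl⟩ : ∃ j, k = Nat.succPNat j := ⟨k.natPred, (PNat.succPNat_natPred k).symm⟩
      have e3 : ∀ i, (Nat.succPNat j = Nat.succPNat i) = (j = i) := by
        intro i; simp [Nat.succPNat_inj]
      simp only [e3]
      rw [e2]
      simp only [mul_ite, mul_zero, Finset.sum_ite_eq, Finset.mem_range, Nat.succPNat_coe,
        Nat.succ_eq_add_one, Nat.add_sub_cancel, Nat.cast_add, Nat.cast_one]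
      split_ifs with h
      · apply Dvd.intro 0; ring
      · rw [sub_zero]
        apply Dvd.dvd.mul_left
        apply Dvd.dvd.mul_left
        exact pow_dvd_pow _ (by omega)
    convert dvd_add h1 h2 using 1
    rw [sub_mul, Finset.sum_mul]
    simp only [mul_assoc]
    ring

theorem coeff_tau_succ (d : ℕ+ → A) (n : ℕ) (g : SymFn A) :
    ((n : SymFn A) + 1) * (tau d g).coeff (n + 1) = ∑ i ∈ Finset.range (n + 1),
      C (((i : A) + 1) * d (Nat.succPNat i)) *
        (tau d (pderiv (Nat.succPNat i) g)).coeff (n - i) := by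
  obtain ⟨r, hr⟩ := tau_deriv d (n + 1) g
  have h1 := congrArg (fun p => Polynomial.coeff p n) hr
  simp only [Polynomial.coeff_sub, Polynomial.coeff_derivative, Polynomial.finset_sum_coeff] at h1
  rw [Polynomial.coeff_X_pow_mul', if_neg (by omega), sub_eq_zero] at h1
  rw [mul_comm, h1]
  apply Finset.sum_congr rfl
  intro i hi
  have hi := Finset.mem_range.1 hi
  rw [mul_assoc, Polynomial.coeff_C_mul, Polynomial.coeff_X_pow_mul', if_pos (by omega)]

theorem coeff_tau_zero (d : ℕ+ → A) (g : SymFn A) : (tau d g).coeff 0 = g := by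
  induction g using MvPolynomial.induction_on with
  | C a => simp [tau_C]
  | add p q hp hq => rw [map_add, Polynomial.coeff_add, hp, hq]
  | mul_X p k hp =>
    rw [map_mul, Polynomial.mul_coeff_zero, hp, tau_X]
    have := k.pos.ne
    simp [this]

/-- Adjointness of multiplication and translation. -/
theorem formB_newton_mul [IsDomain A] [CharZero A] {w c d : ℕ+ → A} {H : ℕ → SymFn A}
    (hH : IsNewton (fun i => C (c (Nat.succPNat i)) * xs A i) H)
    (hd : ∀ k : ℕ+, ((k : ℕ) : A) * d k = c k * w k) (n : ℕ) (f g : SymFn A) :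
    formB w (H n * f) g = formB w f ((tau d g).coeff n) := by
  induction n using Nat.strong_induction_on generalizing g with
  | _ n ih =>
    cases n with
    | zero => rw [hH.1, one_mul, coeff_tau_zero]
    | succ n =>
      have hn : ((n : A) + 1) ≠ 0 := by exact_mod_cast Nat.succ_ne_zero n
      apply mul_left_cancel₀ hn
      have e1 : ((n : A) + 1) * formB w (H (n + 1) * f) g =
          formB w ((((n : SymFn A) + 1) * H (n + 1)) * f) g := by
        have : ((n : SymFn A) + 1) = C ((n : A) + 1) := by simp
        rw [this, mul_assoc, ← smul_eq_C_mul, map_smul]; rfl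
      have e2 : ((n : A) + 1) * formB w f ((tau d g).coeff (n + 1)) =
          formB w f (((n : SymFn A) + 1) * (tau d g).coeff (n + 1)) := by
        have : ((n : SymFn A) + 1) = C ((n : A) + 1) := by simp
        rw [this, ← smul_eq_C_mul, map_smul]; rfl
      rw [e1, e2, coeff_tau_succ, hH.2, Finset.sum_mul, map_sum, map_sum, LinearMap.sum_apply]
      apply Finset.sum_congr rfl
      intro i hi
      have e3 : C (c (Nat.succPNat i)) * xs A i * H (n - i) * f =
        c (Nat.succPNat i) • (X (Nat.succPNat i) * (H (n - i) * f)) := by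
        rw [smul_eq_C_mul, xs]; ring
      rw [e3, map_smul, LinearMap.smul_apply, formB_X_mul, ih (n - i) (by omega),
        ← smul_eq_C_mul, map_smul, smul_eq_mul, smul_eq_mul]
      have := hd (Nat.succPNat i)
      rw [Nat.succPNat_coe, Nat.succ_eq_add_one] at this
      push_cast at this
      rw [this]; ring

theorem tau_comp (t : A) (d : ℕ+ → A) (g : SymFn A) (n : ℕ) :
    (tau (fun k => t ^ (k : ℕ) * d k) g).coeff n = t ^ n • (tau d g).coeff n := by
  have : tau (fun k => t ^ (k : ℕ) * d k) g =
      (tau d g).comp (Polynomial.C (C t) * Polynomial.X) := by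
    induction g using MvPolynomial.induction_on with
    | C a => simp [tau_C]
    | add p q hp hq => rw [map_add, map_add, Polynomial.add_comp, hp, hq]
    | mul_X p k hp =>
      rw [map_mul, map_mul, Polynomial.mul_comp, hp, tau_X, tau_X]
      congr 1
      simp [mul_pow]
      ring
  rw [this, Polynomial.comp_C_mul_X_coeff, smul_eq_C_mul, map_pow, mul_comm]

theorem coeff_scaleHom' {R : Type} [Field R] (g : ℕ+ → R) (m : ℕ+ →₀ ℕ) (a : R) :
    scaleHom g (monomial m a) = monomial m (a * m.prod fun k e => g k ^ e) := by
  rw [scaleHom, aeval_monomial, MvPolynomial.algebraMap_eq, monomial_eq, map_mul, Finsupp.prod,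
    Finsupp.prod, Finsupp.prod, mul_assoc, map_prod, ← Finset.prod_mul_distrib]
  congr 1
  apply Finset.prod_congr rfl
  intro k _
  rw [mul_pow, map_pow]

theorem formB_scaleHom {R : Type} [Field R] (w g : ℕ+ → R) (f h : SymFn R) :
    formB w (scaleHom g f) h = formB (fun k => w k * g k) f h := by
  induction f using MvPolynomial.induction_on' with
  | add p q hp hq => rw [map_add, map_add, map_add, LinearMap.add_apply, LinearMap.add_apply, hp, hq]
  | monomial m a =>
    rw [coeff_scaleHom', formB_monomial, formB_monomial]
    have : zw (fun k => w k * g k) m = (m.prod fun k e => g k ^ e) * zw w m := by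
      simp only [zw, Finsupp.prod]
      rw [← Finset.prod_mul_distrib]
      apply Finset.prod_congr rfl
      intro k _
      rw [mul_pow]; ring
    rw [this]; ring

theorem innerQT_eq {R : Type} [Field R] (q t : R) (f g : SymFn R) :
    innerQT q t f g =
      formB (fun k => ((k : ℕ) : R) * ((1 - q ^ (k : ℕ)) / (1 - t ^ (k : ℕ)))) f g := by
  rw [innerQT, formB_eq_sum]
  apply Finset.sum_congr rfl
  intro m _
  congr 1
  simp only [zwtQT, zw, Finsupp.prod]
  apply Finset.prod_congr rfl
  intro k _
  rw [mul_pow]; ring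

/-- Self-adjointness of `D`. -/
theorem DD_symm {R : Type} [Field R] [CharZero R] (q t : R) (ht : t ≠ 0)
    (hq : ∀ k : ℕ+, 1 - q ^ (k : ℕ) ≠ 0) (f g : SymFn R) :
    formB (fun k => ((k : ℕ) : R) * ((1 - t ^ (k : ℕ)) / (1 - q ^ (k : ℕ)))) (DD t⁻¹ (Gq q) f) g =
    formB (fun k => ((k : ℕ) : R) * ((1 - t ^ (k : ℕ)) / (1 - q ^ (k : ℕ)))) f
      (DD t⁻¹ (Gq q) g) := by
  set w : ℕ+ → R := fun k => ((k : ℕ) : R) * ((1 - t ^ (k : ℕ)) / (1 - q ^ (k : ℕ))) with hw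
  set d : ℕ+ → R := fun k => 1 - t⁻¹ ^ (k : ℕ) with hd
  have main : ∀ f g : SymFn R, ∀ N, (tau d f).natDegree < N → formB w (DD t⁻¹ (Gq q) f) g =
      ∑ n ∈ Finset.range N, t ^ n * formB w ((tau d f).coeff n) ((tau d g).coeff n) := by
    intro f g N hN
    rw [DD_apply, ell_apply, Polynomial.sum_over_range' _ _ N hN, map_sum, LinearMap.sum_apply]
    · apply Finset.sum_congr rfl
      intro n _
      have hd' : ∀ k : ℕ+, ((k : ℕ) : R) * (t ^ (k : ℕ) * d k) = (q ^ (k : ℕ) - 1) * w k := by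
        intro k
        have h1 : t ^ (k : ℕ) * d k = t ^ (k : ℕ) - 1 := by
          rw [hd]
          simp only [inv_pow]
          have := pow_ne_zero (k : ℕ) ht
          field_simp
        rw [h1, hw]
        have := hq k
        simp only
        field_simp
        ring
      have h2 : IsNewton (fun i => C ((fun k : ℕ+ => q ^ (k : ℕ) - 1) (Nat.succPNat i)) * xs R i)
        (Gq q) := isNewton_Gq q
      have h3 := formB_newton_mul (w := w) (c := fun k : ℕ+ => q ^ (k : ℕ) - 1)
        (d := fun k => t ^ (k : ℕ) * d k) h2 hd' n ((tau d f).coeff n) g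
      rw [tau_comp, map_smul, smul_eq_mul] at h3
      rw [← h3, mul_comm]
    · intro n; simp
  rw [main f g (max (tau d f).natDegree (tau d g).natDegree + 1) (by omega), formB_comm w f,
    main g f (max (tau d f).natDegree (tau d g).natDegree + 1) (by omega)]
  apply Finset.sum_congr rfl
  intro n _
  rw [formB_comm]

end forms

end QP

end

noncomputable section

namespace QP

/-! ### Kostka triangularity and leading terms -/

section kostka
variable {R : Type} [Field R] [CharZero R]

/-- The Hall form. -/
def hall (R : Type) [Field R] : SymFn R →ₗ[R] SymFn R →ₗ[R] R := formB (fun k => ((k : ℕ) : R))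

theorem hall_hsym_mul (n : ℕ) (f g : SymFn R) :
    hall R (hsym n * f) g = hall R f ((tau (fun _ => (1 : R)) g).coeff n) := by
  apply formB_newton_mul (c := fun _ => 1)
  · simpa using isNewton_hsym (R := R)
  · intro k; ring

/-- Jacobi–Trudi determinants. -/
def SS (R : Type) [Field R] (n : ℕ) (a : ℕ → ℕ) : SymFn R :=
  Matrix.det (Matrix.of fun i j : Fin n => hInt (R := R) (((a i : ℤ) - (i : ℤ)) + (j : ℤ)))

theorem schur_eq_SS (lam : Multiset ℕ+) :
    schur (R := R) lam = SS R (Multiset.card lam) (part lam) := schur_eq lam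

theorem coeff_Kz (m : ℤ) (k : ℕ) : (Kz (R := R) m).coeff k = hInt (m - k) := by
  rw [Kz, Polynomial.finset_sum_coeff]
  simp only [Polynomial.coeff_mul_C, Polynomial.coeff_X_pow, ite_mul, one_mul, zero_mul,
    Finset.sum_ite_eq, Finset.mem_range]
  split_ifs with h
  · rfl
  · rw [hInt_neg (by omega)]

theorem coeff_tau_SS (n : ℕ) (a : ℕ → ℕ) (ha : ∀ i, a i ≤ a 0) (k : ℕ) (hk : a 0 ≤ k) :
    (tau (fun _ => (1 : R)) (SS R (n + 1) a)).coeff k =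
      if k = a 0 then SS R n (fun i => a (i + 1)) else 0 := by
  set M : Matrix (Fin (n + 1)) (Fin (n + 1)) (SymFn R) :=
    Matrix.of fun i j => hInt (R := R) (((a i : ℤ) - (i : ℤ)) + (j : ℤ)) with hM
  have e1 : tau (fun _ => (1 : R)) M.det =
      (Matrix.of fun i j => tau (fun _ => (1 : R)) (M i j)).det := by
    have := (tau (fun _ => (1 : R))).map_det M
    rw [this]; rfl
  have e2 : (Matrix.of fun i j => tau (fun _ => (1 : R)) (M i j)).det =
      ((M.map Polynomial.C).updateCol 0 (fun i => Kz ((a i : ℤ) - (i : ℤ)))).det := by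
    apply Matrix.det_eq_of_forall_col_eq_smul_add_pred (fun _ => Polynomial.X)
    · intro i
      simp [hM, tau_one_hInt]
    · intro i j
      rw [Matrix.updateCol_ne (Fin.succ_ne_zero j)]
      simp only [Matrix.of_apply, Matrix.map_apply, hM, tau_one_hInt, Fin.val_succ,
        Fin.val_castSucc, Nat.cast_add, Nat.cast_one, ← add_assoc]
      rw [Kz_rec, add_sub_cancel_right]
  have e3 : SS R (n + 1) a = M.det := rfl
  rw [e3, e1, e2]
  have e4 := linear_det_updateCol (L := Polynomial.lcoeff (SymFn R) k) M 0
    (fun i => Kz ((a i : ℤ) - (i : ℤ)))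
  rw [Polynomial.lcoeff_apply] at e4
  rw [e4]
  simp only [Polynomial.lcoeff_apply, coeff_Kz]
  rw [Matrix.det_succ_column_zero, Fin.sum_univ_succ]
  rw [Finset.sum_eq_zero]
  · simp only [Fin.val_zero, pow_zero, one_mul, Matrix.updateCol_self, add_zero]
    have e5 : ((M.updateCol 0 (fun i => hInt ((a i : ℤ) - (i : ℤ) - k))).submatrix
        (Fin.succAbove 0) Fin.succ).det = SS R n (fun i => a (i + 1)) := by
      rw [SS]
      congr 1
      ext1 i j
      rw [Matrix.submatrix_apply, Matrix.updateCol_ne (Fin.succ_ne_zero j)]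
      simp only [Matrix.of_apply, hM, Fin.zero_succAbove, Fin.val_succ, Nat.cast_add,
        Nat.cast_one]
      congr 1; ring
    rw [e5]
    split_ifs with h
    · have : (a 0 : ℤ) - ((0 : ℕ) : ℤ) - k = ((0 : ℕ) : ℤ) := by omega
      rw [this, hInt_natCast, hsym_zero, one_mul]
    · rw [hInt_neg (by omega), zero_mul]
  · intro i _
    have := ha (i.succ : Fin (n + 1))
    rw [Matrix.updateCol_self, hInt_neg, mul_zero, zero_mul]
    have : (i.succ : ℕ) = i + 1 := Fin.val_succ i
    omega

theorem tau_SS_zero (a : ℕ → ℕ) (d : ℕ+ → R) (k : ℕ) (hk : 0 < k) :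
    (tau d (SS R 0 a)).coeff k = 0 := by
  have : SS R 0 a = 1 := by simp [SS]
  rw [this, map_one, Polynomial.coeff_one, if_neg (by omega)]

/-- The function of a list. -/
def lfun (L : List ℕ+) (i : ℕ) : ℕ := (L.map (fun a : ℕ+ => (a : ℕ))).getD i 0

theorem kostka_list : ∀ (L1 L2 : List ℕ+), L1.Pairwise (· ≥ ·) → L2.Pairwise (· ≥ ·) →
    key (L2 : Multiset ℕ+) ≤ key (L1 : Multiset ℕ+) →
    hall R (hPar (L1 : Multiset ℕ+)) (SS R L2.length (lfun L2)) = if L1 = L2 then 1 else 0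
  | [], [], _, _, _ => by
      have h1 : hPar (R := R) (([] : List ℕ+) : Multiset ℕ+) = 1 := rfl
      have h2 : SS R 0 (lfun []) = 1 := by simp [SS]
      rw [List.length_nil, h1, h2, hall]
      have h3 : (1 : SymFn R) = monomial 0 1 := rfl
      conv_lhs => rw [h3]
      rw [formB_monomial]
      simp [zw]
  | [], b :: L2, _, _, h => by
      exfalso
      refine absurd (key_lt_of_mem (a := 0) (b := ((b :: L2 : List ℕ+) : Multiset ℕ+)) (x := b)
        (by simp) (by simp)) (not_lt.2 h)
  | a :: L1, [], _, _, _ => by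
      rw [← Multiset.cons_coe, ← Multiset.singleton_add, hPar_add, ← pos_coe, hPar_pos,
        hall_hsym_mul, List.length_nil, tau_SS_zero _ _ _ a.pos]
      simp
  | a :: L1, b :: L2, h1, h2, h => by
      have hab : b ≤ a := by
        by_contra hlt
        push Not at hlt
        refine absurd (key_lt_of_mem (a := ((a :: L1 : List ℕ+) : Multiset ℕ+))
          (b := ((b :: L2 : List ℕ+) : Multiset ℕ+)) (x := b) (by simp) ?_) (not_lt.2 h)
        intro y hy
        rw [Multiset.mem_coe, List.mem_cons] at hy
        rcases hy with rfl | hy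
        · exact hlt
        · exact lt_of_le_of_lt ((List.pairwise_cons.1 h1).1 y hy) hlt
      have hz : lfun (b :: L2) 0 = b := rfl
      have hs : (fun i => lfun (b :: L2) (i + 1)) = lfun L2 := rfl
      rw [← Multiset.cons_coe, ← Multiset.singleton_add, hPar_add, ← pos_coe, hPar_pos,
        hall_hsym_mul, List.length_cons, coeff_tau_SS, hz, hs]
      · by_cases e : a = b
        · subst e
          rw [if_pos rfl, kostka_list L1 L2 (List.pairwise_cons.1 h1).2 (List.pairwise_cons.1 h2).2]
          · simp
          · rw [← Multiset.cons_coe, ← Multiset.cons_coe, ← Multiset.singleton_add,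
              ← Multiset.singleton_add, key_add_le_iff] at h
            exact h
        · rw [if_neg (fun h => e (PNat.coe_inj.1 h)), if_neg (by simp [e])]
          simp
      · intro i
        rw [hz]
        cases i with
        | zero => exact le_of_eq hz
        | succ i =>
          have := congrFun hs i
          rw [this, lfun]
          by_cases hi : i < L2.length
          · rw [List.getD_eq_getElem _ _ (by simpa using hi)]
            simp only [List.getElem_map]
            exact (List.pairwise_cons.1 h2).1 _ (List.getElem_mem hi)
          · rw [List.getD_eq_default _ _ (by simpa using hi)]
            exact Nat.zero_le _
      · rw [hz]; exact hab

theorem kostka {ka mu : Multiset ℕ+} (h : key mu ≤ key ka) :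
    hall R (hPar ka) (schur mu) = if ka = mu then 1 else 0 := by
  have := kostka_list (R := R) (dl ka) (dl mu) (dl_sorted _) (dl_sorted _)
    (by rw [dl_coe, dl_coe]; exact h)
  rw [dl_coe, length_dl] at this
  have e : lfun (dl mu) = part mu := by
    funext i; rw [lfun, part, descParts_eq]
  rw [e, ← schur_eq_SS] at this
  rw [this]
  by_cases hk : ka = mu
  · simp [hk]
  · rw [if_neg hk, if_neg]
    intro hc; apply hk
    rw [← dl_coe ka, hc, dl_coe]

/-- Span of all `h_κ` with `κ > λ`. -/
def Vgt (R : Type) [Field R] (lam : Multiset ℕ+) : Submodule R (SymFn R) :=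
  Submodule.span R ((hPar (R := R)) '' {ka | key lam < key ka})

theorem hPar_mem_Vgt {lam ka : Multiset ℕ+} (h2 : key lam < key ka) :
    hPar ka ∈ Vgt R lam := Submodule.subset_span ⟨ka, h2, rfl⟩

theorem Vgt_mono {lam ka : Multiset ℕ+} (h2 : key lam ≤ key ka) :
    Vgt R ka ≤ Vgt R lam := by
  apply Submodule.span_mono
  apply Set.image_mono
  intro m hm2
  exact lt_of_le_of_lt h2 hm2

theorem Ugt_le_Vgt {lam : Multiset ℕ+} : Ugt R lam ≤ Vgt R lam := by
  apply Submodule.span_mono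
  apply Set.image_mono
  intro m hm
  exact hm.2

theorem hall_Vgt_schur {lam mu : Multiset ℕ+} (h : key mu ≤ key lam) {f : SymFn R}
    (hf : f ∈ Vgt R lam) : hall R f (schur mu) = 0 := by
  induction hf using Submodule.span_induction with
  | mem x hx =>
    obtain ⟨ka, hk, rfl⟩ := hx
    have hk : key lam < key ka := hk
    rw [kostka (h.trans hk.le), if_neg]
    rintro rfl
    exact absurd hk (not_lt.2 h)
  | zero => simp
  | add x y _ _ hx hy => rw [map_add, LinearMap.add_apply, hx, hy, add_zero]
  | smul a x _ hx => rw [map_smul, LinearMap.smul_apply, hx, smul_zero]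

theorem TT_Vgt (q u : R) (lam : Multiset ℕ+) {f : SymFn R} (hf : f ∈ Vgt R lam) :
    TT q u f ∈ Vgt R lam := by
  induction hf using Submodule.span_induction with
  | mem x hx =>
    obtain ⟨ka, hk2, rfl⟩ := hx
    have hk2 : key lam < key ka := hk2
    have h1 := Vgt_mono hk2.le (Ugt_le_Vgt (TT_hPar q u ka))
    have h2 := Submodule.smul_mem _ (EE q u ka) (hPar_mem_Vgt (R := R) hk2)
    simpa using Submodule.add_mem _ h1 h2
  | zero => simp
  | add x y _ _ hx hy => rw [map_add]; exact Submodule.add_mem _ hx hy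
  | smul a x _ hx => rw [map_smul]; exact Submodule.smul_mem _ _ hx

/-- `f` has leading term `c h_κ`. -/
def Lead (f : SymFn R) (ka : Multiset ℕ+) (c : R) : Prop := c ≠ 0 ∧ f - c • hPar ka ∈ Vgt R ka

theorem Lead.hall {f : SymFn R} {ka : Multiset ℕ+} {c : R} (h : Lead f ka c) :
    hall R f (schur ka) = c := by
  have := hall_Vgt_schur le_rfl h.2
  rw [map_sub, LinearMap.sub_apply, sub_eq_zero] at this
  rw [this, map_smul, LinearMap.smul_apply, kostka le_rfl]
  simp

theorem Lead.mem {f : SymFn R} {ka mu : Multiset ℕ+} {c : R} (h : Lead f ka c)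
    (hlt : key mu < key ka) : f ∈ Vgt R mu := by
  have := Submodule.add_mem _ (Vgt_mono hlt.le h.2)
    (Submodule.smul_mem _ c (hPar_mem_Vgt (R := R) hlt))
  simpa using this

theorem Lead.unique {f : SymFn R} {ka ka' : Multiset ℕ+} {c c' : R} (h : Lead f ka c)
    (h' : Lead f ka' c') : ka = ka' := by
  rcases lt_trichotomy (key ka) (key ka') with hlt | heq | hlt
  · exact absurd (h.hall.symm.trans (hall_Vgt_schur le_rfl (h'.mem hlt))) h.1
  · exact key_inj heq
  · exact absurd (h'.hall.symm.trans (hall_Vgt_schur le_rfl (h.mem hlt))) h'.1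

theorem Lead.ne_zero {f : SymFn R} {ka : Multiset ℕ+} {c : R} (h : Lead f ka c) : f ≠ 0 := by
  rintro rfl
  have := h.hall
  simp at this
  exact h.1 this.symm

theorem exists_lead {s : Set (Multiset ℕ+)} {f : SymFn R}
    (hf : f ∈ Submodule.span R (hPar (R := R) '' s)) (h0 : f ≠ 0) :
    ∃ ka ∈ s, ∃ c, Lead f ka c := by
  classical
  rw [Finsupp.mem_span_image_iff_linearCombination] at hf
  obtain ⟨x, hx, rfl⟩ := hf
  have hne : x.support.Nonempty := by
    rw [Finset.nonempty_iff_ne_empty]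
    intro h
    apply h0
    rw [Finsupp.support_eq_empty.1 h, map_zero]
  obtain ⟨ka, hka, hmin⟩ := Finset.exists_min_image x.support key hne
  refine ⟨ka, hx hka, x ka, Finsupp.mem_support_iff.1 hka, ?_⟩
  rw [Finsupp.linearCombination_apply, Finsupp.sum, ← Finset.add_sum_erase _ _ hka,
    add_sub_cancel_left]
  apply Submodule.sum_mem
  intro m hm
  apply Submodule.smul_mem
  apply hPar_mem_Vgt
  have h1 := hmin m (Finset.mem_of_mem_erase hm)
  exact lt_of_le_of_ne h1 (fun h => Finset.ne_of_mem_erase hm (key_inj h).symm)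

theorem span_hPar_mul_hsym {f : SymFn R} (hf : f ∈ Submodule.span R (Set.range (hPar (R := R))))
    (n : ℕ) : f * hsym n ∈ Submodule.span R (Set.range (hPar (R := R))) := by
  induction hf using Submodule.span_induction with
  | mem x hx =>
    obtain ⟨ka, rfl⟩ := hx
    rw [← hPar_pos, ← hPar_add]
    exact Submodule.subset_span ⟨_, rfl⟩
  | zero => simp
  | add x y _ _ hx hy => rw [add_mul]; exact Submodule.add_mem _ hx hy
  | smul a x _ hx => rw [smul_mul_assoc]; exact Submodule.smul_mem _ _ hx

theorem span_hPar_mul_X (n : ℕ) : ∀ {f : SymFn R},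
    (f ∈ Submodule.span R (Set.range (hPar (R := R)))) →
    f * xs R n ∈ Submodule.span R (Set.range (hPar (R := R))) := by
  induction n using Nat.strong_induction_on with
  | _ n ih =>
    intro f hf
    have h1 := (isNewton_hsym (R := R)).2 n
    rw [Finset.sum_range_succ, Nat.sub_self, hsym_zero, mul_one] at h1
    have e : f * xs R n = ((n : R) + 1) • (f * hsym (n + 1)) -
        ∑ i ∈ Finset.range n, (f * xs R i) * hsym (n - i) := by
      have h2 : ((n : SymFn R) + 1) = C ((n : R) + 1) := by simp
      rw [smul_eq_C_mul, ← h2]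
      have h3 : ∑ i ∈ Finset.range n, (f * xs R i) * hsym (n - i) =
        f * ∑ i ∈ Finset.range n, xs R i * hsym (n - i) := by
        rw [Finset.mul_sum]
        apply Finset.sum_congr rfl
        intro i _; ring
      rw [h3]
      linear_combination (-f) * h1
    rw [e]
    apply Submodule.sub_mem
    · exact Submodule.smul_mem _ _ (span_hPar_mul_hsym hf _)
    · apply Submodule.sum_mem
      intro i hi
      exact span_hPar_mul_hsym (ih i (Finset.mem_range.1 hi) hf) _

theorem mem_span_hPar (f : SymFn R) : f ∈ Submodule.span R (Set.range (hPar (R := R))) := by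
  induction f using MvPolynomial.induction_on with
  | C a =>
    have : (C a : SymFn R) = a • hPar 0 := by rw [hPar_zero, smul_eq_C_mul, mul_one]
    rw [this]
    exact Submodule.smul_mem _ _ (Submodule.subset_span ⟨_, rfl⟩)
  | add p q hp hq => exact Submodule.add_mem _ hp hq
  | mul_X p k hp =>
    have := span_hPar_mul_X k.natPred hp
    rwa [xs, PNat.succPNat_natPred] at this

theorem exists_lead' {f : SymFn R} (h0 : f ≠ 0) : ∃ ka c, Lead f ka c := by
  have := mem_span_hPar f
  rw [← Set.image_univ] at this
  obtain ⟨ka, _, c, h⟩ := exists_lead this h0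
  exact ⟨ka, c, h⟩

end kostka

end QP

end

noncomputable section

namespace QP

/-! ### Macdonald eigenvectors -/

section eigen
variable {R : Type} [Field R] [CharZero R] {q t : R} {P : Multiset ℕ+ → SymFn R}

theorem hall_comm (f g : SymFn R) : hall R f g = hall R g f := formB_comm _ _ _

theorem hall_P_le (hP : IsMacdonaldBasis q t P) {lam mu : Multiset ℕ+} (h : key mu ≤ key lam)
    {f : SymFn R} (hf : f ∈ Vgt R lam) : hall R f (P mu) = 0 := by
  have h1 : ∀ x ∈ Submodule.span R ((schur (R := R)) '' {ka | StrictDom ka mu}),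
      hall R f x = 0 := by
    intro x hx
    induction hx using Submodule.span_induction with
    | mem x hx =>
      obtain ⟨ka, hk, rfl⟩ := hx
      exact hall_Vgt_schur ((key_lt_of_strictDom hk).le.trans h) hf
    | zero => simp
    | add x y _ _ hx hy => rw [map_add, hx, hy, add_zero]
    | smul a x _ hx => rw [map_smul, hx, smul_zero]
  have h2 := h1 _ (hP.1 mu)
  rw [map_sub, hall_Vgt_schur h hf, sub_zero] at h2
  exact h2

theorem hall_hPar_P (hP : IsMacdonaldBasis q t P) (lam : Multiset ℕ+) :
    hall R (hPar lam) (P lam) = 1 := by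
  have h1 : ∀ x ∈ Submodule.span R ((schur (R := R)) '' {ka | StrictDom ka lam}),
      hall R (hPar lam) x = 0 := by
    intro x hx
    induction hx using Submodule.span_induction with
    | mem x hx =>
      obtain ⟨ka, hk, rfl⟩ := hx
      rw [kostka (key_lt_of_strictDom hk).le, if_neg]
      exact fun h => hk.1 h.symm
    | zero => simp
    | add x y _ _ hx hy => rw [map_add, hx, hy, add_zero]
    | smul a x _ hx => rw [map_smul, hx, smul_zero]
  have h2 := h1 _ (hP.1 lam)
  rw [map_sub, kostka le_rfl, if_pos rfl, sub_eq_zero] at h2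
  exact h2

theorem Lead.hallP (hP : IsMacdonaldBasis q t P) {f : SymFn R} {ka : Multiset ℕ+} {c : R}
    (h : Lead f ka c) : QP.hall R f (P ka) = c := by
  have := hall_P_le hP le_rfl h.2
  rw [map_sub, LinearMap.sub_apply, sub_eq_zero] at this
  rw [this, map_smul, LinearMap.smul_apply, hall_hPar_P hP]
  simp

/-- The scaled Macdonald polynomial. -/
def RR (q t : R) (P : Multiset ℕ+ → SymFn R) (lam : Multiset ℕ+) : SymFn R :=
  scaleHom (fun k => (1 - q ^ (k : ℕ)) / (1 - t ^ (k : ℕ))) (P lam)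

theorem hall_RR (lam : Multiset ℕ+) (g : SymFn R) :
    hall R (RR q t P lam) g = innerQT q t (P lam) g := by
  rw [hall, RR, formB_scaleHom, innerQT_eq]

theorem RR_lead (hP : IsMacdonaldBasis q t P) (hq : ∀ k : ℕ+, 1 - q ^ (k : ℕ) ≠ 0)
    (ht : ∀ k : ℕ+, 1 - t ^ (k : ℕ) ≠ 0) (lam : Multiset ℕ+) :
    Lead (RR q t P lam) lam (innerQT q t (P lam) (P lam)) := by
  have h0 : RR q t P lam ≠ 0 := by
    intro h
    have h1 : P lam = 0 := by
      apply formB_nondeg (w := fun k => ((k : ℕ) : R) * ((1 - q ^ (k : ℕ)) / (1 - t ^ (k : ℕ))))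
      · intro k
        exact mul_ne_zero (by exact_mod_cast k.ne_zero) (div_ne_zero (hq k) (ht k))
      · intro g
        rw [← innerQT_eq, ← hall_RR, h]; simp
    have h2 := hall_hPar_P hP lam
    rw [h1, map_zero] at h2
    exact zero_ne_one h2
  obtain ⟨ka, c, hc⟩ := exists_lead' h0
  have h1 := hc.hallP hP
  rw [hall_RR] at h1
  by_cases hk : ka = lam
  · subst hk; rw [h1]; exact hc
  · rw [hP.2 _ _ (Ne.symm hk)] at h1
    exact absurd h1.symm hc.1

theorem hall_P_eq (hq : ∀ k : ℕ+, 1 - q ^ (k : ℕ) ≠ 0)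
    (ht : ∀ k : ℕ+, 1 - t ^ (k : ℕ) ≠ 0) (lam : Multiset ℕ+) (x : SymFn R) :
    hall R (P lam) x =
    formB (fun k => ((k : ℕ) : R) * ((1 - t ^ (k : ℕ)) / (1 - q ^ (k : ℕ)))) (RR q t P lam) x := by
  rw [RR, formB_scaleHom, hall]
  congr 3
  funext k
  have := hq k
  have := ht k
  field_simp

theorem RR_eigen (hP : IsMacdonaldBasis q t P) (hq : ∀ k : ℕ+, 1 - q ^ (k : ℕ) ≠ 0)
    (ht : ∀ k : ℕ+, 1 - t ^ (k : ℕ) ≠ 0) (ht0 : t ≠ 0) (lam : Multiset ℕ+) :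
    TT q t⁻¹ (RR q t P lam) = EE q t⁻¹ lam • RR q t P lam := by
  have hL := RR_lead hP hq ht lam
  set c := innerQT q t (P lam) (P lam)
  have hD : TT q t⁻¹ (RR q t P lam) - EE q t⁻¹ lam • RR q t P lam ∈ Vgt R lam := by
    have h1 := TT_Vgt q t⁻¹ lam hL.2
    have h2 := Submodule.smul_mem _ (EE q t⁻¹ lam) hL.2
    have h3 := Submodule.smul_mem _ c (Ugt_le_Vgt (TT_hPar q t⁻¹ lam))
    have h4 := Submodule.add_mem _ (Submodule.sub_mem _ h1 h2) h3
    convert h4 using 1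
    rw [map_sub, map_smul]
    module
  by_contra hne
  obtain ⟨ka, d, hd⟩ := exists_lead' (sub_ne_zero.2 hne)
  have h1 := hd.hallP hP
  have hlt : key lam < key ka := by
    by_contra hc
    rw [hall_P_le hP (not_lt.1 hc) hD] at h1
    exact hd.1 h1.symm
  apply hd.1
  rw [← h1, hall_comm, hall_P_eq hq ht, formB_comm, TT_apply, map_sub, map_sub, LinearMap.sub_apply,
    LinearMap.sub_apply, DD_symm q t ht0 hq, map_smul, LinearMap.smul_apply]
  have hm : RR q t P ka ∈ Vgt R lam := (RR_lead hP hq ht ka).mem hlt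
  have h5 : hall R (TT q t⁻¹ (RR q t P ka) - EE q t⁻¹ lam • RR q t P ka) (P lam) = 0 :=
    hall_P_le hP le_rfl (Submodule.sub_mem _ (TT_Vgt _ _ _ hm) (Submodule.smul_mem _ _ hm))
  rw [hall_comm, hall_P_eq hq ht, TT_apply, map_sub, map_sub, map_smul] at h5
  exact h5

/-! homogeneity -/

/-- Weighted homogeneous of weight `n`. -/
abbrev Hom {A : Type} [CommRing A] (f : SymFn A) (n : ℕ) : Prop :=
  IsWeightedHomogeneous (fun k : ℕ+ => (k : ℕ)) f n

theorem hom_smul {A : Type} [CommRing A] {f : SymFn A} {n : ℕ} (a : A) (h : Hom f n) :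
    Hom (a • f) n := by
  rw [smul_eq_C_mul]
  have := (isWeightedHomogeneous_C (fun k : ℕ+ => (k : ℕ)) a).mul h
  rwa [zero_add] at this

theorem hom_hsym (n : ℕ) : Hom (hsym (R := R) n) n := by
  induction n using Nat.strong_induction_on with
  | _ n ih =>
    cases n with
    | zero => rw [hsym_zero]; exact isWeightedHomogeneous_one _ _
    | succ n =>
      rw [hsym.eq_2 n]
      apply hom_smul
      apply IsWeightedHomogeneous.sum
      intro i hi
      have hi := Finset.mem_range.1 hi
      have h1 := (isWeightedHomogeneous_X R (fun k : ℕ+ => (k : ℕ))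
        (⟨i+1, Nat.succ_pos i⟩ : ℕ+)).mul (ih (n - i) (by omega))
      have e : n + 1 = (i + 1) + (n - i) := by omega
      rw [e]
      exact h1

theorem hom_hPar (ka : Multiset ℕ+) : Hom (hPar (R := R) ka) (wt ka) := by
  induction ka using Multiset.induction_on with
  | empty => exact isWeightedHomogeneous_one _ _
  | cons a s ih =>
    rw [← Multiset.singleton_add, hPar_add, wt_add, ← pos_coe, hPar_pos, wt_pos]
    exact (hom_hsym _).mul ih

theorem hom_of_span {n : ℕ} {s : Set (SymFn R)} (hs : ∀ x ∈ s, Hom x n) {f : SymFn R}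
    (hf : f ∈ Submodule.span R s) : Hom f n := by
  induction hf using Submodule.span_induction with
  | mem x hx => exact hs x hx
  | zero => exact isWeightedHomogeneous_zero _ _ _
  | add x y _ _ hx hy => exact hx.add hy
  | smul a x _ hx => exact hom_smul a hx

theorem hom_schur (lam : Multiset ℕ+) : Hom (schur (R := R) lam) (wt lam) := by
  have h1 : Hom (schur lam - hPar (R := R) lam) (wt lam) := by
    refine hom_of_span ?_ (schur_sub_mem (R := R) lam)
    rintro _ ⟨ka, hk, rfl⟩
    rw [← hk.1]; exact hom_hPar ka
  simpa using h1.add (hom_hPar lam)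

theorem hom_P (hP : IsMacdonaldBasis q t P) (lam : Multiset ℕ+) : Hom (P lam) (wt lam) := by
  have h1 : Hom (P lam - schur (R := R) lam) (wt lam) := by
    refine hom_of_span ?_ (hP.1 lam)
    rintro _ ⟨ka, hk, rfl⟩
    rw [← hk.2.1]; exact hom_schur ka
  simpa using h1.add (hom_schur lam)

theorem coeff_scaleHom (g : ℕ+ → R) (f : SymFn R) (m : ℕ+ →₀ ℕ) :
    coeff m (scaleHom g f) = coeff m f * m.prod fun k e => g k ^ e := by
  induction f using MvPolynomial.induction_on' with
  | add p q hp hq => rw [map_add, coeff_add, coeff_add, hp, hq, add_mul]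
  | monomial m' a =>
    classical
    rw [coeff_scaleHom', coeff_monomial, coeff_monomial]
    split_ifs with h
    · rw [h]
    · simp

theorem hom_RR (hP : IsMacdonaldBasis q t P) (lam : Multiset ℕ+) :
    Hom (RR q t P lam) (wt lam) := by
  intro m hm
  rw [RR, coeff_scaleHom] at hm
  exact hom_P hP lam (left_ne_zero_of_mul hm)

theorem mem_span_of_hom {n : ℕ} {f : SymFn R} (h : Hom f n) :
    f ∈ Submodule.span R (hPar (R := R) '' {ka | wt ka = n}) := by
  have h1 := mem_span_hPar f
  have h2 := Submodule.mem_map_of_mem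
    (f := weightedHomogeneousComponent (fun k : ℕ+ => (k : ℕ)) n (R := R)) h1
  rw [h.weightedHomogeneousComponent_same, Submodule.map_span] at h2
  refine Submodule.span_le.2 ?_ h2
  rintro _ ⟨_, ⟨ka, rfl⟩, rfl⟩
  by_cases hk : wt ka = n
  · have := hom_hPar (R := R) ka
    rw [hk] at this
    rw [this.weightedHomogeneousComponent_same]
    exact Submodule.subset_span ⟨ka, hk, rfl⟩
  · rw [(hom_hPar (R := R) ka).weightedHomogeneousComponent_ne _ (Ne.symm hk)]
    exact Submodule.zero_mem _

end eigen

end QP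

end

noncomputable section

namespace QP

/-! ### Root of unity: plethysm -/

section root
variable {R : Type} [Field R] [CharZero R]

theorem plethP_eq_rename (l : ℕ+) : plethP (R := R) l = rename (fun k => l * k) := by
  apply algHom_ext
  intro k
  simp [plethP]

theorem plethP_inj (l : ℕ+) : Function.Injective (plethP (R := R) l) :=
  plethP_eq_rename (R := R) l ▸ rename_injective (R := R) (fun k : ℕ+ => l * k)
    (mul_right_injective l)

theorem hom_of_plethP {l : ℕ+} {n : ℕ} {f : SymFn R} (h : Hom (plethP l f) (l * n)) : Hom f n := by
  intro m hm
  rw [← coeff_rename_mapDomain (fun k : ℕ+ => l * k) (mul_right_injective l),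
    ← plethP_eq_rename] at hm
  have h1 := h hm
  rw [Finsupp.weight_apply, Finsupp.sum_mapDomain_index (by simp) (by intros; simp [add_mul])] at h1
  rw [Finsupp.weight_apply]
  apply Nat.eq_of_mul_eq_mul_left l.pos
  rw [← h1, Finsupp.mul_sum]
  apply Finsupp.sum_congr
  intro k _
  simp; ring

theorem tau_plethP {u : R} {l : ℕ+} (hu : u ^ (l : ℕ) = 1) (g : SymFn R) :
    tau (fun k => 1 - u ^ (k : ℕ)) (plethP l g) = Polynomial.C (plethP l g) := by
  induction g using MvPolynomial.induction_on with
  | C a =>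
    have : plethP l (C a : SymFn R) = C a := by simp [plethP]
    rw [this, tau_C]
  | add p q hp hq => simp only [map_add, hp, hq]
  | mul_X p k hp =>
    have : plethP l (X k : SymFn R) = X (l * k) := by simp [plethP]
    rw [map_mul, this, map_mul, hp, tau_X, PNat.mul_coe, pow_mul, hu]
    simp

theorem TT_plethP_mul (q : R) {u : R} {l : ℕ+} (hu : u ^ (l : ℕ) = 1) (g f : SymFn R) :
    TT q u (plethP l g * f) = plethP l g * TT q u f := by
  rw [TT_apply, TT_apply, DD_apply, map_mul, tau_plethP hu, ell_C_mul, ← DD_apply]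
  ring

theorem TT_plethP (q : R) {u : R} {l : ℕ+} (hu : u ^ (l : ℕ) = 1) (g : SymFn R) :
    TT q u (plethP l g) = 0 := by
  rw [TT_apply, DD_apply, tau_plethP hu, ell_C, Gq_zero, mul_one, sub_self]

theorem pow_sum_range {z : R} {l : ℕ} (hl : 0 < l) (hz : IsPrimitiveRoot z l) :
    z ^ (∑ i ∈ Finset.range l, i) = (-1) ^ (l - 1) := by
  have h2 := Finset.sum_range_id_mul_two l
  rcases Nat.even_or_odd' l with ⟨m, hm | hm⟩
  · have e : ∑ i ∈ Finset.range l, i = m * (l - 1) := by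
      have : l * (l - 1) = m * (l - 1) * 2 := by rw [hm]; ring
      omega
    have hz1 : z ^ m = -1 := by
      have h3 : (z ^ m) ^ 2 = 1 := by rw [← pow_mul, mul_comm, ← hm]; exact hz.pow_eq_one
      rcases (show z ^ m = 1 ∨ z ^ m = -1 from by simpa using h3) with h | h
      · exfalso
        have := hz.dvd_of_pow_eq_one _ h
        have := Nat.le_of_dvd (by omega) this
        omega
      · exact h
    rw [e, pow_mul, hz1]
  · have e : ∑ i ∈ Finset.range l, i = l * m := by
      have : l * (l - 1) = l * m * 2 := by
        rw [show l - 1 = m * 2 by omega]; ring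
      omega
    rw [e, pow_mul, hz.pow_eq_one, one_pow, show l - 1 = 2 * m by omega, pow_mul]
    simp

theorem Ugt_mul_mem {a b : Multiset ℕ+} {f g : SymFn R} (hf : f ∈ Ugt R a)
    (hg : g ∈ Submodule.span R (hPar (R := R) '' {ka | wt ka = wt b ∧ key b ≤ key ka})) :
    f * g ∈ Ugt R (a + b) := by
  have h := Submodule.mul_mem_mul hf hg
  rw [Ugt, Submodule.span_mul_span] at h
  refine Submodule.span_le.2 ?_ h
  rintro _ ⟨_, ⟨x, hx, rfl⟩, _, ⟨y, hy, rfl⟩, rfl⟩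
  simp only [← hPar_add]
  apply hPar_mem_Ugt
  · rw [wt_add, wt_add, hx.1, hy.1]
  · exact lt_of_lt_of_le (key_add_lt_right b hx.2) ((key_add_le_iff _ _ _).2 hy.2)

theorem lead_mul {a b : Multiset ℕ+} {f g : SymFn R} {c d : R}
    (hf : f - c • hPar a ∈ Ugt R a) (hg : g - d • hPar b ∈ Ugt R b) :
    f * g - (c * d) • hPar (a + b) ∈ Ugt R (a + b) := by
  have h0 : ∀ (x : Multiset ℕ+), hPar x ∈
      Submodule.span R (hPar (R := R) '' {ka | wt ka = wt x ∧ key x ≤ key ka}) := by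
    intro x
    exact Submodule.subset_span ⟨x, ⟨rfl, le_rfl⟩, rfl⟩
  have h1 : ∀ (x : Multiset ℕ+), Ugt R x ≤
      Submodule.span R (hPar (R := R) '' {ka | wt ka = wt x ∧ key x ≤ key ka}) := by
    intro x
    apply Submodule.span_mono
    apply Set.image_mono
    intro m hm
    exact ⟨hm.1, hm.2.le⟩
  have hg' : g ∈ Submodule.span R (hPar (R := R) '' {ka | wt ka = wt b ∧ key b ≤ key ka}) := by
    have := Submodule.add_mem _ (h1 _ hg) (Submodule.smul_mem _ d (h0 b))
    simpa using this
  have h2 := Ugt_mul_mem hf hg'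
  have h3 := Submodule.smul_mem _ c (Ugt_mul_mem hg (h0 a))
  rw [add_comm b a] at h3
  have h4 := Submodule.add_mem _ h2 h3
  convert h4 using 1
  rw [hPar_add]
  simp only [smul_eq_C_mul, map_mul]
  ring

theorem plethP_hsym_lead (l : ℕ+) {z : R} (hz : IsPrimitiveRoot z (l : ℕ)) (n : ℕ+) :
    plethP l (hsym (R := R) n) - ((-1 : R) ^ (((l : ℕ) - 1) * n)) • hPar ((l : ℕ) • {n}) ∈
      Ugt R ((l : ℕ) • {n}) := by
  classical
  rw [plethP_hsym l z hz]
  set a0 : ℕ →₀ ℕ := Finsupp.indicator (Finset.range l) (fun _ _ => (n : ℕ)) with ha0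
  have hmem : a0 ∈ (Finset.range l).finsuppAntidiag ((l : ℕ) * (n : ℕ)) := by
    rw [Finset.mem_finsuppAntidiag]
    refine ⟨?_, ?_⟩
    · rw [Finset.sum_congr rfl (g := fun _ => (n : ℕ))]
      · simp
      · intro i hi
        rw [ha0, Finsupp.indicator_of_mem hi]
    · exact Finsupp.support_indicator_subset _ _
  have e1 : ∑ i ∈ Finset.range l, pos (n : ℕ) = (l : ℕ) • ({n} : Multiset ℕ+) := by
    rw [Finset.sum_const, Finset.card_range, pos_coe]
  have h0 : C (z ^ (∑ i ∈ Finset.range l, i * a0 i)) * ∏ i ∈ Finset.range l, hsym (R := R) (a0 i) =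
      ((-1 : R) ^ (((l : ℕ) - 1) * n)) • hPar ((l : ℕ) • {n}) := by
    rw [← e1, hPar_sum, smul_eq_C_mul]
    congr 1
    · rw [pow_mul, ← pow_sum_range l.pos hz, ← pow_mul, Finset.sum_mul]
      congr 2
      apply Finset.sum_congr rfl
      intro i hi
      rw [ha0, Finsupp.indicator_of_mem hi]
    · apply Finset.prod_congr rfl
      intro i hi
      rw [ha0, Finsupp.indicator_of_mem hi, hPar_pos]
  rw [← Finset.add_sum_erase _ _ hmem, h0, add_sub_cancel_left]
  apply Submodule.sum_mem
  intro a ha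
  have hne := Finset.ne_of_mem_erase ha
  have ha := Finset.mem_finsuppAntidiag.1 (Finset.mem_of_mem_erase ha)
  rw [← smul_eq_C_mul]
  apply Submodule.smul_mem
  have e2 : ∏ i ∈ Finset.range l, hsym (R := R) (a i) =
      hPar (∑ i ∈ Finset.range l, pos (a i)) := by
    rw [hPar_sum]
    apply Finset.prod_congr rfl
    intro i hi
    rw [hPar_pos]
  rw [e2]
  apply hPar_mem_Ugt
  · rw [wt_sum, wt_nsmul, ← pos_coe, wt_pos, ← ha.1]
    apply Finset.sum_congr rfl
    intro i _
    rw [wt_pos]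
  · have hex : ∃ i ∈ Finset.range (l : ℕ), (n : ℕ) < a i := by
      by_contra hc
      push Not at hc
      apply hne
      have hs : ∑ i ∈ Finset.range (l : ℕ), a i = ∑ i ∈ Finset.range (l : ℕ), (n : ℕ) := by
        rw [ha.1]; simp
      have h3 := (Finset.sum_eq_sum_iff_of_le hc).1 hs
      ext i
      by_cases hi : i ∈ Finset.range (l : ℕ)
      · rw [ha0, Finsupp.indicator_of_mem hi, h3 i hi]
      · rw [ha0, Finsupp.indicator_of_notMem hi]
        by_contra h4
        exact hi (ha.2 (Finsupp.mem_support_iff.2 h4))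
    obtain ⟨i, hi, hlt⟩ := hex
    obtain ⟨x, hx⟩ : ∃ x : ℕ+, (x : ℕ) = a i := ⟨⟨a i, by omega⟩, rfl⟩
    apply key_lt_of_mem (x := x)
    · rw [mem_sum_pos]
      exact ⟨i, hi, hx⟩
    · intro y hy
      have := Multiset.mem_of_mem_nsmul hy
      rw [Multiset.mem_singleton] at this
      subst this
      rw [← PNat.coe_lt_coe, hx]; exact hlt

theorem plethP_hPar_lead (l : ℕ+) {z : R} (hz : IsPrimitiveRoot z (l : ℕ)) (nu : Multiset ℕ+) :
    plethP l (hPar (R := R) nu) - ((-1 : R) ^ (((l : ℕ) - 1) * wt nu)) • hPar ((l : ℕ) • nu) ∈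
      Ugt R ((l : ℕ) • nu) := by
  induction nu using Multiset.induction_on with
  | empty => simp [hPar_zero, wt_zero]
  | cons a s ih =>
    rw [← Multiset.singleton_add, hPar_add, map_mul, wt_add, mul_add, pow_add, smul_add]
    refine lead_mul ?_ ih
    have := plethP_hsym_lead l hz a
    rw [← pos_coe, hPar_pos, wt_pos, pos_coe]
    exact this

theorem plethP_Vgt (l : ℕ+) {z : R} (hz : IsPrimitiveRoot z (l : ℕ)) {nu : Multiset ℕ+}
    {f : SymFn R} (hf : f ∈ Vgt R nu) : plethP l f ∈ Vgt R ((l : ℕ) • nu) := by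
  induction hf using Submodule.span_induction with
  | mem x hx =>
    obtain ⟨ka, hk, rfl⟩ := hx
    have hk := key_nsmul_lt l.pos (show key nu < key ka from hk)
    have h1 := Vgt_mono hk.le (Ugt_le_Vgt (plethP_hPar_lead l hz ka))
    have h2 := Submodule.smul_mem _ ((-1 : R) ^ (((l : ℕ) - 1) * wt ka)) (hPar_mem_Vgt (R := R) hk)
    simpa using Submodule.add_mem _ h1 h2
  | zero => simp
  | add x y _ _ hx hy => rw [map_add]; exact Submodule.add_mem _ hx hy
  | smul a x _ hx => rw [map_smul]; exact Submodule.smul_mem _ _ hx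

theorem Lead.plethP (l : ℕ+) {z : R} (hz : IsPrimitiveRoot z (l : ℕ)) {nu : Multiset ℕ+}
    {f : SymFn R} {c : R} (hf : Lead f nu c) :
    Lead (plethP l f) ((l : ℕ) • nu) (c * (-1 : R) ^ (((l : ℕ) - 1) * wt nu)) := by
  refine ⟨mul_ne_zero hf.1 (by simp), ?_⟩
  have h1 := plethP_Vgt l hz hf.2
  have h2 := Submodule.smul_mem _ c (Ugt_le_Vgt (plethP_hPar_lead l hz nu))
  have := Submodule.add_mem _ h1 h2
  convert this using 1
  rw [map_sub, map_smul]
  module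

theorem lead_TT {q u : R} {f : SymFn R} {ka : Multiset ℕ+} {c : R} (hf : Lead f ka c)
    (hE : EE q u ka ≠ 0) : Lead (TT q u f) ka (c * EE q u ka) := by
  refine ⟨mul_ne_zero hf.1 hE, ?_⟩
  have h1 := TT_Vgt q u _ hf.2
  have h2 := Submodule.smul_mem _ c (Ugt_le_Vgt (TT_hPar q u ka))
  have := Submodule.add_mem _ h1 h2
  convert this using 1
  rw [map_sub, map_smul]
  module

theorem decomp (l : ℕ+) {z : R} (hz : IsPrimitiveRoot z (l : ℕ)) (f : SymFn R) :
    ∃ g, f - plethP l g ∈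
      Submodule.span R (hPar (R := R) '' {ka | ¬ ∃ nu, ka = (l : ℕ) • nu}) := by
  set N := Submodule.span R (hPar (R := R) '' {ka | ¬ ∃ nu, ka = (l : ℕ) • nu})
  set S : Submodule R (SymFn R) := LinearMap.range (plethP (R := R) l).toLinearMap ⊔ N
  have key1 : ∀ ka, hPar ka ∈ S := by
    intro ka
    induction ka using key_induction with
    | H lam ih =>
      by_cases h : ∃ nu, lam = (l : ℕ) • nu
      · obtain ⟨nu, rfl⟩ := h
        have h1 := plethP_hPar_lead (R := R) l hz nu
        have h2 : Ugt R ((l : ℕ) • nu) ≤ S := by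
          apply Submodule.span_le.2
          rintro _ ⟨ka, hk, rfl⟩
          exact ih ka hk.1 hk.2
        have h3 : plethP l (hPar nu) ∈ S :=
          Submodule.mem_sup_left (LinearMap.mem_range.2 ⟨_, rfl⟩)
        have h4 := Submodule.sub_mem _ h3 (h2 h1)
        rw [sub_sub_cancel] at h4
        exact (Submodule.smul_mem_iff S (by simp)).1 h4
      · exact Submodule.mem_sup_right (Submodule.subset_span ⟨lam, h, rfl⟩)
  have h1 : f ∈ S := by
    refine Submodule.span_le.2 ?_ (mem_span_hPar f)
    rintro _ ⟨ka, rfl⟩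
    exact key1 ka
  obtain ⟨x, ⟨g, rfl⟩, y, hy, hxy⟩ := Submodule.mem_sup.1 h1
  refine ⟨g, ?_⟩
  rw [← hxy]
  simpa using hy

theorem ker_TT (l : ℕ+) {q u : R} (hu : IsPrimitiveRoot u (l : ℕ))
    (hE : ∀ lam, EE q u lam = 0 → ∃ nu, lam = (l : ℕ) • nu) {f g : SymFn R}
    (h : TT q u f = plethP l g) : ∃ g', f = plethP l g' := by
  obtain ⟨g', hg'⟩ := decomp l hu f
  refine ⟨g', ?_⟩
  by_contra hne
  obtain ⟨ka, hka, c, hc⟩ := exists_lead hg' (sub_ne_zero.2 hne)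
  have h1 := lead_TT hc (fun h => hka (hE ka h))
  rw [map_sub, TT_plethP q hu.pow_eq_one, sub_zero, h] at h1
  have hg0 : g ≠ 0 := by
    rintro rfl
    rw [map_zero] at h1
    exact h1.ne_zero rfl
  obtain ⟨nu, d, hd⟩ := exists_lead' hg0
  exact hka ⟨nu, h1.unique (hd.plethP l hu)⟩

theorem im_TT (l : ℕ+) {q u : R} (hu : IsPrimitiveRoot u (l : ℕ))
    (hE : ∀ lam, EE q u lam = 0 → ∃ nu, lam = (l : ℕ) • nu) {f g : SymFn R}
    (h : TT q u f = plethP l g) : g = 0 := by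
  obtain ⟨g', rfl⟩ := ker_TT l hu hE h
  rw [TT_plethP q hu.pow_eq_one] at h
  apply plethP_inj l
  rw [← h, map_zero]

end root

end QP

end

noncomputable section

namespace QP

/-! ### Eigenvalues -/

section eigenvalues

/-- Number of parts `> m`. -/
def cnt (m : ℕ) (lam : Multiset ℕ+) : ℕ := Multiset.card (lam.filter (fun a : ℕ+ => m < (a : ℕ)))

theorem getD_gt_iff (m : ℕ) : ∀ (L : List ℕ+), L.Pairwise (· ≥ ·) → ∀ r,
    (m < (L.map (fun a : ℕ+ => (a : ℕ))).getD r 0 ↔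
      r < (L.filter (fun a : ℕ+ => decide (m < (a : ℕ)))).length)
  | [], _, r => by simp
  | a :: L, h, r => by
    have h' := List.pairwise_cons.1 h
    by_cases ha : m < (a : ℕ)
    · rw [List.filter_cons_of_pos (by simpa using ha)]
      cases r with
      | zero => simpa using ha
      | succ r =>
        have := getD_gt_iff m L h'.2 r
        simpa using this
    · have h1 : (a :: L).filter (fun a : ℕ+ => decide (m < (a : ℕ))) = [] := by
        rw [List.filter_eq_nil_iff]
        intro b hb
        rw [List.mem_cons] at hb
        rcases hb with rfl | hb
        · simpa using ha
        · have : (b : ℕ) ≤ a := h'.1 b hb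
          simp; omega
      rw [h1]
      constructor
      · intro hlt
        exfalso
        by_cases hr : r < (a :: L).length
        · rw [List.getD_eq_getElem _ _ (by simpa using hr), List.getElem_map] at hlt
          have hm := List.getElem_mem hr
          rw [List.mem_cons] at hm
          rcases hm with hm | hm
          · rw [hm] at hlt; exact ha hlt
          · have : (((a :: L)[r] : ℕ+) : ℕ) ≤ a := h'.1 _ hm
            omega
        · rw [List.getD_eq_default _ _ (by simpa using hr)] at hlt
          omega
      · intro h; simp at h

theorem part_gt_iff (m : ℕ) (lam : Multiset ℕ+) (r : ℕ) : m < part lam r ↔ r < cnt m lam := by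
  have := getD_gt_iff m (dl lam) (dl_sorted lam) r
  rw [part, descParts_eq, this, cnt]
  conv_rhs => rw [← dl_coe lam, Multiset.filter_coe, Multiset.coe_card]

theorem cnt_le (m : ℕ) (lam : Multiset ℕ+) : cnt m lam ≤ Multiset.card lam :=
  Multiset.card_le_card (Multiset.filter_le _ _)

theorem cnt_nsmul (m l : ℕ) (lam : Multiset ℕ+) : cnt m (l • lam) = l * cnt m lam := by
  rw [cnt, Multiset.filter_nsmul, Multiset.card_nsmul]; rfl

theorem part_le {N : ℕ} {lam : Multiset ℕ+} (hN : ∀ a ∈ lam, (a : ℕ) ≤ N) (r : ℕ) :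
    part lam r ≤ N := by
  by_contra h
  push Not at h
  rw [part_gt_iff] at h
  have : cnt N lam = 0 := by
    rw [cnt, Multiset.card_eq_zero, Multiset.filter_eq_nil]
    intro a ha
    have := hN a ha
    omega
  omega

variable {A : Type} [CommRing A]

theorem pow_sub_one_eq (q : A) {p N : ℕ} (h : p ≤ N) :
    q ^ p - 1 = (q - 1) * ∑ m ∈ Finset.range N, if m < p then q ^ m else 0 := by
  rw [← Finset.sum_filter]
  have : (Finset.range N).filter (fun m => m < p) = Finset.range p := by
    ext i; simp; omega
  rw [this, mul_comm, geom_sum_mul]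

theorem EE_eq (q u : A) {N : ℕ} {lam : Multiset ℕ+} (hN : ∀ a ∈ lam, (a : ℕ) ≤ N) :
    EE q u lam = (q - 1) * ∑ m ∈ Finset.range N, q ^ m * (1 - u ^ cnt m lam) := by
  rw [EE]
  have h1 : ∀ r : Fin (Multiset.card lam), u ^ (r : ℕ) * (q ^ part lam r - 1) =
      ∑ m ∈ Finset.range N, (q - 1) * (q ^ m * if m < part lam r then u ^ (r : ℕ) else 0) := by
    intro r
    rw [pow_sub_one_eq q (part_le hN r), ← Finset.mul_sum, mul_left_comm, Finset.mul_sum]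
    congr 1
    apply Finset.sum_congr rfl
    intro m _
    split_ifs <;> ring
  rw [Finset.sum_congr rfl (fun r _ => h1 r), Finset.sum_comm, Finset.mul_sum, Finset.mul_sum]
  apply Finset.sum_congr rfl
  intro m _
  rw [← Finset.mul_sum, ← Finset.mul_sum]
  have h2 : ∑ r : Fin (Multiset.card lam), (if m < part lam r then u ^ (r : ℕ) else 0) =
      ∑ r ∈ Finset.range (cnt m lam), u ^ r := by
    rw [Fin.sum_univ_eq_sum_range (fun r => if m < part lam r then u ^ r else 0),
      ← Finset.sum_filter]
    apply Finset.sum_congr _ (fun _ _ => rfl)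
    ext r
    have := cnt_le m lam
    simp only [Finset.mem_filter, Finset.mem_range, part_gt_iff]
    omega
  rw [h2]
  have h3 := mul_neg_geom_sum u (cnt m lam)
  linear_combination ((q - 1) * q ^ m) * h3

/-- `∑ (q^{ν_j} - 1)`. -/
def eps (q : A) (nu : Multiset ℕ+) : A := (nu.map (fun a : ℕ+ => q ^ (a : ℕ) - 1)).sum

theorem eps_add (q : A) (a b : Multiset ℕ+) : eps q (a + b) = eps q a + eps q b := by simp [eps]

theorem eps_eq (q : A) {N : ℕ} {nu : Multiset ℕ+} (hN : ∀ a ∈ nu, (a : ℕ) ≤ N) :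
    eps q nu = (q - 1) * ∑ m ∈ Finset.range N, q ^ m * (cnt m nu : A) := by
  induction nu using Multiset.induction_on with
  | empty => simp [eps, cnt]
  | cons a s ih =>
    rw [← Multiset.singleton_add, eps_add, ih (fun b hb => hN b (Multiset.mem_cons_of_mem hb))]
    have : eps q {a} = q ^ (a : ℕ) - 1 := by simp [eps]
    rw [this, pow_sub_one_eq q (hN a (Multiset.mem_cons_self _ _)), ← mul_add,
      ← Finset.sum_add_distrib]
    congr 1
    apply Finset.sum_congr rfl
    intro m _
    rw [cnt, cnt, Multiset.filter_add, Multiset.card_add, Multiset.filter_singleton]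
    split_ifs <;> simp <;> ring

variable {K : Type} [Field K]

/-- The quotient of `1 - X^N` by `X - u`. -/
def vv (u : K) (N : ℕ) : Polynomial K :=
  -∑ i ∈ Finset.range N, Polynomial.X ^ i * (Polynomial.C u) ^ (N - 1 - i)

theorem vv_mul {u : K} {N : ℕ} (h : u ^ N = 1) :
    1 - Polynomial.X ^ N = (Polynomial.X - Polynomial.C u) * vv u N := by
  have := geom_sum₂_mul (Polynomial.X : Polynomial K) (Polynomial.C u) N
  rw [← Polynomial.C_pow, h, Polynomial.C_1] at this
  rw [vv]
  linear_combination this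

theorem vv_eval {u : K} {N : ℕ} (h : u ^ N = 1) (hu : u ≠ 0) : (vv u N).eval u = -(N * u⁻¹) := by
  rw [vv, Polynomial.eval_neg, Polynomial.eval_finset_sum]
  congr 1
  rw [Finset.sum_congr rfl (g := fun _ => u⁻¹)]
  · simp
  · intro i hi
    have hi := Finset.mem_range.1 hi
    rw [Polynomial.eval_mul, Polynomial.eval_pow, Polynomial.eval_pow, Polynomial.eval_X,
      Polynomial.eval_C, ← pow_add, show i + (N - 1 - i) = N - 1 by omega]
    rw [← mul_eq_one_iff_eq_inv₀ hu, ← pow_succ, show N - 1 + 1 = N by omega, h]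

theorem EE_nsmul (q : K) {u : K} {l : ℕ} (hul : u ^ l = 1) (hu : u ≠ 0) (nu : Multiset ℕ+) :
    ∃ E1 : Polynomial K, EE (Polynomial.C q) Polynomial.X (l • nu) =
      (Polynomial.X - Polynomial.C u) * E1 ∧ E1.eval u = -(l * u⁻¹) * eps q nu := by
  obtain ⟨N, hN⟩ : ∃ N : ℕ, ∀ a ∈ nu, (a : ℕ) ≤ N := by
    refine ⟨wt nu, fun a ha => ?_⟩
    exact Multiset.single_le_sum (fun _ _ => Nat.zero_le _) _ (Multiset.mem_map_of_mem _ ha)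
  have hN' : ∀ a ∈ l • nu, (a : ℕ) ≤ N := fun a ha => hN a (Multiset.mem_of_mem_nsmul ha)
  have h1 : ∀ c : ℕ, u ^ (l * c) = 1 := fun c => by rw [pow_mul, hul, one_pow]
  refine ⟨(Polynomial.C q - 1) * ∑ m ∈ Finset.range N, Polynomial.C q ^ m * vv u (l * cnt m nu),
    ?_, ?_⟩
  · rw [EE_eq _ _ hN', mul_left_comm]
    congr 1
    rw [Finset.mul_sum]
    apply Finset.sum_congr rfl
    intro m _
    rw [cnt_nsmul, vv_mul (h1 _)]
    ring
  · rw [eps_eq q hN, Polynomial.eval_mul, Polynomial.eval_finset_sum, mul_left_comm]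
    simp only [Polynomial.eval_sub, Polynomial.eval_C, Polynomial.eval_one, Polynomial.eval_mul,
      Polynomial.eval_pow, vv_eval (h1 _) hu]
    congr 1
    rw [Finset.mul_sum]
    apply Finset.sum_congr rfl
    intro m _
    push_cast
    ring

theorem exists_nsmul {l : ℕ} (hl : 0 < l) {lam : Multiset ℕ+} (h : ∀ a, l ∣ lam.count a) :
    ∃ nu, lam = l • nu := by
  classical
  refine ⟨Finsupp.toMultiset ((Multiset.toFinsupp lam).mapRange (fun x => x / l) (by simp)), ?_⟩
  ext a
  rw [Multiset.count_nsmul, Finsupp.count_toMultiset, Finsupp.mapRange_apply,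
    Multiset.toFinsupp_apply, Nat.mul_div_cancel' (h a)]

theorem count_eq_cnt (a : ℕ+) (lam : Multiset ℕ+) :
    cnt ((a : ℕ) - 1) lam = lam.count a + cnt a lam := by
  induction lam using Multiset.induction_on with
  | empty => simp [cnt]
  | cons b s ih =>
    have ha := a.pos
    have h1 : ∀ m, cnt m (b ::ₘ s) = cnt m s + if m < (b : ℕ) then 1 else 0 := by
      intro m
      rw [cnt, cnt, ← Multiset.singleton_add, Multiset.filter_add, Multiset.card_add,
        Multiset.filter_singleton]
      split_ifs <;> simp [add_comm]
    rw [h1, h1, ih, Multiset.count_cons]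
    by_cases hab : a = b
    · subst hab
      rw [if_pos rfl, if_pos (by omega), if_neg (by omega)]; omega
    · have : (a : ℕ) ≠ b := fun h => hab (PNat.coe_inj.1 h)
      rw [if_neg hab]
      by_cases h2 : (a : ℕ) < b
      · rw [if_pos (by omega), if_pos h2]; omega
      · rw [if_neg (by omega), if_neg h2]; omega

theorem EE_zero {l : ℕ} (hl : 0 < l) {z : ℂ} (hz : IsPrimitiveRoot z l) (lam : Multiset ℕ+)
    (h : EE qK (RatFunc.C z) lam = 0) : ∃ nu, lam = l • nu := by
  obtain ⟨N, hN⟩ : ∃ N : ℕ, ∀ a ∈ lam, (a : ℕ) ≤ N := by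
    refine ⟨wt lam, fun a ha => ?_⟩
    exact Multiset.single_le_sum (fun _ _ => Nat.zero_le _) _ (Multiset.mem_map_of_mem _ ha)
  have h1 : algebraMap (Polynomial ℂ) KK ((Polynomial.X - 1) * ∑ m ∈ Finset.range N,
      Polynomial.C (1 - z ^ cnt m lam) * Polynomial.X ^ m) = 0 := by
    rw [← h, EE_eq _ _ hN, qK]
    simp only [map_mul, map_sub, map_sum, map_pow, map_one, RatFunc.algebraMap_X,
      RatFunc.algebraMap_C]
    congr 1
    apply Finset.sum_congr rfl
    intro m _
    ring
  rw [map_eq_zero_iff _ (RatFunc.algebraMap_injective ℂ)] at h1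
  have h2 : ∑ m ∈ Finset.range N, Polynomial.C (1 - z ^ cnt m lam) * Polynomial.X ^ m = 0 := by
    rcases mul_eq_zero.1 h1 with h3 | h3
    · exact absurd h3 (Polynomial.X_sub_C_ne_zero (1 : ℂ) ∘ fun h => by simpa using h)
    · exact h3
  have h4 : ∀ m, l ∣ cnt m lam := by
    intro m
    by_cases hm : m < N
    · have h5 := congrArg (fun p => Polynomial.coeff p m) h2
      simp only [Polynomial.finset_sum_coeff, Polynomial.coeff_C_mul, Polynomial.coeff_X_pow,
        mul_ite, mul_one, mul_zero, Finset.sum_ite_eq, Finset.mem_range, hm, if_true,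
        Polynomial.coeff_zero] at h5
      exact hz.dvd_of_pow_eq_one _ (sub_eq_zero.1 h5).symm
    · have : cnt m lam = 0 := by
        rw [cnt, Multiset.card_eq_zero, Multiset.filter_eq_nil]
        intro a ha
        have := hN a ha
        omega
      rw [this]; exact dvd_zero _
  apply exists_nsmul hl
  intro a
  have h6 := h4 ((a : ℕ) - 1)
  rw [count_eq_cnt] at h6
  exact (Nat.dvd_add_left (h4 a)).1 h6

theorem eps_inj {a b : Multiset ℕ+} (h : eps qK a = eps qK b) : a = b := by
  have h1 : ∀ c : Multiset ℕ+, algebraMap (Polynomial ℂ) KK (eps Polynomial.X c) = eps qK c := by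
    intro c
    rw [eps, eps, map_multiset_sum, Multiset.map_map]
    simp [qK, RatFunc.algebraMap_X]
  rw [← h1, ← h1] at h
  have h2 := RatFunc.algebraMap_injective ℂ h
  have h3 : ∀ (c : Multiset ℕ+) (x : ℕ+), (eps (Polynomial.X : Polynomial ℂ) c).coeff x =
      (c.count x : ℂ) := by
    intro c x
    induction c using Multiset.induction_on with
    | empty => simp [eps]
    | cons y s ih =>
      rw [← Multiset.singleton_add, eps_add, Polynomial.coeff_add, ih, Multiset.count_add]
      have : eps (Polynomial.X : Polynomial ℂ) {y} = Polynomial.X ^ (y : ℕ) - 1 := by simp [eps]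
      rw [this, Polynomial.coeff_sub, Polynomial.coeff_X_pow, Polynomial.coeff_one,
        if_neg x.ne_zero, Multiset.count_singleton]
      by_cases hxy : x = y
      · simp [hxy]
      · have : (x : ℕ) ≠ y := fun h => hxy (PNat.coe_inj.1 h)
        simp [hxy, this]
  ext x
  have := h3 a x
  rw [h2, h3] at this
  exact_mod_cast this.symm

end eigenvalues

end QP

end

noncomputable section

namespace QP

/-! ### First order deformation -/

section deform
variable {K : Type} [Field K] [CharZero K]

/-- The first order deformation along `p_l ∘ Λ`. -/
def Phi (q u : K) (l : ℕ+) : SymFn K →ₐ[K] TrivSqZeroExt (SymFn K) (SymFn K) :=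
  aeval fun k : ℕ+ => TrivSqZeroExt.inl (X (l * k)) +
    TrivSqZeroExt.inr (C (-(((l * k : ℕ+) : ℕ) * u⁻¹)) * Gq q ((l * k : ℕ+) : ℕ))

theorem Phi_fst (q u : K) (l : ℕ+) (g : SymFn K) : (Phi q u l g).fst = plethP l g := by
  induction g using MvPolynomial.induction_on with
  | C a => simp [Phi, plethP, algebraMap_eq, TrivSqZeroExt.algebraMap_eq_inl']
  | add p q hp hq => simp [hp, hq]
  | mul_X p k hp =>
    rw [map_mul, TrivSqZeroExt.fst_mul, hp]
    simp [Phi, plethP]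

/-- The first order part. -/
def T1 (q u : K) (l : ℕ+) (g : SymFn K) : SymFn K := (Phi q u l g).snd

theorem T1_add (q u : K) (l : ℕ+) (f g : SymFn K) :
    T1 q u l (f + g) = T1 q u l f + T1 q u l g := by simp [T1]

theorem T1_smul (q u : K) (l : ℕ+) (a : K) (g : SymFn K) :
    T1 q u l (a • g) = a • T1 q u l g := by simp [T1]

theorem T1_mul (q u : K) (l : ℕ+) (f g : SymFn K) :
    T1 q u l (f * g) = plethP l f * T1 q u l g + plethP l g * T1 q u l f := by
  rw [T1, map_mul, TrivSqZeroExt.snd_mul, Phi_fst, Phi_fst]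
  simp [T1, mul_comm]

theorem T1_C (q u : K) (l : ℕ+) (a : K) : T1 q u l (C a) = 0 := by
  simp [T1, Phi, TrivSqZeroExt.algebraMap_eq_inl']

theorem T1_X (q u : K) (l : ℕ+) (k : ℕ+) : T1 q u l (X k) =
    C (-(((l * k : ℕ+) : ℕ) * u⁻¹)) * Gq q ((l * k : ℕ+) : ℕ) := by
  simp [T1, Phi]

/-- The coefficients over `K[X]`. -/
def GA (q : K) (n : ℕ) : SymFn (Polynomial K) := MvPolynomial.map Polynomial.C (Gq q n)

/-- The operator over `K[X]`. -/
def TA (q : K) : SymFn (Polynomial K) →ₗ[Polynomial K] SymFn (Polynomial K) :=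
  DD Polynomial.X (GA q) - LinearMap.id

/-- Evaluation at `u`. -/
def mev (u : K) : SymFn (Polynomial K) →+* SymFn K := MvPolynomial.map (Polynomial.evalRingHom u)

/-- Constants. -/
def mcc : SymFn K →+* SymFn (Polynomial K) := MvPolynomial.map Polynomial.C

theorem mev_mcc (u : K) (f : SymFn K) : mev u (mcc f) = f := by
  rw [mev, mcc, map_map]
  have : (Polynomial.evalRingHom u).comp Polynomial.C = RingHom.id K := by
    ext x; simp
  rw [this, map_id]

theorem mev_C (u : K) (a : Polynomial K) : mev u (C a) = C (a.eval u) := by simp [mev]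

theorem mev_GA (u q : K) (n : ℕ) : mev u (GA q n) = Gq q n := mev_mcc u _

theorem mev_TA (u q : K) (f : SymFn (Polynomial K)) : mev u (TA q f) = TT q u (mev u f) := by
  have h1 := map_DD (Polynomial.evalRingHom u) Polynomial.X (GA q) f
  have h2 : (fun n => MvPolynomial.map (Polynomial.evalRingHom u) (GA q n)) = Gq q := by
    funext n; exact mev_GA u q n
  have h3 : (Polynomial.evalRingHom u) Polynomial.X = u := by simp
  rw [h2, h3] at h1
  have h4 : mev u (DD Polynomial.X (GA q) f) = DD u (Gq q) (mev u f) := h1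
  rw [TA, LinearMap.sub_apply, map_sub, TT_apply, LinearMap.id_apply, h4]

theorem mev_eq_zero {u : K} {x : SymFn (Polynomial K)} (h : mev u x = 0) :
    ∃ y, x = C (Polynomial.X - Polynomial.C u) * y := by
  have : C (Polynomial.X - Polynomial.C u) ∣ x := by
    rw [C_dvd_iff_dvd_coeff]
    intro m
    rw [Polynomial.dvd_iff_isRoot]
    have := congrArg (coeff m) h
    rw [mev, coeff_map, coeff_zero] at this
    exact this
  exact this

theorem tau_mcc (q : K) {u : K} {l : ℕ+} (hul : u ^ (l : ℕ) = 1) (hu : u ≠ 0) (g : SymFn K) :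
    ∃ Z : Polynomial (SymFn (Polynomial K)),
      tau (fun k => 1 - (Polynomial.X : Polynomial K) ^ (k : ℕ)) (mcc (plethP l g)) =
        Polynomial.C (mcc (plethP l g)) +
          Polynomial.C (C (Polynomial.X - Polynomial.C u)) * Z ∧
      ell (Gq q) (Z.map (mev u)) = T1 q u l g := by
  induction g using MvPolynomial.induction_on with
  | C a =>
    refine ⟨0, ?_, ?_⟩
    · have : plethP l (C a : SymFn K) = C a := by simp [plethP]
      rw [this, mcc, map_C, tau_C]; simp
    · rw [T1_C]; simp
  | add p q hp hq =>
    obtain ⟨Z1, h1, h1'⟩ := hp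
    obtain ⟨Z2, h2, h2'⟩ := hq
    refine ⟨Z1 + Z2, ?_, ?_⟩
    · simp only [map_add, h1, h2]; ring
    · rw [Polynomial.map_add, map_add, h1', h2', T1_add]
  | mul_X p k hp =>
    obtain ⟨Z, h1, h1'⟩ := hp
    have hX : plethP l (X k : SymFn K) = X (l * k) := by simp [plethP]
    have hX' : mcc (X (l * k) : SymFn K) = X (l * k) := by simp [mcc]
    have hpow : u ^ ((l * k : ℕ+) : ℕ) = 1 := by rw [PNat.mul_coe, pow_mul, hul, one_pow]
    refine ⟨Z * Polynomial.C (X (l * k)) +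
      Polynomial.C (mcc (plethP l p) * C (vv u ((l * k : ℕ+) : ℕ))) *
        Polynomial.X ^ ((l * k : ℕ+) : ℕ) +
      Polynomial.C (C (Polynomial.X - Polynomial.C u)) * (Z * (Polynomial.C
        (C (vv u ((l * k : ℕ+) : ℕ))) * Polynomial.X ^ ((l * k : ℕ+) : ℕ))), ?_, ?_⟩
    · rw [map_mul, hX, map_mul, hX', map_mul, h1, tau_X, vv_mul hpow]
      simp only [map_mul]
      ring
    · rw [Polynomial.map_add, Polynomial.map_add, Polynomial.map_mul, Polynomial.map_mul,
        Polynomial.map_mul, Polynomial.map_pow, Polynomial.map_X, Polynomial.map_C,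
        Polynomial.map_C, Polynomial.map_C, map_mul, mev_mcc, mev_C, mev_C, T1_mul, T1_X,
        vv_eval hpow hu, map_add, map_add, ell_C_mul_X_pow, mul_comm (Polynomial.map (mev u) Z),
        ell_C_mul, h1', hX, ← hX', mev_mcc]
      simp only [Polynomial.eval_sub, Polynomial.eval_X, Polynomial.eval_C, sub_self, map_zero,
        zero_mul]
      ring

theorem TA_mcc (q : K) {u : K} {l : ℕ+} (hul : u ^ (l : ℕ) = 1) (hu : u ≠ 0) (g : SymFn K) :
    ∃ Y, TA q (mcc (plethP l g)) = C (Polynomial.X - Polynomial.C u) * Y ∧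
      mev u Y = T1 q u l g := by
  obtain ⟨Z, h1, h2⟩ := tau_mcc q hul hu g
  refine ⟨ell (GA q) Z, ?_, ?_⟩
  · have h0 : GA q 0 = 1 := by rw [GA, Gq_zero, map_one]
    rw [TA, LinearMap.sub_apply, DD_apply, h1, map_add, ell_C, ell_C_mul, h0, mul_one,
      LinearMap.id_apply, add_sub_cancel_left]
  · rw [mev, map_ell, ← h2]
    congr 2
    funext n
    exact mev_GA u q n

theorem eigen_deform (q : K) {u : K} {l : ℕ+} (hu : IsPrimitiveRoot u (l : ℕ))
    {f : SymFn (Polynomial K)} {g : SymFn K} {E1 : Polynomial K}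
    (hf : TA q f = ((Polynomial.X - Polynomial.C u) * E1) • f) (hg : mev u f = plethP l g) :
    ∃ y, T1 q u l g + TT q u y = E1.eval u • plethP l g := by
  have hu0 : u ≠ 0 := hu.ne_zero l.ne_zero
  obtain ⟨f1, h1⟩ := mev_eq_zero (u := u) (x := f - mcc (plethP l g))
    (by rw [map_sub, hg, mev_mcc, sub_self])
  obtain ⟨Y, h2, h3⟩ := TA_mcc q hu.pow_eq_one hu0 g
  have h4 : C (Polynomial.X - Polynomial.C u) * (Y + TA q f1) =
      C (Polynomial.X - Polynomial.C u) * (E1 • f) := by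
    have e : f = mcc (plethP l g) + (Polynomial.X - Polynomial.C u) • f1 := by
      rw [smul_eq_C_mul, ← h1]; ring
    have e2 : TA q f = C (Polynomial.X - Polynomial.C u) * (Y + TA q f1) := by
      conv_lhs => rw [e, map_add, map_smul, h2]
      rw [smul_eq_C_mul]; ring
    rw [← e2, hf, mul_smul, smul_eq_C_mul (E1 • f)]
  have hpi : (C (Polynomial.X - Polynomial.C u) : SymFn (Polynomial K)) ≠ 0 := by
    rw [Ne, C_eq_zero]
    exact Polynomial.X_sub_C_ne_zero u
  have h5 := mul_left_cancel₀ hpi h4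
  refine ⟨mev u f1, ?_⟩
  rw [← h3, ← mev_TA, ← map_add, h5, smul_eq_C_mul, map_mul, mev_C, hg, smul_eq_C_mul]

theorem hPar_li : LinearIndependent K (hPar (R := K)) := by
  classical
  rw [linearIndependent_iff]
  intro x hx
  by_contra h0
  have hne : x.support.Nonempty := by
    rw [Finset.nonempty_iff_ne_empty]
    intro h
    exact h0 (Finsupp.support_eq_empty.1 h)
  obtain ⟨ka, hka, hmin⟩ := Finset.exists_min_image x.support key hne
  have : Lead (0 : SymFn K) ka (x ka) := by
    refine ⟨Finsupp.mem_support_iff.1 hka, ?_⟩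
    rw [← hx, Finsupp.linearCombination_apply, Finsupp.sum, ← Finset.add_sum_erase _ _ hka,
      add_sub_cancel_left]
    apply Submodule.sum_mem
    intro m hm
    apply Submodule.smul_mem
    apply hPar_mem_Vgt
    have h1 := hmin m (Finset.mem_of_mem_erase hm)
    exact lt_of_le_of_ne h1 (fun h => Finset.ne_of_mem_erase hm (key_inj h).symm)
  exact this.ne_zero rfl

theorem key_le_single {ka : Multiset ℕ+} {n : ℕ+} (h : wt ka = n) : key ka ≤ key {n} := by
  have hle : ∀ a ∈ ka, (a : ℕ) ≤ n := by
    intro a ha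
    rw [← h]
    exact Multiset.single_le_sum (fun _ _ => Nat.zero_le _) _ (Multiset.mem_map_of_mem _ ha)
  by_cases hn : n ∈ ka
  · obtain ⟨s, rfl⟩ := Multiset.exists_cons_of_mem hn
    rw [← Multiset.singleton_add, wt_add, ← pos_coe, wt_pos] at h
    have hs : s = 0 := by
      rw [Multiset.eq_zero_iff_forall_notMem]
      intro a ha
      have h1 : (a : ℕ) ≤ wt s :=
        Multiset.single_le_sum (fun _ _ => Nat.zero_le _) _ (Multiset.mem_map_of_mem _ ha)
      have := a.pos
      omega
    subst hs
    exact le_rfl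
  · apply le_of_lt
    apply key_lt_of_mem (x := n) (by simp)
    intro y hy
    refine lt_of_le_of_ne (hle y hy) ?_
    rintro rfl
    exact hn hy

theorem main_abs {q u : K} {l : ℕ+} (hu : IsPrimitiveRoot u (l : ℕ))
    (hE : ∀ lam, EE q u lam = 0 → ∃ nu, lam = (l : ℕ) • nu)
    (heps : ∀ a b, eps q a = eps q b → a = b)
    (fam : Multiset ℕ+ → SymFn (Polynomial K))
    (h1 : ∀ lam, TA q (fam lam) = EE (Polynomial.C q) Polynomial.X lam • fam lam)
    (h2 : ∀ lam, mev u (fam lam) ≠ 0)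
    (h3 : ∀ lam, Hom (mev u (fam lam)) (wt lam))
    (h4 : ∀ lam mu, key mu < key lam → hall K (mev u (fam lam)) (schur mu) = 0)
    (nu : Multiset ℕ+) :
    ∃ c : K, c ≠ 0 ∧ mev u (fam ((l : ℕ) • nu)) = c • plethP l (hPar nu) := by
  have hu0 : u ≠ 0 := hu.ne_zero l.ne_zero
  set e : Multiset ℕ+ → K := fun nu => -((l : ℕ) * u⁻¹) * eps q nu with he
  -- the reduction and the first order relation
  have hrel : ∀ nu, ∃ g y, mev u (fam ((l : ℕ) • nu)) = plethP l g ∧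
      T1 q u l g + TT q u y = e nu • plethP l g := by
    intro nu
    obtain ⟨E1, hE1, hE2⟩ := EE_nsmul q hu.pow_eq_one hu0 nu
    have hT := h1 ((l : ℕ) • nu)
    rw [hE1] at hT
    have hz : TT q u (mev u (fam ((l : ℕ) • nu))) = plethP l 0 := by
      rw [← mev_TA, hT, smul_eq_C_mul, map_mul, mev_C]
      simp
    obtain ⟨g, hg⟩ := ker_TT l hu hE hz
    obtain ⟨y, hy⟩ := eigen_deform q hu hT hg
    exact ⟨g, y, hg, by rw [hy, hE2]⟩
  -- single rows
  have hrow : ∀ n : ℕ+, ∃ y, T1 q u l (hPar {n}) + TT q u y = e {n} • plethP l (hPar {n}) := by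
    intro n
    obtain ⟨g, y, hg, hy⟩ := hrel {n}
    have hg0 : g ≠ 0 := by
      rintro rfl
      exact h2 _ (by rw [hg, map_zero])
    have hH : Hom g n := by
      apply hom_of_plethP (l := l)
      rw [← hg]
      have := h3 ((l : ℕ) • {n})
      have hw : wt ((l : ℕ) • ({n} : Multiset ℕ+)) = l * n := by
        rw [wt_nsmul, ← pos_coe, wt_pos]
      rwa [hw] at this
    have hsp := mem_span_of_hom hH
    obtain ⟨ka, hka, c, hc⟩ := exists_lead hsp hg0
    have hkan : ka = {n} := by
      apply key_inj
      apply le_antisymm (key_le_single hka)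
      by_contra hlt
      push Not at hlt
      have h5 := h4 ((l : ℕ) • {n}) ((l : ℕ) • ka) (key_nsmul_lt l.pos hlt)
      have h6 := hc.plethP l hu
      rw [hg, h6.hall] at h5
      exact h6.1 h5
    subst hkan
    have hgc : g = c • hPar {n} := by
      by_contra hne
      have hH2 : Hom (g - c • hPar {n}) n := by
        have h7 := hom_hPar (R := K) {n}
        rw [← pos_coe, wt_pos, pos_coe] at h7
        exact hH.sub (hom_smul c h7)
      obtain ⟨ka, hka, d, hd⟩ := exists_lead (mem_span_of_hom hH2) (sub_ne_zero.2 hne)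
      have h8 := hall_Vgt_schur (key_le_single hka) hc.2
      rw [hd.hall] at h8
      exact hd.1 h8
    refine ⟨c⁻¹ • y, ?_⟩
    have hc0 := hc.1
    rw [hgc, T1_smul, map_smul] at hy
    have := congrArg (fun x => c⁻¹ • x) hy
    simp only [smul_add] at this
    rw [inv_smul_smul₀ hc0] at this
    rw [map_smul, this, smul_comm (e {n}) c, inv_smul_smul₀ hc0]
  -- all products
  have hall' : ∀ ka, ∃ y, T1 q u l (hPar ka) + TT q u y = e ka • plethP l (hPar ka) := by
    intro ka
    induction ka using Multiset.induction_on with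
    | empty =>
      refine ⟨0, ?_⟩
      have : hPar (R := K) 0 = C 1 := by rw [hPar_zero, C_1]
      rw [this, T1_C, he]
      simp [eps]
    | cons a s ih =>
      obtain ⟨y1, hy1⟩ := hrow a
      obtain ⟨y2, hy2⟩ := ih
      refine ⟨plethP l (hPar {a}) * y2 + plethP l (hPar s) * y1, ?_⟩
      rw [← Multiset.singleton_add, hPar_add, T1_mul, map_add, TT_plethP_mul q hu.pow_eq_one,
        TT_plethP_mul q hu.pow_eq_one, map_mul]
      have ee : e ({a} + s) = e {a} + e s := by rw [he]; simp only [eps_add]; ring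
      rw [ee]
      rw [smul_eq_C_mul] at *
      rw [map_add]
      linear_combination plethP l (hPar {a}) * hy2 + plethP l (hPar s) * hy1
  -- conclusion
  obtain ⟨g, y, hg, hy⟩ := hrel nu
  have hg0 : g ≠ 0 := by
    rintro rfl
    exact h2 _ (by rw [hg, map_zero])
  obtain ⟨x, hx⟩ := (Finsupp.mem_span_range_iff_exists_finsupp).1 (mem_span_hPar g)
  choose Y hY using hall'
  have key1 : ∀ x : Multiset ℕ+ →₀ K, T1 q u l (x.sum fun i a => a • hPar i) +
      TT q u (x.sum fun i a => a • Y i) = plethP l (x.sum fun i a => (a * e i) • hPar i) := by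
    intro x
    induction x using Finsupp.induction_linear with
    | zero =>
      have : T1 q u l 0 = 0 := by simp [T1]
      simp [this]
    | add f g hf hg =>
      rw [Finsupp.sum_add_index' (by simp) (by intros; rw [add_smul]),
        Finsupp.sum_add_index' (by simp) (by intros; rw [add_smul]),
        Finsupp.sum_add_index' (by simp) (by intros; rw [add_mul, add_smul]),
        map_add, map_add, ← hf, ← hg, T1_add]
      abel
    | single i a =>
      rw [Finsupp.sum_single_index (by simp), Finsupp.sum_single_index (by simp),
        Finsupp.sum_single_index (by simp), T1_smul, map_smul, map_smul, ← smul_add, hY, smul_smul]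
  have key2 := key1 x
  rw [hx] at key2
  have key3 : TT q u ((x.sum fun i a => a • Y i) - y) =
      plethP l ((x.sum fun i a => (a * e i) • hPar i) - e nu • g) := by
    rw [map_sub, map_sub, ← key2, map_smul, ← hy]; abel
  have key4 := im_TT l hu hE key3
  have key5 : x.sum (fun i a => (a * (e i - e nu)) • hPar (R := K) i) = 0 := by
    rw [← key4, ← hx, Finsupp.smul_sum, ← Finsupp.sum_sub]
    apply Finsupp.sum_congr
    intro i _
    rw [mul_sub, sub_smul, smul_smul, mul_comm (e nu)]
  have key6 : ∀ i ∈ x.support, x i * (e i - e nu) = 0 :=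
    linearIndependent_iff'.1 hPar_li x.support (fun i => x i * (e i - e nu)) key5
  have key7 : x = Finsupp.single nu (x nu) := by
    ext i
    by_cases hi : i = nu
    · subst hi; simp
    · rw [Finsupp.single_eq_of_ne hi]
      by_contra h0
      rcases mul_eq_zero.1 (key6 i (Finsupp.mem_support_iff.2 h0)) with h | h
      · exact h0 h
      · apply hi
        apply heps
        have hne : -(((l : ℕ) : K) * u⁻¹) ≠ 0 :=
          neg_ne_zero.2 (mul_ne_zero (by exact_mod_cast l.ne_zero) (inv_ne_zero hu0))
        exact mul_left_cancel₀ hne (sub_eq_zero.1 h)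
  rw [key7, Finsupp.sum_single_index (by simp)] at hx
  refine ⟨x nu, ?_, ?_⟩
  · intro h
    rw [h, zero_smul] at hx
    exact hg0 hx.symm
  · rw [hg, ← hx, map_smul]

end deform

end QP

end

noncomputable section

namespace QP

/-! ### Specialization -/

section special
variable {K : Type} [Field K]

theorem map_zw {A B : Type} [CommRing A] [CommRing B] (φ : A →+* B) (m : ℕ+ →₀ ℕ) :
    φ (zw (fun k : ℕ+ => ((k : ℕ) : A)) m) = zw (fun k : ℕ+ => ((k : ℕ) : B)) m := by
  simp [zw, Finsupp.prod, map_prod]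

theorem map_formB {A B : Type} [CommRing A] [CommRing B] (φ : A →+* B) (f g : SymFn A) :
    φ (formB (fun k : ℕ+ => ((k : ℕ) : A)) f g) =
      formB (fun k : ℕ+ => ((k : ℕ) : B)) (MvPolynomial.map φ f) (MvPolynomial.map φ g) := by
  induction f using MvPolynomial.induction_on' with
  | monomial m a =>
    rw [map_monomial, formB_monomial, formB_monomial, map_mul, map_mul, map_zw, coeff_map]
  | add p q hp hq => simp only [map_add, LinearMap.add_apply, hp, hq]

theorem map_schur {R R' : Type} [Field R] [CharZero R] [Field R'] [CharZero R'] (φ : R →+* R')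
    (lam : Multiset ℕ+) : MvPolynomial.map φ (schur lam) = schur lam := by
  rw [schur, schur, RingHom.map_det]
  congr 1
  ext1 i j
  simp only [RingHom.mapMatrix_apply, Matrix.map_apply, Matrix.of_apply, hInt]
  split_ifs
  · rw [map_hsym]
  · simp

/-- The substitution `X ↦ t⁻¹`. -/
def jj : Polynomial K →+* RatFunc K := Polynomial.eval₂RingHom RatFunc.C RatFunc.X⁻¹

theorem jj_C (a : K) : jj (Polynomial.C a) = RatFunc.C a := by simp [jj]

theorem jj_X : jj (Polynomial.X : Polynomial K) = RatFunc.X⁻¹ := by simp [jj]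

theorem eval₂_RX (p : Polynomial K) :
    Polynomial.eval₂ RatFunc.C RatFunc.X p = algebraMap (Polynomial K) (RatFunc K) p :=
  RatFunc.aeval_X_left_eq_algebraMap p

theorem jj_inj : Function.Injective (jj (K := K)) := by
  rw [injective_iff_map_eq_zero]
  intro p hp
  letI : Invertible (RatFunc.X⁻¹ : RatFunc K) :=
    invertibleOfNonzero (inv_ne_zero RatFunc.X_ne_zero)
  have h1 := (Polynomial.eval₂_reverse_eq_zero_iff (RatFunc.C : K →+* RatFunc K)
    (RatFunc.X⁻¹) p).2 hp
  rw [invOf_eq_inv, inv_inv, eval₂_RX] at h1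
  have h2 := (map_eq_zero_iff _ (RatFunc.algebraMap_injective K)).1 h1
  exact Polynomial.reverse_eq_zero.1 h2

theorem jj_reverse (p : Polynomial K) :
    algebraMap (Polynomial K) (RatFunc K) p * jj (Polynomial.X ^ p.natDegree) = jj p.reverse := by
  letI : Invertible (RatFunc.X : RatFunc K) := invertibleOfNonzero RatFunc.X_ne_zero
  have h1 := Polynomial.eval₂_reverse_mul_pow (RatFunc.C : K →+* RatFunc K) RatFunc.X p
  rw [eval₂_RX, invOf_eq_inv] at h1
  rw [← h1, map_pow, jj_X, mul_assoc, ← mul_pow, mul_inv_cancel₀ RatFunc.X_ne_zero, one_pow,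
    mul_one]
  rfl

theorem jj_frac (y : RatFunc K) : ∃ x s : Polynomial K, s ≠ 0 ∧ y * jj s = jj x := by
  refine ⟨y.num.reverse * Polynomial.X ^ y.denom.natDegree,
    y.denom.reverse * Polynomial.X ^ y.num.natDegree, ?_, ?_⟩
  · apply mul_ne_zero
    · rw [Ne, Polynomial.reverse_eq_zero]; exact y.denom_ne_zero
    · exact pow_ne_zero _ Polynomial.X_ne_zero
  · have h0 : algebraMap (Polynomial K) (RatFunc K) y.denom ≠ 0 := by
      rw [Ne, map_eq_zero_iff _ (RatFunc.algebraMap_injective K)]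
      exact y.denom_ne_zero
    have h : y * algebraMap (Polynomial K) (RatFunc K) y.denom =
        algebraMap (Polynomial K) (RatFunc K) y.num := by
      have h1 := RatFunc.num_div_denom y
      rw [div_eq_iff h0] at h1
      exact h1.symm
    rw [map_mul, map_mul, ← jj_reverse, ← jj_reverse, ← h]
    ring

theorem jj_clear (f : SymFn (RatFunc K)) : ∃ (a : Polynomial K) (g : SymFn (Polynomial K)),
    a ≠ 0 ∧ MvPolynomial.map jj g = jj a • f := by
  induction f using MvPolynomial.induction_on' with
  | monomial m y =>
    obtain ⟨x, s, hs, h⟩ := jj_frac y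
    refine ⟨s, monomial m x, hs, ?_⟩
    rw [map_monomial, ← h, smul_monomial, smul_eq_mul, mul_comm]
  | add p q hp hq =>
    obtain ⟨a, g, ha, hg⟩ := hp
    obtain ⟨b, g', hb, hg'⟩ := hq
    refine ⟨a * b, C b * g + C a * g', mul_ne_zero ha hb, ?_⟩
    rw [map_add, map_mul, map_mul, hg, hg', map_C, map_C, smul_eq_C_mul, smul_eq_C_mul,
      smul_eq_C_mul, map_mul, map_mul]
    ring

theorem primitive_part [CharZero K] (u : K) (n : ℕ) : ∀ (g : SymFn (Polynomial K)) (m : ℕ+ →₀ ℕ),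
    coeff m g ≠ 0 → (coeff m g).natDegree ≤ n →
    ∃ (b : Polynomial K) (g' : SymFn (Polynomial K)), b ≠ 0 ∧ g = C b * g' ∧ mev u g' ≠ 0 := by
  induction n with
  | zero =>
    intro g m hm hn
    refine ⟨1, g, one_ne_zero, by simp, ?_⟩
    intro h
    have h2 := congrArg (coeff m) h
    rw [mev, coeff_map, coeff_zero] at h2
    rw [Polynomial.eq_C_of_natDegree_le_zero hn] at h2 hm
    apply hm
    simp only [Polynomial.coe_evalRingHom, Polynomial.eval_C] at h2
    rw [h2, map_zero]
  | succ n ih =>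
    intro g m hm hn
    by_cases h : mev u g = 0
    · obtain ⟨y, rfl⟩ := mev_eq_zero h
      rw [coeff_C_mul] at hm hn
      have hm' := right_ne_zero_of_mul hm
      rw [Polynomial.natDegree_mul (Polynomial.X_sub_C_ne_zero u) hm',
        Polynomial.natDegree_X_sub_C] at hn
      obtain ⟨b, g', hb, rfl, hg'⟩ := ih y m hm' (by omega)
      refine ⟨(Polynomial.X - Polynomial.C u) * b, g',
        mul_ne_zero (Polynomial.X_sub_C_ne_zero u) hb, ?_, hg'⟩
      rw [map_mul, mul_assoc]
    · exact ⟨1, g, one_ne_zero, by simp, h⟩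

theorem exists_fam [CharZero K] (u : K) {f : SymFn (RatFunc K)} (hf : f ≠ 0) :
    ∃ (a : RatFunc K) (g : SymFn (Polynomial K)), a ≠ 0 ∧ MvPolynomial.map jj g = a • f ∧
      mev u g ≠ 0 := by
  obtain ⟨a, g, ha, hg⟩ := jj_clear f
  have hja : jj a ≠ 0 := by rwa [Ne, map_eq_zero_iff _ jj_inj]
  have hg0 : g ≠ 0 := by
    rintro rfl
    rw [map_zero] at hg
    exact smul_ne_zero hja hf hg.symm
  obtain ⟨m, hm⟩ := ne_zero_iff.1 hg0
  obtain ⟨b, g', hb, rfl, hg'⟩ := primitive_part u _ g m hm le_rfl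
  have hjb : jj b ≠ 0 := by rwa [Ne, map_eq_zero_iff _ jj_inj]
  refine ⟨(jj b)⁻¹ * jj a, g', mul_ne_zero (inv_ne_zero hjb) hja, ?_, hg'⟩
  rw [mul_smul, ← hg, map_mul, map_C, ← smul_eq_C_mul, inv_smul_smul₀ hjb]

/-- `y` is regular at `c` with value `v`. -/
def Good (c : K) (y : RatFunc K) (v : K) : Prop :=
  ∃ p s : Polynomial K, s.eval c ≠ 0 ∧
    y = algebraMap (Polynomial K) (RatFunc K) p / algebraMap (Polynomial K) (RatFunc K) s ∧
    v = p.eval c / s.eval c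

theorem aM_ne {c : K} {s : Polynomial K} (h : s.eval c ≠ 0) :
    algebraMap (Polynomial K) (RatFunc K) s ≠ 0 := by
  rw [Ne, map_eq_zero_iff _ (RatFunc.algebraMap_injective K)]
  rintro rfl
  simp at h

theorem Good.add {c : K} {y y' : RatFunc K} {v v' : K} (h : Good c y v) (h' : Good c y' v') :
    Good c (y + y') (v + v') := by
  obtain ⟨p, s, hs, rfl, rfl⟩ := h
  obtain ⟨p', s', hs', rfl, rfl⟩ := h'
  refine ⟨p * s' + s * p', s * s', by simp [hs, hs'], ?_, ?_⟩
  · rw [div_add_div _ _ (aM_ne hs) (aM_ne hs')]; simp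
  · rw [div_add_div _ _ hs hs']; simp

theorem Good.mul {c : K} {y y' : RatFunc K} {v v' : K} (h : Good c y v) (h' : Good c y' v') :
    Good c (y * y') (v * v') := by
  obtain ⟨p, s, hs, rfl, rfl⟩ := h
  obtain ⟨p', s', hs', rfl, rfl⟩ := h'
  refine ⟨p * p', s * s', by simp [hs, hs'], ?_, ?_⟩
  · rw [div_mul_div_comm]; simp
  · rw [div_mul_div_comm]; simp

theorem Good.inv {c : K} {y : RatFunc K} {v : K} (h : Good c y v) (hv : v ≠ 0) :
    Good c y⁻¹ v⁻¹ := by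
  obtain ⟨p, s, hs, rfl, rfl⟩ := h
  refine ⟨s, p, ?_, by rw [inv_div], by rw [inv_div]⟩
  intro h0
  rw [h0, zero_div] at hv
  exact hv rfl

theorem Good.const (c a : K) : Good c (RatFunc.C a) a :=
  ⟨Polynomial.C a, 1, by simp, by simp, by simp⟩

theorem Good.X (c : K) : Good c RatFunc.X c :=
  ⟨Polynomial.X, 1, by simp, by simp, by simp⟩

theorem Good.jj {c : K} (hc : c ≠ 0) (x : Polynomial K) : Good c (jj x) (x.eval c⁻¹) := by
  induction x using Polynomial.induction_on' with
  | add p q hp hq => rw [map_add, Polynomial.eval_add]; exact hp.add hq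
  | monomial n a =>
    induction n with
    | zero =>
      rw [Polynomial.monomial_zero_left, jj_C, Polynomial.eval_C]
      exact Good.const c a
    | succ n ih =>
      rw [← Polynomial.monomial_mul_X, map_mul, jj_X, Polynomial.eval_mul, Polynomial.eval_X]
      exact ih.mul ((Good.X c).inv hc)

theorem Good.eval {c : K} {y : RatFunc K} {v : K} (h : Good c y v) :
    RatFunc.eval (RingHom.id K) c y = v := by
  obtain ⟨p, s, hs, rfl, rfl⟩ := h
  set y := algebraMap (Polynomial K) (RatFunc K) p / algebraMap (Polynomial K) (RatFunc K) s
    with hy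
  have hd : y.denom ∣ s := RatFunc.denom_div_dvd p s
  have hd0 : y.denom.eval c ≠ 0 := by
    obtain ⟨r, hr⟩ := hd
    rw [hr, Polynomial.eval_mul] at hs
    exact left_ne_zero_of_mul hs
  have h1 := RatFunc.num_div_denom y
  have h2 : y.num * s = p * y.denom := by
    apply RatFunc.algebraMap_injective K
    rw [map_mul, map_mul]
    nth_rw 2 [hy] at h1
    exact (div_eq_div_iff (aM_ne hd0) (aM_ne hs)).1 h1
  have h3 := congrArg (Polynomial.eval c) h2
  rw [Polynomial.eval_mul, Polynomial.eval_mul] at h3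
  rw [RatFunc.eval, Polynomial.eval₂_id, Polynomial.eval₂_id, div_eq_div_iff hd0 hs, h3]

end special

theorem coeff_specT (c : KK) (f : SymFn FF) (m : ℕ+ →₀ ℕ) :
    coeff m (specT c f) = evalT c (coeff m f) := by
  classical
  rw [specT, coeff_sum]
  simp only [coeff_monomial]
  rw [Finset.sum_ite_eq']
  split_ifs with h
  · rfl
  · rw [notMem_support_iff.1 h, evalT, RatFunc.eval_zero]

theorem map_EE {A B : Type} [CommRing A] [CommRing B] (φ : A →+* B) (q u : A)
    (lam : Multiset ℕ+) : φ (EE q u lam) = EE (φ q) (φ u) lam := by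
  simp [EE, map_sum]

theorem X_pow_ne {K : Type} [Field K] (k : ℕ+) : 1 - (RatFunc.X : RatFunc K) ^ (k : ℕ) ≠ 0 := by
  have h : (1 : RatFunc K) - RatFunc.X ^ (k : ℕ) =
      algebraMap (Polynomial K) (RatFunc K) (1 - Polynomial.X ^ (k : ℕ)) := by simp
  rw [h, Ne, map_eq_zero_iff _ (RatFunc.algebraMap_injective K)]
  intro h0
  have := congrArg (Polynomial.eval 0) h0
  simp [k.ne_zero] at this

theorem final_thm (l : ℕ+) (zeta : ℂ) (hzeta : IsPrimitiveRoot zeta (l : ℕ))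
    (nu : Multiset ℕ+)
    (P : Multiset ℕ+ → SymFn FF) (hP : IsMacdonaldBasis qF tF P) :
    specT (RatFunc.C zeta) (Qprime qF tF P ((l : ℕ) • nu)) =
      ((-1 : KK) ^ (((l : ℕ) - 1) * wt nu)) • plethP l (hPar (R := KK) nu) := by
  have hq : ∀ k : ℕ+, 1 - qF ^ (k : ℕ) ≠ 0 := by
    intro k
    have : 1 - qF ^ (k : ℕ) = RatFunc.C (1 - qK ^ (k : ℕ)) := by
      rw [map_sub, map_one, map_pow, qF]
    rw [this, Ne, map_eq_zero]
    exact X_pow_ne k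
  have ht : ∀ k : ℕ+, 1 - tF ^ (k : ℕ) ≠ 0 := fun k => X_pow_ne k
  have ht0 : tF ≠ 0 := RatFunc.X_ne_zero
  have hz0 : zeta ≠ 0 := hzeta.ne_zero l.ne_zero
  set u : KK := RatFunc.C zeta⁻¹ with hu_def
  have hcz : (RatFunc.C zeta : KK) ≠ 0 := by rwa [Ne, map_eq_zero]
  have huz : u = (RatFunc.C zeta : KK)⁻¹ := by rw [hu_def, map_inv₀]
  have hu : IsPrimitiveRoot u (l : ℕ) := hzeta.inv.map_of_injective (RatFunc.C : ℂ →+* KK).injective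
  have hL := RR_lead hP hq ht
  have hne : ∀ lam, RR qF tF P lam ≠ 0 := fun lam => (hL lam).ne_zero
  choose a fam ha hfam hmev using fun lam => exists_fam u (hne lam)
  have hcoef : ∀ lam m, coeff m (RR qF tF P lam) = 0 → coeff m (fam lam) = 0 := by
    intro lam m h
    apply jj_inj
    rw [← coeff_map, hfam, coeff_smul, h, smul_zero, map_zero]
  have hformJ : ∀ lam mu, jj (formB (fun k : ℕ+ => ((k : ℕ) : Polynomial KK)) (fam lam)
      (mcc (schur mu))) = a lam * hall FF (RR qF tF P lam) (schur mu) := by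
    intro lam mu
    have e : (jj (K := KK)).comp Polynomial.C = RatFunc.C := by
      ext1 x; exact jj_C x
    rw [map_formB, hfam, mcc, map_map, e, map_schur, map_smul, LinearMap.smul_apply, smul_eq_mul,
      hall]
  have hformE : ∀ lam mu, Polynomial.eval u (formB (fun k : ℕ+ => ((k : ℕ) : Polynomial KK))
      (fam lam) (mcc (schur mu))) = hall KK (mev u (fam lam)) (schur mu) := by
    intro lam mu
    have h := map_formB (Polynomial.evalRingHom u) (fam lam) (mcc (schur mu))
    have h2 : MvPolynomial.map (Polynomial.evalRingHom u) (mcc (schur mu)) = schur mu :=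
      mev_mcc u (schur mu)
    rw [h2] at h
    exact h
  obtain ⟨c, hc, hmain⟩ := main_abs (q := qK) (u := u) (l := l) hu
    (EE_zero l.pos hzeta.inv) (fun _ _ h => eps_inj h) fam
    (by
      intro lam
      apply MvPolynomial.map_injective _ jj_inj
      have h1 := RR_eigen hP hq ht ht0 lam
      have h2 := map_DD (jj (K := KK)) Polynomial.X (GA qK) (fam lam)
      have h3 : (fun n => MvPolynomial.map (jj (K := KK)) (GA qK n)) = Gq qF := by
        funext n
        have e : (jj (K := KK)).comp Polynomial.C = RatFunc.C := by
          ext1 x; exact jj_C x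
        rw [GA, map_map, e, map_Gq, qF]
      have h4 : jj (Polynomial.X : Polynomial KK) = tF⁻¹ := jj_X
      rw [h3, h4, hfam] at h2
      rw [TT_apply] at h1
      have h5 : MvPolynomial.map (jj (K := KK))
          (EE (Polynomial.C qK) Polynomial.X lam • fam lam) =
          EE qF tF⁻¹ lam • (a lam • RR qF tF P lam) := by
        rw [smul_eq_C_mul, map_mul, map_C, hfam, map_EE, jj_C, h4, ← smul_eq_C_mul, qF]
      rw [h5, TA, LinearMap.sub_apply, map_sub, LinearMap.id_apply, h2, hfam, map_smul,
        ← smul_sub, h1, smul_comm])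
    hmev
    (by
      intro lam m hm
      apply hom_RR hP lam
      intro h
      apply hm
      rw [mev, coeff_map, hcoef lam m h, map_zero])
    (by
      intro lam mu hlt
      rw [← hformE]
      have : formB (fun k : ℕ+ => ((k : ℕ) : Polynomial KK)) (fam lam) (mcc (schur mu)) = 0 := by
        apply jj_inj
        rw [hformJ, map_zero, hall_Vgt_schur le_rfl ((hL lam).mem hlt), mul_zero]
      rw [this, Polynomial.eval_zero])
    nu
  set lam := (l : ℕ) • nu with hlam
  set b := formB (fun k : ℕ+ => ((k : ℕ) : Polynomial KK)) (fam lam) (mcc (schur lam)) with hb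
  have hjb : jj b = a lam * innerQT qF tF (P lam) (P lam) := by rw [hb, hformJ, (hL lam).hall]
  have hlead : Lead (hPar (R := KK) nu) nu 1 := by
    refine ⟨one_ne_zero, ?_⟩
    rw [one_smul, sub_self]
    exact Submodule.zero_mem _
  set sg : KK := (-1 : KK) ^ (((l : ℕ) - 1) * wt nu) with hsg
  have heb : Polynomial.eval u b = c * sg := by
    have h1 := (hlead.plethP l hu).hall
    rw [hb, hformE, hmain, map_smul, LinearMap.smul_apply, h1, one_mul, smul_eq_mul]
  have hsg2 : sg * sg = 1 := by rw [hsg, ← mul_pow]; simp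
  have hsg0 : sg ≠ 0 := left_ne_zero_of_mul_eq_one hsg2
  have hQ : Qprime qF tF P lam = (jj b)⁻¹ • MvPolynomial.map jj (fam lam) := by
    rw [hfam, hjb, smul_smul, mul_inv, mul_right_comm, inv_mul_cancel₀ (ha lam), one_mul, Qprime,
      Qfam, map_smul, RR]
  ext m
  have g1 := Good.jj hcz b
  rw [← huz, heb] at g1
  have g2 := Good.jj hcz (coeff m (fam lam))
  rw [← huz] at g2
  have g3 := (g1.inv (mul_ne_zero hc hsg0)).mul g2
  rw [coeff_specT, hQ, coeff_smul, smul_eq_mul, coeff_map, evalT, g3.eval]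
  have h5 := congrArg (coeff m) hmain
  rw [mev, coeff_map, Polynomial.coe_evalRingHom, coeff_smul, smul_eq_mul] at h5
  rw [h5, coeff_smul, smul_eq_mul]
  have : sg⁻¹ = sg := inv_eq_of_mul_eq_one_left hsg2
  rw [mul_inv, this]
  field_simp

end QP

end


noncomputable section

open MvPolynomial

/-- **Specialization of `Q'` for partitions of the form `ν^l`** (Corollary 5.3 of the
paper).  Let `ν` be a partition, `l > 0` and `ζ` a primitive `l`-th root of unity.  Then
`Q'_{ν^l}(x; q, ζ) = (-1)^{(l-1)|ν|} (p_l ∘ h_ν)(x)`, where `ν^l` repeats each part of `ν`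
exactly `l` times. -/
theorem Qprime_repeated_partition_root_of_unity
    (l : ℕ) (hl : 0 < l) (zeta : ℂ) (hzeta : IsPrimitiveRoot zeta l)
    (nu : Multiset ℕ+)
    (P : Multiset ℕ+ → SymFn FF) (hP : IsMacdonaldBasis qF tF P) :
    specT (RatFunc.C zeta) (Qprime qF tF P (l • nu)) =
      ((-1 : KK) ^ ((l - 1) * wt nu)) • plethP (⟨l, hl⟩ : ℕ+) (hPar (R := KK) nu) := by
  exact QP.final_thm (⟨l, hl⟩ : ℕ+) zeta hzeta nu P hP
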